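/- Let F be a function on half-integral positive definite symmetric 2×2 matrices satisfying a(AᵀTA) = a(T) for all A ∈ Γ⁰(N) := {[[a, Nc], [b, d]] ∈ SL₂(ℤ)}, and let ε ∈ {±1} with a([[n, r/2], [r/2, m]]) = ε·a([[m/N, -r/2], [-r/2, nN]]) whenever N ∣ m. If S = [[n, r/2], [r/2, Nm]] is primitive with a(S) ≠ 0, then there exists an odd prime p ∤ N and a half-integral positive definite matrix T with bottom-right entry Np and a(T) ≠ 0. -/

import Mathlib

open Matrix

/-- A 2×2 rational matrix is half-integral symmetric:
`T = [[n, r/2], [r/2, m]]` with `n, r, m ∈ ℤ`. -/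
def HalfIntegral (T : Matrix (Fin 2) (Fin 2) ℚ) : Prop :=
  T 1 0 = T 0 1 ∧ (∃ n : ℤ, T 0 0 = n) ∧ (∃ m : ℤ, T 1 1 = m) ∧ (∃ r : ℤ, 2 * T 0 1 = r)

/-- Positive definiteness for a symmetric 2×2 matrix. -/
def PosDef2 (T : Matrix (Fin 2) (Fin 2) ℚ) : Prop :=
  0 < T 0 0 ∧ 0 < T.det

section
open Filter Topology Complex Asymptotics

theorem LSeries_exists_differentiableOn_of_sum_isBigO {f : ℕ → ℂ} {r b : ℝ} (hr : 0 ≤ r)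
    (hrb : r ≤ b) (hS : ∀ s : ℂ, b < s.re → LSeriesSummable f s)
    (hO : (fun n ↦ ∑ k ∈ Finset.Icc 1 n, f k) =O[atTop] fun n : ℕ ↦ (n : ℝ) ^ r) :
    ∃ g : ℂ → ℂ, DifferentiableOn ℂ g {s | r < s.re} ∧ ∀ s : ℂ, b < s.re → g s = LSeries f s := by
  let F : ℝ → ℂ := (Set.Ioi (1 : ℝ)).indicator fun t ↦ ∑ k ∈ Finset.Icc 1 ⌊t⌋₊, f k
  have hFm : MeasureTheory.LocallyIntegrableOn F (Set.Ioi 0) := by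
    have h1 := locallyIntegrableOn_mul_sum_Icc f (m := 1) (a := 0) le_rfl
      (g := (Set.Ioi (1 : ℝ)).indicator fun _ ↦ (1 : ℂ))
      (((MeasureTheory.locallyIntegrable_const 1).indicator
        measurableSet_Ioi).locallyIntegrableOn _)
    have h2 : F = fun t ↦ (Set.Ioi (1 : ℝ)).indicator (fun _ ↦ (1 : ℂ)) t *
        ∑ k ∈ Finset.Icc 1 ⌊t⌋₊, f k := by
      ext t
      by_cases ht : t ∈ Set.Ioi (1 : ℝ) <;> simp [F, Set.indicator, ht]
    rw [h2]
    exact h1.mono_set Set.Ioi_subset_Ici_self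
  have hFtop : F =O[atTop] fun t : ℝ ↦ t ^ (-(-r)) := by
    rw [neg_neg]
    refine IsBigO.congr' ((hO.comp_tendsto tendsto_nat_floor_atTop).trans <|
        isEquivalent_nat_floor.isBigO.rpow hr (eventually_ge_atTop 0)) ?_ EventuallyEq.rfl
    filter_upwards [eventually_gt_atTop 1] with t ht
    simp [F, ht]
  refine ⟨fun s ↦ s * mellin F (-s), ?_, ?_⟩
  · intro s hs
    have hs' : r < s.re := hs
    have h0 : F =O[𝓝[>] 0] fun t : ℝ ↦ t ^ (-(-s.re - 1)) := by
      refine IsBigO.congr' (isBigO_zero _ _) ?_ EventuallyEq.rfl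
      filter_upwards [mem_nhdsWithin_of_mem_nhds (Iio_mem_nhds one_pos)] with t ht
      have ht' : t ≤ 1 := le_of_lt (Set.mem_Iio.1 ht)
      simp [F, ht']
    have := mellin_differentiableAt_of_isBigO_rpow (s := -s) hFm hFtop (by simpa using hs') h0
      (by simp)
    have h2 : DifferentiableAt ℂ (fun s ↦ mellin F (-s)) s := this.comp s differentiableAt_id.neg
    exact (differentiableAt_id.mul h2).differentiableWithinAt
  · intro s hs
    rw [LSeries_eq_mul_integral f hr (hrb.trans_lt hs) (hS s hs) hO]
    simp only [mellin]
    congr 1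
    have : ∀ t : ℝ, (t : ℂ) ^ (-s - 1) • F t = (Set.Ioi (1 : ℝ)).indicator
        (fun t : ℝ ↦ (∑ k ∈ Finset.Icc 1 ⌊t⌋₊, f k) * (t : ℂ) ^ (-(s + 1))) t := by
      intro t
      by_cases ht : t ∈ Set.Ioi (1 : ℝ)
      · simp only [F, Set.indicator_of_mem ht, smul_eq_mul]; rw [mul_comm]; ring_nf
      · simp [F, Set.indicator_of_notMem ht]
    simp_rw [this]
    rw [MeasureTheory.setIntegral_indicator measurableSet_Ioi]
    congr 2
    ext t; simp

theorem AnalyticAt.exists_tendsto_sub_mul_logDeriv {g : ℂ → ℂ} {z : ℂ} (hg : AnalyticAt ℂ g z)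
    (h0 : ¬ ∀ᶠ s in 𝓝 z, g s = 0) :
    ∃ k : ℕ, Tendsto (fun s ↦ (s - z) * (deriv g s / g s)) (𝓝[≠] z) (𝓝 k) := by
  obtain ⟨k, u, hu, hu0, heq⟩ := (hg.exists_eventuallyEq_pow_smul_nonzero_iff).2 h0
  refine ⟨k, ?_⟩
  have hlim : Tendsto (fun s ↦ (k : ℂ) + (s - z) * (deriv u s / u s)) (𝓝[≠] z) (𝓝 k) := by
    have hc : ContinuousAt (fun s ↦ (k : ℂ) + (s - z) * (deriv u s / u s)) z :=
      continuousAt_const.add ((continuousAt_id.sub continuousAt_const).mul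
        (hu.deriv.continuousAt.div hu.continuousAt hu0))
    have := hc.tendsto
    simp only [sub_self, zero_mul, add_zero] at this
    exact this.mono_left nhdsWithin_le_nhds
  refine hlim.congr' ?_
  have e1 : ∀ᶠ s in 𝓝 z, deriv g s = deriv (fun s ↦ (s - z) ^ k • u s) s := by
    filter_upwards [heq.eventually_nhds] with s hs using Filter.EventuallyEq.deriv_eq hs
  have e2 : ∀ᶠ s in 𝓝 z, AnalyticAt ℂ u s := hu.eventually_analyticAt
  have e3 : ∀ᶠ s in 𝓝 z, u s ≠ 0 := hu.continuousAt.eventually_ne hu0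
  filter_upwards [mem_nhdsWithin_of_mem_nhds (e1.and (e2.and (e3.and heq))),
    self_mem_nhdsWithin] with s ⟨h1, h2, h3, h4⟩ hsz
  have hsz' : s - z ≠ 0 := sub_ne_zero.2 hsz
  rw [h1, h4]
  simp only [smul_eq_mul]
  have hd : HasDerivAt (fun s ↦ (s - z) ^ k * u s)
      ((k : ℂ) * (s - z) ^ (k - 1) * 1 * u s + (s - z) ^ k * deriv u s) s :=
    (((hasDerivAt_id s).sub_const z).pow k).mul h2.differentiableAt.hasDerivAt
  rw [hd.deriv]
  rcases k with _ | k
  · simp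
  · simp only [Nat.add_sub_cancel]
    field_simp
    ring

end

section
open Filter Topology Complex Asymptotics

theorem tendsto_ofReal_nhdsGT_one :
    Tendsto (fun x : ℝ ↦ (x : ℂ)) (𝓝[>] 1) (𝓝[≠] 1) := by
  refine tendsto_nhdsWithin_iff.2 ⟨?_, ?_⟩
  · have : Tendsto (fun x : ℝ ↦ (x : ℂ)) (𝓝 1) (𝓝 ((1 : ℝ) : ℂ)) := continuous_ofReal.tendsto 1
    exact (by simpa using this : Tendsto (fun x : ℝ ↦ (x : ℂ)) (𝓝 1) (𝓝 1)).mono_left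
      nhdsWithin_le_nhds
  · filter_upwards [self_mem_nhdsWithin] with x hx
    have : (1 : ℝ) < x := hx
    simp only [Set.mem_compl_iff, Set.mem_singleton_iff]
    exact_mod_cast this.ne'

theorem abscissaOfAbsConv_le_one_of_LSeriesSummable {f : ℕ → ℂ}
    (hf : ∀ s : ℂ, 1 < s.re → LSeriesSummable f s) : LSeries.abscissaOfAbsConv f ≤ 1 :=
  LSeries.abscissaOfAbsConv_le_of_forall_lt_LSeriesSummable
    (x := 1) fun y hy ↦ hf y (by simpa using hy)

theorem deriv_LSeries_eq_neg_mul {f b : ℕ → ℂ}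
    (hf : ∀ s : ℂ, 1 < s.re → LSeriesSummable f s) (hb : ∀ s : ℂ, 1 < s.re → LSeriesSummable b s)
    (hconv : LSeries.logMul f = LSeries.convolution f b) {s : ℂ} (hs : 1 < s.re) :
    deriv (LSeries f) s = -(LSeries f s * LSeries b s) := by
  rw [LSeries_deriv ((abscissaOfAbsConv_le_one_of_LSeriesSummable hf).trans_lt
      (by exact_mod_cast hs)), hconv,
    LSeries_convolution' (hf s hs) (hb s hs)]

theorem tendsto_sub_mul_LSeries_of_differentiableOn {f b : ℕ → ℂ} (h1 : f 1 ≠ 0)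
    (hf : ∀ s : ℂ, 1 < s.re → LSeriesSummable f s) (hb : ∀ s : ℂ, 1 < s.re → LSeriesSummable b s)
    (hconv : LSeries.logMul f = LSeries.convolution f b) {g : ℂ → ℂ} {r : ℝ} (hr : r < 1)
    (hg : DifferentiableOn ℂ g {s | r < s.re})
    (hgf : ∀ s : ℂ, 1 < s.re → g s = LSeries f s) :
    ∃ k : ℕ, Tendsto (fun x : ℝ ↦ ((x : ℂ) - 1) * LSeries b x) (𝓝[>] 1) (𝓝 (-k)) := by
  have hopen : IsOpen {s : ℂ | r < s.re} := isOpen_lt continuous_const continuous_re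
  have hopen1 : IsOpen {s : ℂ | 1 < s.re} := isOpen_lt continuous_const continuous_re
  have hana : AnalyticOnNhd ℂ g {s | r < s.re} := hg.analyticOnNhd hopen
  have h1mem : (1 : ℂ) ∈ {s : ℂ | r < s.re} := by simpa using hr
  have hne : ¬ ∀ᶠ s in 𝓝 (1 : ℂ), g s = 0 := by
    intro h
    have hpre : IsPreconnected {s : ℂ | r < s.re} := (convex_halfSpace_re_gt r).isPreconnected
    have h0 := hana.eqOn_zero_of_preconnected_of_eventuallyEq_zero hpre h1mem h
    have h3 : (fun x : ℝ ↦ LSeries f x) =ᶠ[atTop] 0 := by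
      filter_upwards [eventually_gt_atTop 1] with x hx
      rw [← hgf x (by simpa using hx)]
      exact h0 (show r < (x : ℂ).re by simpa using hr.trans hx)
    rcases LSeries_eventually_eq_zero_iff'.1 h3 with h | h
    · exact h1 (h 1 one_ne_zero)
    · have := abscissaOfAbsConv_le_one_of_LSeriesSummable hf
      rw [h] at this
      exact absurd this (by simp [← EReal.coe_one, EReal.coe_ne_top])
  obtain ⟨k, hk⟩ := (hana 1 h1mem).exists_tendsto_sub_mul_logDeriv hne
  refine ⟨k, ?_⟩
  refine ((hk.comp tendsto_ofReal_nhdsGT_one).neg).congr' ?_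
  have hev : ∀ᶠ s in 𝓝[≠] (1 : ℂ), g s ≠ 0 :=
    ((hana 1 h1mem).eventually_eq_zero_or_eventually_ne_zero).resolve_left hne
  filter_upwards [tendsto_ofReal_nhdsGT_one.eventually hev, self_mem_nhdsWithin] with x hx hx1
  have hx1' : 1 < (x : ℂ).re := by simpa using hx1
  have hd : deriv g x = deriv (LSeries f) x :=
    Filter.EventuallyEq.deriv_eq <| by
      filter_upwards [hopen1.mem_nhds hx1'] with s hs using hgf s hs
  simp only [Function.comp_apply]
  rw [hd, deriv_LSeries_eq_neg_mul hf hb hconv hx1', hgf x hx1']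
  rw [hgf x hx1'] at hx
  field_simp

theorem tendsto_sub_mul_LSeries_of_pole {f b : ℕ → ℂ}
    (hf : ∀ s : ℂ, 1 < s.re → LSeriesSummable f s) (hb : ∀ s : ℂ, 1 < s.re → LSeriesSummable b s)
    (hconv : LSeries.logMul f = LSeries.convolution f b) {r : ℝ} (hr0 : 0 ≤ r) (hr : r < 1) {c : ℂ}
        (hc : c ≠ 0)
    (hO : (fun n ↦ ∑ k ∈ Finset.Icc 1 n, (f k - c)) =O[atTop] fun n : ℕ ↦ (n : ℝ) ^ r) :
    Tendsto (fun x : ℝ ↦ ((x : ℂ) - 1) * LSeries b x) (𝓝[>] 1) (𝓝 1) := by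
  have hopen : IsOpen {s : ℂ | r < s.re} := isOpen_lt continuous_const continuous_re
  have hopen1 : IsOpen {s : ℂ | 1 < s.re} := isOpen_lt continuous_const continuous_re
  have h1mem : (1 : ℂ) ∈ {s : ℂ | r < s.re} := by simpa using hr
  have hone : ∀ s : ℂ, 1 < s.re → LSeriesSummable (fun _ ↦ c) s := fun s hs ↦ by
    have := (LSeriesSummable_one_iff.2 hs).smul c
    convert this using 1
    ext; simp
  obtain ⟨g, hg, hgf⟩ := LSeries_exists_differentiableOn_of_sum_isBigO (f := fun k ↦ f k - c)
    hr0 hr.le (fun s hs ↦ (hf s hs).sub (hone s hs)) hO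
  -- `h` continues `(s - 1) * LSeries f s`
  obtain ⟨z, hz, hzeq⟩ : ∃ z : ℂ → ℂ, Differentiable ℂ z ∧
      (∀ s, s ≠ 1 → z s = (s - 1) * riemannZeta s) ∧ z 1 = 1 := by
    refine ⟨Function.update (fun s ↦ (s - 1) * riemannZeta s) 1 1, ?_, ?_, ?_⟩
    · rw [← differentiableOn_univ,
        ← differentiableOn_compl_singleton_and_continuousAt_iff (c := 1) univ_mem]
      constructor
      · intro s hs
        have hs1 : s ≠ 1 := hs.2
        have : DifferentiableAt ℂ (fun s ↦ (s - 1) * riemannZeta s) s :=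
          (differentiableAt_id.sub_const 1).mul (differentiableAt_riemannZeta hs1)
        refine (this.congr_of_eventuallyEq ?_).differentiableWithinAt
        filter_upwards [isOpen_ne.mem_nhds hs1] with w hw
        rw [Function.update_of_ne hw]
      · exact continuousAt_update_same.2 riemannZeta_residue_one
    · intro s hs; rw [Function.update_of_ne hs]
    · simp
  set h : ℂ → ℂ := fun s ↦ (s - 1) * g s + c * z s with hh
  have hhd : DifferentiableOn ℂ h {s | r < s.re} := fun s hs ↦
    (((differentiableWithinAt_id.sub_const 1).mul (hg s hs)).add
      ((hz s).differentiableWithinAt.const_mul c))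
  have hana := hhd.analyticOnNhd hopen 1 h1mem
  have hh1 : h 1 = c := by simp [hh, hzeq.2]
  have hhf : ∀ s : ℂ, 1 < s.re → h s = (s - 1) * LSeries f s := by
    intro s hs
    have hs1 : s ≠ 1 := by rintro rfl; simp at hs
    have e1 : LSeries (fun k ↦ f k - c) s = LSeries f s - c * riemannZeta s := by
      have e2 := LSeries_sub (hf s hs) (hone s hs)
      have e3 : LSeries (fun _ ↦ c) s = c * riemannZeta s := by
        rw [← LSeries_one_eq_riemannZeta hs, ← LSeries_smul]
        congr 1; ext; simp
      rw [← e3, ← e2]; rfl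
    rw [hh]; simp only
    rw [hgf s hs, hzeq.1 s hs1, e1]; ring
  have hlim : Tendsto (fun s ↦ 1 - (s - 1) * (deriv h s / h s)) (𝓝[≠] (1 : ℂ)) (𝓝 1) := by
    have hcont : ContinuousAt (fun s ↦ 1 - (s - 1) * (deriv h s / h s)) 1 :=
      continuousAt_const.sub ((continuousAt_id.sub continuousAt_const).mul
        (hana.deriv.continuousAt.div hana.continuousAt (by rwa [hh1])))
    have := hcont.tendsto
    simp only [sub_self, zero_mul, sub_zero] at this
    exact this.mono_left nhdsWithin_le_nhds
  refine (hlim.comp tendsto_ofReal_nhdsGT_one).congr' ?_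
  have hev : ∀ᶠ s in 𝓝[≠] (1 : ℂ), h s ≠ 0 :=
    mem_nhdsWithin_of_mem_nhds (hana.continuousAt.eventually_ne (by rwa [hh1]))
  filter_upwards [tendsto_ofReal_nhdsGT_one.eventually hev, self_mem_nhdsWithin] with x hx hx1
  have hx1' : 1 < (x : ℂ).re := by simpa using hx1
  have hd : deriv h x = deriv (fun s ↦ (s - 1) * LSeries f s) x :=
    Filter.EventuallyEq.deriv_eq <| by
      filter_upwards [hopen1.mem_nhds hx1'] with s hs using hhf s hs
  have hdf : DifferentiableAt ℂ (LSeries f) x := (LSeries_hasDerivAt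
    ((abscissaOfAbsConv_le_one_of_LSeriesSummable hf).trans_lt
      (by exact_mod_cast hx1'))).differentiableAt
  have hd2 : deriv (fun s ↦ (s - 1) * LSeries f s) x =
      1 * LSeries f x + ((x : ℂ) - 1) * deriv (LSeries f) x :=
    (((hasDerivAt_id (x : ℂ)).sub_const 1).mul hdf.hasDerivAt).deriv
  simp only [Function.comp_apply]
  rw [hd, hd2, deriv_LSeries_eq_neg_mul hf hb hconv hx1', hhf x hx1']
  rw [hhf x hx1'] at hx
  have h2 := left_ne_zero_of_mul hx
  have h3 := right_ne_zero_of_mul hx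
  field_simp
  ring

end

section
open Filter Topology Complex Asymptotics
open scoped ArithmeticFunction.vonMangoldt

theorem LSeries_ofReal_eq_tsum (f : ℕ → ℝ) {x : ℝ} (hx : 0 < x) :
    LSeries (fun n ↦ (f n : ℂ)) x = ((∑' n : ℕ, f n / (n : ℝ) ^ x : ℝ) : ℂ) := by
  rw [LSeries, ofReal_tsum]
  refine tsum_congr fun n ↦ ?_
  rcases eq_or_ne n 0 with rfl | hn
  · simp [Real.zero_rpow hx.ne']
  · rw [LSeries.term_of_ne_zero hn, ofReal_div, ofReal_cpow (Nat.cast_nonneg n)]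
    simp

theorem LSeriesSummable_of_le_vonMangoldt {f : ℕ → ℂ} {C : ℝ} (hf : ∀ n, ‖f n‖ ≤ C * Λ n) {s : ℂ}
    (hs : 1 < s.re) : LSeriesSummable f s := by
  have h := (ArithmeticFunction.LSeriesSummable_vonMangoldt hs).norm.mul_left C
  refine Summable.of_norm_bounded h fun n ↦ ?_
  rcases eq_or_ne n 0 with rfl | hn
  · simp
  · rw [LSeries.norm_term_eq, LSeries.norm_term_eq, if_neg hn, if_neg hn]
    rw [Complex.norm_real, Real.norm_of_nonneg ArithmeticFunction.vonMangoldt_nonneg,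
        ← mul_div_assoc]
    gcongr
    exact hf n

theorem summable_div_rpow_of_le_vonMangoldt {f : ℕ → ℝ} {C : ℝ} (hf : ∀ n, |f n| ≤ C * Λ n) {x : ℝ}
    (hx : 1 < x) : Summable fun n : ℕ ↦ f n / (n : ℝ) ^ x := by
  have h := LSeriesSummable_of_le_vonMangoldt (f := fun n ↦ (f n : ℂ)) (C := C)
    (fun n ↦ by simpa using hf n) (s := x) (by simpa using hx)
  refine Complex.summable_ofReal.1 (h.congr fun n ↦ ?_)
  rcases eq_or_ne n 0 with rfl | hn
  · simp [Real.zero_rpow (zero_lt_one.trans hx).ne']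
  · rw [LSeries.term_of_ne_zero hn, ofReal_div, ofReal_cpow (Nat.cast_nonneg n)]
    simp

theorem summable_vonMangoldt_non_primes_div :
    Summable fun n : ℕ ↦ (if n.Prime then 0 else Λ n) / n := by
  have h := ArithmeticFunction.vonMangoldt.summable_residueClass_non_primes_div (q := 1) 0
  refine h.congr fun n ↦ ?_
  have : (n : ZMod 1) = 0 := Subsingleton.elim _ _
  simp [ArithmeticFunction.vonMangoldt.residueClass, this]

/-- A nonnegative function that is dominated by the von Mangoldt function and vanishes at all large
primes has a Dirichlet series without singularity at `1`. -/
theorem tendsto_sub_mul_tsum_of_eq_zero_of_prime {f : ℕ → ℝ} {C : ℝ} (hf0 : ∀ n, 0 ≤ f n)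
    (hf : ∀ n, f n ≤ C * Λ n) {X : ℕ} (hX : ∀ p : ℕ, p.Prime → X < p → f p = 0) :
    Tendsto (fun x : ℝ ↦ (x - 1) * ∑' n : ℕ, f n / (n : ℝ) ^ x) (𝓝[>] 1) (𝓝 0) := by
  have hsum : Summable fun n : ℕ ↦ f n / n := by
    have h1 := summable_vonMangoldt_non_primes_div.mul_left C
    have h2 : Summable fun n : ℕ ↦ if n ≤ X then f n / n else 0 :=
      summable_of_hasFiniteSupport <| (Set.finite_Iic X).subset fun n hn ↦ by
        by_contra h
        exact hn (if_neg h)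
    refine Summable.of_nonneg_of_le (fun n ↦ div_nonneg (hf0 n) n.cast_nonneg) (fun n ↦ ?_)
      (h1.add h2)
    have hC : 0 ≤ C * Λ n := (hf0 n).trans (hf n)
    have h0 : 0 ≤ f n / n := div_nonneg (hf0 n) n.cast_nonneg
    by_cases hp : n.Prime
    · by_cases hn : n ≤ X
      · simp [hp, hn]
      · simp [hp, hn, hX n hp (not_le.1 hn)]
    · have h3 : f n / n ≤ C * (Λ n / n) := by
        rw [← mul_div_assoc]
        gcongr
        exact hf n
      by_cases hn : n ≤ X
      · simp only [hp, hn, if_true, if_false]; linarith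
      · simpa [hp, hn] using h3
  have hlin : Tendsto (fun x : ℝ ↦ (x - 1) * ∑' n : ℕ, f n / n) (𝓝[>] 1) (𝓝 0) := by
    have : ContinuousAt (fun x : ℝ ↦ (x - 1) * ∑' n : ℕ, f n / n) 1 := by fun_prop
    have := this.tendsto
    simp only [sub_self, zero_mul] at this
    exact this.mono_left nhdsWithin_le_nhds
  refine squeeze_zero' ?_ ?_ hlin
  · filter_upwards [self_mem_nhdsWithin] with x hx
    exact mul_nonneg (sub_nonneg.2 (le_of_lt hx)) (tsum_nonneg fun n ↦
      div_nonneg (hf0 n) (by positivity))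
  · filter_upwards [self_mem_nhdsWithin] with x hx
    have hx1 : 1 < x := hx
    refine mul_le_mul_of_nonneg_left ?_ (sub_nonneg.2 hx1.le)
    refine Summable.tsum_le_tsum (fun n ↦ ?_) (summable_div_rpow_of_le_vonMangoldt (C := C)
        (fun n ↦ ?_) hx1) hsum
    · rcases eq_or_ne n 0 with rfl | hn
      · simp [Real.zero_rpow (zero_lt_one.trans hx1).ne']
      · have : (1 : ℝ) ≤ n := by exact_mod_cast Nat.one_le_iff_ne_zero.2 hn
        refine div_le_div_of_nonneg_left (hf0 n) (by positivity) ?_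
        simpa using Real.rpow_le_rpow_of_exponent_le this hx1.le
    · rw [abs_of_nonneg (hf0 n)]; exact hf n

/-- A nonnegative function that is dominated by the von Mangoldt function and is at least `log p`
at primes `p` in the residue class of `1` has a Dirichlet series with a singularity at `1`. -/
theorem not_tendsto_sub_mul_tsum_of_log_le {f : ℕ → ℝ} {C : ℝ} (hf0 : ∀ n, 0 ≤ f n)
    (hf : ∀ n, f n ≤ C * Λ n) {Q : ℕ} [NeZero Q]
    (hQ : ∀ p : ℕ, p.Prime → (p : ZMod Q) = 1 → Real.log p ≤ f p) :
    ¬ Tendsto (fun x : ℝ ↦ (x - 1) * ∑' n : ℕ, f n / (n : ℝ) ^ x) (𝓝[>] 1) (𝓝 0) := by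
  intro hlim
  obtain ⟨C', hC'⟩ := ArithmeticFunction.vonMangoldt.LSeries_residueClass_lower_bound
    (q := Q) (a := 1) isUnit_one
  set R := ArithmeticFunction.vonMangoldt.residueClass (1 : ZMod Q) with hR
  have hRle : ∀ n, R n ≤ Λ n := ArithmeticFunction.vonMangoldt.residueClass_le _
  have hR0 : ∀ n, 0 ≤ R n := ArithmeticFunction.vonMangoldt.residueClass_nonneg _
  set u : ℕ → ℝ := fun n ↦ if n.Prime then 0 else R n with hu
  have hu0 : ∀ n, 0 ≤ u n := fun n ↦ by simp only [hu]; split_ifs; exacts [le_rfl, hR0 n]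
  have hu1 : ∀ n, u n ≤ 1 * Λ n := fun n ↦ by
    simp only [hu]; split_ifs
    · simp [ArithmeticFunction.vonMangoldt_nonneg]
    · simpa using hRle n
  have hu2 := tendsto_sub_mul_tsum_of_eq_zero_of_prime hu0 hu1 (X := 0)
    (fun p hp _ ↦ by simp [hu, hp])
  have hlin : Tendsto (fun x : ℝ ↦ (x - 1) * C') (𝓝[>] 1) (𝓝 0) := by
    have : ContinuousAt (fun x : ℝ ↦ (x - 1) * C') 1 := by fun_prop
    have := this.tendsto
    simp only [sub_self, zero_mul] at this
    exact this.mono_left nhdsWithin_le_nhds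
  have htot := (hlim.add hu2).add hlin
  have hq : 0 < (Q.totient : ℝ)⁻¹ := inv_pos.mpr (mod_cast Q.totient.pos_of_neZero)
  have hle : (Q.totient : ℝ)⁻¹ ≤ 0 + 0 + 0 := by
    refine ge_of_tendsto htot ?_
    filter_upwards [Ioc_mem_nhdsGT (show (1 : ℝ) < 2 by norm_num)] with x hx
    have hx1 : 1 < x := hx.1
    have h1 := hC' hx
    have h2 : ∑' n : ℕ, R n / (n : ℝ) ^ x ≤
        ∑' n : ℕ, f n / (n : ℝ) ^ x + ∑' n : ℕ, u n / (n : ℝ) ^ x := by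
      have s1 := summable_div_rpow_of_le_vonMangoldt (f := f) (C := C)
        (fun n ↦ by rw [abs_of_nonneg (hf0 n)]; exact hf n) hx1
      have s2 := summable_div_rpow_of_le_vonMangoldt (f := u) (C := 1)
        (fun n ↦ by rw [abs_of_nonneg (hu0 n)]; exact hu1 n) hx1
      have s3 := summable_div_rpow_of_le_vonMangoldt (f := R) (C := 1)
        (fun n ↦ by rw [abs_of_nonneg (hR0 n), one_mul]; exact hRle n) hx1
      rw [← s1.tsum_add s2]
      refine Summable.tsum_le_tsum (fun n ↦ ?_) s3 (s1.add s2)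
      rw [← add_div]
      gcongr
      by_cases hp : n.Prime
      · simp only [hu, hp, if_true, add_zero]
        by_cases hn : (n : ZMod Q) = 1
        · refine (hRle n).trans ?_
          rw [ArithmeticFunction.vonMangoldt_apply_prime hp]
          exact hQ n hp hn
        · rw [hR, ArithmeticFunction.vonMangoldt.residueClass, Set.indicator_of_notMem
            (s := {n : ℕ | (n : ZMod Q) = 1}) hn]
          exact hf0 n
      · simp only [hu, hp, if_false]
        linarith [hf0 n]
    have hx0 : 0 < x - 1 := sub_pos.2 hx1
    have h3 : (Q.totient : ℝ)⁻¹ / (x - 1) ≤ C' + (∑' n : ℕ, f n / (n : ℝ) ^ x +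
        ∑' n : ℕ, u n / (n : ℝ) ^ x) := by linarith
    rw [div_le_iff₀ hx0] at h3
    linarith
  linarith

end

section
open Filter Topology Complex Asymptotics
open scoped ArithmeticFunction.vonMangoldt

variable {G : Type*} [AddCommGroup G] [Fintype G]

theorem LSeries_finset_sum_mul {ι : Type*} (t : Finset ι) (c : ι → ℂ) (f : ι → ℕ → ℂ) {s : ℂ}
    (hf : ∀ i ∈ t, LSeriesSummable (f i) s) :
    LSeries (fun n ↦ ∑ i ∈ t, c i * f i n) s = ∑ i ∈ t, c i * LSeries (f i) s := by
  have h := LSeries_sum (S := t) (f := fun i ↦ c i • f i) (s := s) fun i hi ↦ (hf i hi).smul (c i)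
  simp only [LSeries_smul] at h
  rw [← h]
  congr 1
  ext n
  simp

theorem LSeriesSummable_finset_sum_mul {ι : Type*} (t : Finset ι) (c : ι → ℂ) (f : ι → ℕ → ℂ)
    {s : ℂ}
    (hf : ∀ i ∈ t, LSeriesSummable (f i) s) :
    LSeriesSummable (fun n ↦ ∑ i ∈ t, c i * f i n) s := by
  have h := LSeriesSummable.sum (S := t) (f := fun i ↦ c i • f i) (s := s)
    fun i hi ↦ (hf i hi).smul (c i)
  convert h using 1
  ext n
  simp

/-- The logarithmic derivative identity for the twists of a `G`-graded family. -/
theorem logMul_sum_addChar_eq_convolution {A B : G → ℕ → ℝ}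
    (hconv : ∀ g (n : ℕ), n ≠ 0 → Real.log n * A g n =
      ∑ d ∈ n.divisorsAntidiagonal, ∑ h, A h d.1 * B (g - h) d.2) (ψ : AddChar G ℂ) :
    LSeries.logMul (fun n ↦ ∑ g, ψ g * (A g n : ℂ)) =
      LSeries.convolution (fun n ↦ ∑ g, ψ g * (A g n : ℂ)) (fun n ↦ ∑ g, ψ g * (B g n : ℂ)) := by
  ext n
  rcases eq_or_ne n 0 with rfl | hn
  · simp [LSeries.logMul]
  rw [LSeries.convolution_def]
  simp only [LSeries.logMul]
  calc Complex.log n * ∑ g, ψ g * (A g n : ℂ)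
      = ∑ g, ψ g * ((Real.log n * A g n : ℝ) : ℂ) := by
        rw [Finset.mul_sum]
        refine Finset.sum_congr rfl fun g _ ↦ ?_
        rw [ofReal_mul, ← natCast_log]
        ring
    _ = ∑ g, ∑ d ∈ n.divisorsAntidiagonal, ∑ h, ψ g * (A h d.1 * B (g - h) d.2 : ℂ) := by
        refine Finset.sum_congr rfl fun g _ ↦ ?_
        rw [hconv g n hn]
        push_cast
        simp_rw [Finset.mul_sum]
    _ = ∑ d ∈ n.divisorsAntidiagonal, ∑ h, ∑ g, ψ g * (A h d.1 * B (g - h) d.2 : ℂ) := by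
        rw [Finset.sum_comm]
        exact Finset.sum_congr rfl fun d _ ↦ Finset.sum_comm
    _ = ∑ d ∈ n.divisorsAntidiagonal, (∑ h, ψ h * (A h d.1 : ℂ)) * ∑ g, ψ g * (B g d.2 : ℂ) := by
        refine Finset.sum_congr rfl fun d _ ↦ ?_
        rw [Finset.sum_mul]
        refine Finset.sum_congr rfl fun h _ ↦ ?_
        rw [Finset.mul_sum, ← Equiv.sum_comp (Equiv.addRight h)]
        refine Finset.sum_congr rfl fun g _ ↦ ?_
        simp only [Equiv.coe_addRight, add_sub_cancel_right, AddChar.map_add_eq_mul]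
        ring

theorem isBigO_natCast_rpow_half_one :
    (fun n : ℕ ↦ (n : ℝ) ^ (1 / 2 : ℝ)) =O[atTop] fun n : ℕ ↦ (n : ℝ) ^ (1 : ℝ) := by
  refine IsBigO.of_bound 1 ?_
  filter_upwards [eventually_ge_atTop 1] with n hn
  have : (1 : ℝ) ≤ n := by exact_mod_cast hn
  rw [one_mul, Real.norm_of_nonneg (by positivity), Real.norm_of_nonneg (by positivity)]
  exact Real.rpow_le_rpow_of_exponent_le this (by norm_num)

theorem LSeriesSummable_of_sum_sub_isBigO {f : ℕ → ℝ} (hf : ∀ n, 0 ≤ f n) {κ : ℝ}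
    (hO : (fun n : ℕ ↦ ∑ k ∈ Finset.Icc 1 n, f k - κ * n) =O[atTop]
      fun n : ℕ ↦ (n : ℝ) ^ (1 / 2 : ℝ)) {s : ℂ} (hs : 1 < s.re) :
    LSeriesSummable (fun n ↦ (f n : ℂ)) s := by
  refine LSeriesSummable_of_sum_norm_bigO (r := 1) ?_ zero_le_one hs
  have h1 : (fun n : ℕ ↦ κ * (n : ℝ)) =O[atTop] fun n : ℕ ↦ (n : ℝ) ^ (1 : ℝ) := by
    simp only [Real.rpow_one]
    exact isBigO_const_mul_self κ _ _
  refine ((hO.trans isBigO_natCast_rpow_half_one).add h1).congr_left fun n ↦ ?_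
  simp only [norm_real, sub_add_cancel]
  exact Finset.sum_congr rfl fun k _ ↦ (Real.norm_of_nonneg (hf k)).symm

/-- The residue of the logarithmic derivative of the twist by `ψ`. -/
theorem exists_tendsto_sub_mul_LSeries_addChar {A B : G → ℕ → ℝ} (hA0 : ∀ g n, 0 ≤ A g n)
    (hB0 : ∀ g n, 0 ≤ B g n)
    [DecidableEq G] (hA1 : ∀ g, A g 1 = if g = 0 then 1 else 0)
    (hconv : ∀ g (n : ℕ), n ≠ 0 → Real.log n * A g n =
      ∑ d ∈ n.divisorsAntidiagonal, ∑ h, A h d.1 * B (g - h) d.2)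
    {C : ℝ} (hBC : ∀ g n, B g n ≤ C * Λ n) {κ : ℝ} (hκ : 0 < κ)
    (hcount : ∀ g, (fun n : ℕ ↦ ∑ k ∈ Finset.Icc 1 n, A g k - κ * n) =O[atTop]
      fun n : ℕ ↦ (n : ℝ) ^ (1 / 2 : ℝ)) (ψ : AddChar G ℂ) :
    ∃ k : ℕ, Tendsto (fun x : ℝ ↦ ((x : ℂ) - 1) * LSeries (fun n ↦ ∑ g, ψ g * (B g n : ℂ)) x)
      (𝓝[>] 1) (𝓝 (if ψ = 0 then 1 else -k)) := by
  have hf : ∀ s : ℂ, 1 < s.re → LSeriesSummable (fun n ↦ ∑ g, ψ g * (A g n : ℂ)) s :=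
    fun s hs ↦ LSeriesSummable_finset_sum_mul _ _ _
      fun g _ ↦ LSeriesSummable_of_sum_sub_isBigO (hA0 g) (hcount g) hs
  have hb : ∀ s : ℂ, 1 < s.re → LSeriesSummable (fun n ↦ ∑ g, ψ g * (B g n : ℂ)) s :=
    fun s hs ↦ LSeriesSummable_finset_sum_mul _ _ _ fun g _ ↦
      LSeriesSummable_of_le_vonMangoldt (C := C) (fun n ↦ by
        rw [norm_real, Real.norm_of_nonneg (hB0 g n)]; exact hBC g n) hs
  have hc := logMul_sum_addChar_eq_convolution hconv ψ
  have hsumO : (fun n : ℕ ↦ ∑ k ∈ Finset.Icc 1 n, ((∑ g, ψ g * (A g k : ℂ)) - (∑ g, ψ g) * κ))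
      =O[atTop] fun n : ℕ ↦ (n : ℝ) ^ (1 / 2 : ℝ) := by
    have : ∀ g ∈ (Finset.univ : Finset G), (fun n : ℕ ↦ ψ g *
        ((∑ k ∈ Finset.Icc 1 n, A g k - κ * n : ℝ) : ℂ)) =O[atTop]
        fun n : ℕ ↦ (n : ℝ) ^ (1 / 2 : ℝ) := fun g _ ↦
      (isBigO_const_mul_self _ _ _).trans ((isBigO_norm_left.1 (by
        simpa only [norm_real] using (hcount g).norm_left)))
    refine (IsBigO.fun_sum this).congr_left fun n ↦ ?_
    rw [Finset.sum_sub_distrib, Finset.sum_comm, Finset.sum_const, Nat.card_Icc, Finset.sum_mul,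
      Finset.smul_sum, ← Finset.sum_sub_distrib]
    refine Finset.sum_congr rfl fun g _ ↦ ?_
    push_cast
    rw [mul_sub, Finset.mul_sum]
    simp
    ring
  by_cases hψ : ψ = 0
  · refine ⟨0, ?_⟩
    rw [if_pos hψ]
    refine tendsto_sub_mul_LSeries_of_pole hf hb hc (r := 1 / 2) (by norm_num) (by norm_num)
      (c := (∑ g, ψ g) * κ) ?_ hsumO
    subst hψ
    simp only [AddChar.zero_apply, Finset.sum_const, Finset.card_univ]
    simp [hκ.ne', Fintype.card_ne_zero]
  · have hs0 : ∑ g, ψ g = 0 := AddChar.sum_eq_zero_iff_ne_zero.2 hψ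
    simp only [hs0, zero_mul, sub_zero] at hsumO
    obtain ⟨g, hg, hgf⟩ := LSeries_exists_differentiableOn_of_sum_isBigO (by norm_num)
      (b := 1) (by norm_num) hf hsumO
    simp only [if_neg hψ]
    refine tendsto_sub_mul_LSeries_of_differentiableOn ?_ hf hb hc (by norm_num) hg hgf
    simp only [hA1]
    rw [Finset.sum_eq_single 0] <;> simp +contextual

end

section
open Filter Topology Complex Asymptotics
open scoped ArithmeticFunction.vonMangoldt

/-- Abstract form of the theorem on primes in ideal classes. -/
theorem exists_prime_of_graded_counting {G : Type*} [AddCommGroup G] [Fintype G] [DecidableEq G]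
    {A B : G → ℕ → ℝ} (hA0 : ∀ g n, 0 ≤ A g n) (hB0 : ∀ g n, 0 ≤ B g n)
    (hA1 : ∀ g, A g 1 = if g = 0 then 1 else 0)
    (hconv : ∀ g (n : ℕ), n ≠ 0 → Real.log n * A g n =
      ∑ d ∈ n.divisorsAntidiagonal, ∑ h, A h d.1 * B (g - h) d.2)
    {C : ℝ} (hBC : ∀ g n, B g n ≤ C * Λ n) {κ : ℝ} (hκ : 0 < κ)
    (hcount : ∀ g, (fun n : ℕ ↦ ∑ k ∈ Finset.Icc 1 n, A g k - κ * n) =O[atTop]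
      fun n : ℕ ↦ (n : ℝ) ^ (1 / 2 : ℝ)) {Q : ℕ} [NeZero Q]
    (hsq : ∀ p : ℕ, p.Prime → (p : ZMod Q) = 1 → ∃ g, Real.log p ≤ B (g + g) p)
    (g : G) (X : ℕ) : ∃ p : ℕ, p.Prime ∧ X < p ∧ 0 < B g p := by
  choose k hk using exists_tendsto_sub_mul_LSeries_addChar hA0 hB0 hA1 hconv hBC hκ hcount
  have hh : (Fintype.card G : ℂ) ≠ 0 := by simp
  have hBs : ∀ g, ∀ s : ℂ, 1 < s.re → LSeriesSummable (fun n ↦ (B g n : ℂ)) s := fun g s hs ↦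
    LSeriesSummable_of_le_vonMangoldt (C := C) (fun n ↦ by
        rw [norm_real, Real.norm_of_nonneg (hB0 g n)]; exact hBC g n) hs
  set c : AddChar G ℂ → ℝ := fun ψ ↦ if ψ = 0 then 1 else -k ψ with hc
  have hkc : ∀ ψ : AddChar G ℂ, Tendsto (fun x : ℝ ↦ ((x : ℂ) - 1) *
      LSeries (fun n ↦ ∑ g, ψ g * (B g n : ℂ)) x) (𝓝[>] 1) (𝓝 (c ψ)) := fun ψ ↦ by
    convert hk ψ using 2
    simp only [hc]; split_ifs <;> simp
  -- the density of each class
  have hdens : ∀ g, Tendsto (fun x : ℝ ↦ (x - 1) * ∑' n : ℕ, B g n / (n : ℝ) ^ x) (𝓝[>] 1)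
      (𝓝 (∑ ψ : AddChar G ℂ, (ψ (-g) / Fintype.card G) * c ψ).re) := by
    intro g
    have h1 : Tendsto (fun x : ℝ ↦ ∑ ψ : AddChar G ℂ, (ψ (-g) / Fintype.card G) *
        (((x : ℂ) - 1) * LSeries (fun n ↦ ∑ g, ψ g * (B g n : ℂ)) x)) (𝓝[>] 1)
        (𝓝 (∑ ψ : AddChar G ℂ, (ψ (-g) / Fintype.card G) * c ψ)) :=
      tendsto_finsetSum _ fun ψ _ ↦ (hkc ψ).const_mul _
    refine ((continuous_re.tendsto _).comp h1).congr' ?_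
    filter_upwards [self_mem_nhdsWithin] with x hx
    have hx1 : 1 < x := hx
    have hx1' : 1 < (x : ℂ).re := by simpa using hx1
    have h2 : ∑ ψ : AddChar G ℂ, (ψ (-g) / Fintype.card G) *
        (((x : ℂ) - 1) * LSeries (fun n ↦ ∑ g, ψ g * (B g n : ℂ)) x) =
        ((x : ℂ) - 1) * LSeries (fun n ↦ (B g n : ℂ)) x := by
      have h3 : LSeries (fun n ↦ (B g n : ℂ)) x = LSeries (fun n ↦ ∑ ψ : AddChar G ℂ,
          (ψ (-g) / Fintype.card G) * ∑ g', ψ g' * (B g' n : ℂ)) x := by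
        congr 1
        ext n
        simp_rw [Finset.mul_sum]
        rw [Finset.sum_comm]
        have : ∀ g' : G, ∑ ψ : AddChar G ℂ, ψ (-g) / (Fintype.card G : ℂ) * (ψ g' * (B g' n : ℂ)) =
            if g' - g = 0 then (B g' n : ℂ) else 0 := by
          intro g'
          have h4 := AddChar.sum_apply_eq_ite (g' - g)
          calc _ = (∑ ψ : AddChar G ℂ, ψ (g' - g)) * ((B g' n : ℂ) / Fintype.card G) := by
                rw [Finset.sum_mul]
                refine Finset.sum_congr rfl fun ψ _ ↦ ?_
                rw [sub_eq_add_neg, AddChar.map_add_eq_mul]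
                ring
            _ = _ := by
                rw [h4]
                split_ifs
                · field_simp
                · simp
        simp_rw [this, sub_eq_zero]
        simp
      rw [h3, LSeries_finset_sum_mul]
      · rw [Finset.mul_sum]
        exact Finset.sum_congr rfl fun ψ _ ↦ by ring
      · intro ψ _
        exact LSeriesSummable_finset_sum_mul _ _ _ fun g _ ↦ hBs g _ hx1'
    simp only [Function.comp_apply]
    rw [h2, LSeries_ofReal_eq_tsum _ (zero_lt_one.trans hx1)]
    rw [show ((x : ℂ) - 1) = ((x - 1 : ℝ) : ℂ) by push_cast; rfl, ← ofReal_mul, ofReal_re]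
  have hdens0 : ∀ g, 0 ≤ (∑ ψ : AddChar G ℂ, (ψ (-g) / Fintype.card G) * c ψ).re := by
    intro g
    refine ge_of_tendsto (hdens g) ?_
    filter_upwards [self_mem_nhdsWithin] with x hx
    exact mul_nonneg (sub_nonneg.2 (le_of_lt hx)) (tsum_nonneg fun n ↦
      div_nonneg (hB0 g n) (by positivity))
  have hcard : (0 : ℝ) < Fintype.card G := by exact_mod_cast Fintype.card_pos
  have hsum : ∑ ψ ∈ (Finset.univ : Finset (AddChar G ℂ)).erase 0, (k ψ : ℝ) ≤ 1 := by
    have h0 := hdens0 0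
    have h1 : ∑ ψ : AddChar G ℂ, (ψ (-0) / Fintype.card G) * c ψ =
        (((∑ ψ, c ψ) / Fintype.card G : ℝ) : ℂ) := by
      push_cast
      rw [Finset.sum_div]
      refine Finset.sum_congr rfl fun ψ _ ↦ ?_
      simp
      ring
    rw [h1, ofReal_re] at h0
    have h2 : 0 ≤ ∑ ψ, c ψ := by
      by_contra h
      exact absurd h0 (not_le.2 (div_neg_of_neg_of_pos (not_le.1 h) hcard))
    rw [← Finset.add_sum_erase _ _ (Finset.mem_univ (0 : AddChar G ℂ))] at h2
    have h3 : ∑ ψ ∈ (Finset.univ : Finset (AddChar G ℂ)).erase 0, c ψ =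
        -∑ ψ ∈ (Finset.univ : Finset (AddChar G ℂ)).erase 0, (k ψ : ℝ) := by
      rw [← Finset.sum_neg_distrib]
      refine Finset.sum_congr rfl fun ψ hψ ↦ ?_
      simp [hc, Finset.ne_of_mem_erase hψ]
    rw [h3] at h2
    simp only [hc, if_true] at h2
    linarith
  have hkzero : ∀ ψ : AddChar G ℂ, ψ ≠ 0 → k ψ = 0 := by
    by_contra! hcon
    obtain ⟨ψ, hψ, hkψ⟩ := hcon
    have huniq : ∀ χ : AddChar G ℂ, χ ≠ 0 → χ ≠ ψ → k χ = 0 := by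
      intro χ hχ hne
      by_contra hkχ
      have h1 : (k χ : ℝ) + k ψ ≤ 1 := by
        refine le_trans ?_ hsum
        rw [← Finset.sum_pair (f := fun ψ ↦ (k ψ : ℝ)) hne]
        refine Finset.sum_le_sum_of_subset_of_nonneg ?_ fun _ _ _ ↦ Nat.cast_nonneg _
        intro φ hφ
        rcases Finset.mem_insert.1 hφ with rfl | h
        · simpa using hχ
        · rw [Finset.mem_singleton.1 h]; simpa using hψ
      have h2 : k χ + k ψ ≤ 1 := by exact_mod_cast h1
      omega
    have hk1 : k ψ = 1 := by
      have h1 : (k ψ : ℝ) ≤ 1 := by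
        refine le_trans ?_ hsum
        exact Finset.single_le_sum (f := fun ψ ↦ (k ψ : ℝ)) (fun _ _ ↦ Nat.cast_nonneg _)
          (by simpa using hψ)
      have h2 : k ψ ≤ 1 := by exact_mod_cast h1
      omega
    have hreal : -ψ = ψ := by
      by_contra hne
      have h0 := huniq (-ψ) (neg_ne_zero.2 hψ) hne
      have h1 := hkc (-ψ)
      have h2 := (continuous_star.tendsto _).comp (hkc ψ)
      have h3 : (c (-ψ) : ℂ) = star (c ψ : ℂ) := by
        refine tendsto_nhds_unique (h1.congr' ?_) h2
        filter_upwards [self_mem_nhdsWithin] with x hx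
        have hx1' : 1 < (x : ℂ).re := by simpa using hx
        simp only [Function.comp_apply]
        rw [LSeries_finset_sum_mul _ _ _ fun g _ ↦ hBs g _ hx1',
          LSeries_finset_sum_mul _ _ _ fun g _ ↦ hBs g _ hx1']
        simp_rw [LSeries_ofReal_eq_tsum (B _) (zero_lt_one.trans (by simpa using hx1' : 1 < x))]
        simp only [star_def, map_mul, map_sub, map_sum, conj_ofReal, map_one]
        congr 1
        refine Finset.sum_congr rfl fun g _ ↦ ?_
        rw [AddChar.neg_apply, AddChar.map_neg_eq_conj]
      simp [hc, hψ, h0, hk1] at h3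
    have hval : ∀ g, ψ (g + g) = 1 := by
      intro g
      have h1 : (-ψ) g = ψ g := by rw [hreal]
      rw [AddChar.neg_apply] at h1
      calc ψ (g + g) = ψ (-g) * ψ g := by rw [AddChar.map_add_eq_mul, h1]
        _ = 1 := by rw [← AddChar.map_add_eq_mul]; simp
    have hzero : ∀ g, Tendsto (fun x : ℝ ↦ (x - 1) * ∑' n : ℕ, B (g + g) n / (n : ℝ) ^ x)
        (𝓝[>] 1) (𝓝 0) := by
      intro g
      convert hdens (g + g) using 2
      rw [← Finset.add_sum_erase _ _ (Finset.mem_univ (0 : AddChar G ℂ)),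
        ← Finset.add_sum_erase _ _
            (show ψ ∈ (Finset.univ.erase (0 : AddChar G ℂ)) by simpa using hψ),
        Finset.sum_eq_zero]
      · have : ψ (-(g + g)) = 1 := by rw [AddChar.map_neg_eq_conj, hval]; simp
        rw [this]
        simp [hc, hψ, hk1]
      · intro χ hχ
        simp only [Finset.mem_erase, Finset.mem_univ, and_true] at hχ
        simp [hc, hχ.2, huniq χ hχ.2 hχ.1]
    have hlim : Tendsto (fun x : ℝ ↦ (x - 1) * ∑' n : ℕ, (∑ g, B (g + g) n) / (n : ℝ) ^ x)
        (𝓝[>] 1) (𝓝 0) := by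
      have h1 := tendsto_finsetSum (Finset.univ : Finset G) fun g _ ↦ hzero g
      simp only [Finset.sum_const_zero] at h1
      refine h1.congr' ?_
      filter_upwards [self_mem_nhdsWithin] with x hx
      rw [← Finset.mul_sum, ← Summable.tsum_finsetSum]
      · simp_rw [Finset.sum_div]
      · intro g _
        exact summable_div_rpow_of_le_vonMangoldt (C := C)
          (fun n ↦ by rw [abs_of_nonneg (hB0 _ n)]; exact hBC _ n) hx
    refine not_tendsto_sub_mul_tsum_of_log_le (f := fun n ↦ ∑ g, B (g + g) n)
      (C := Fintype.card G * C) (Q := Q) (fun n ↦ Finset.sum_nonneg fun g _ ↦ hB0 _ n) (fun n ↦ ?_)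
      (fun p hp hpQ ↦ ?_) hlim
    · calc ∑ g, B (g + g) n ≤ ∑ _g : G, C * Λ n := Finset.sum_le_sum fun g _ ↦ hBC _ n
        _ = _ := by simp; ring
    · obtain ⟨g, hg⟩ := hsq p hp hpQ
      exact hg.trans (Finset.single_le_sum (f := fun g ↦ B (g + g) p) (fun g _ ↦ hB0 _ p)
        (Finset.mem_univ g))
  by_contra! hcon
  have h1 := tendsto_sub_mul_tsum_of_eq_zero_of_prime (hB0 g) (hBC g) (X := X)
    fun p hp hX ↦ le_antisymm (hcon p hp hX) (hB0 g p)
  have h2 := tendsto_nhds_unique h1 (hdens g)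
  rw [← Finset.add_sum_erase _ _ (Finset.mem_univ (0 : AddChar G ℂ)), Finset.sum_eq_zero] at h2
  · simp [hc] at h2
    exact hcard.ne h2
  · intro χ hχ
    simp only [Finset.mem_erase, Finset.mem_univ, and_true] at hχ
    simp [hc, hχ, hkzero χ hχ]

end

section
open Filter Topology Asymptotics UniqueFactorizationMonoid
open scoped ArithmeticFunction.vonMangoldt NumberField

variable {R : Type*} [CommRing R] [IsDedekindDomain R] [Module.Free ℤ R] [Module.Finite ℤ R]

open Classical in
/-- The von Mangoldt function on ideals. -/
noncomputable def Ideal.vonMangoldt (I : Ideal R) : ℝ :=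
  if h : IsPrimePow I then Real.log (Ideal.absNorm h.choose) else 0

theorem Ideal.vonMangoldt_pow {P : Ideal R} (hP : Prime P) {k : ℕ} (hk : k ≠ 0) :
    (P ^ k).vonMangoldt = Real.log (Ideal.absNorm P) := by
  have h : IsPrimePow (P ^ k) := ⟨P, k, hP, Nat.pos_of_ne_zero hk, rfl⟩
  rw [Ideal.vonMangoldt, dif_pos h]
  obtain ⟨l, hl, hl0, heq⟩ := h.choose_spec
  have h1 : P ∣ h.choose := hP.dvd_of_dvd_pow (n := l) (by rw [heq]; exact dvd_pow_self P hk)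
  exact congrArg (fun J ↦ Real.log (Ideal.absNorm J))
    (associated_iff_eq.1 ((hP.dvd_prime_iff_associated hl).1 h1)).symm

theorem Ideal.vonMangoldt_nonneg (I : Ideal R) : 0 ≤ I.vonMangoldt := by
  rw [Ideal.vonMangoldt]
  split_ifs
  · exact Real.log_natCast_nonneg _
  · exact le_rfl

theorem Ideal.vonMangoldt_of_not_isPrimePow {I : Ideal R} (h : ¬ IsPrimePow I) :
    I.vonMangoldt = 0 := dif_neg h

theorem Ideal.sum_vonMangoldt_eq_log [CharZero R] {I : Ideal R} (hI : I ≠ 0) {T : Finset (Ideal R)}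
    (hT : ∀ D, D ∈ T ↔ D ∣ I) : ∑ D ∈ T, D.vonMangoldt = Real.log (Ideal.absNorm I) := by
  classical
  have hprime : ∀ P ∈ (normalizedFactors I).toFinset, Prime P := fun P hP ↦
    prime_of_normalized_factor P (Multiset.mem_toFinset.1 hP)
  have hcount : ∀ P : Ideal R, Prime P → ∀ k : ℕ, P ^ k ∣ I ↔ k ≤
      (normalizedFactors I).count P := by
    intro P hP k
    rw [pow_dvd_iff_le_emultiplicity, emultiplicity_eq_count_normalizedFactors hP.irreducible hI,
      normalize_eq, Nat.cast_le]
  have h1 : ∑ D ∈ T, D.vonMangoldt = ∑ D ∈ ((normalizedFactors I).toFinset.sigma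
      fun P ↦ Finset.Icc 1 ((normalizedFactors I).count P)).image (fun x ↦ x.1 ^ x.2),
      D.vonMangoldt := by
    symm
    refine Finset.sum_subset ?_ ?_
    · intro D hD
      obtain ⟨⟨P, k⟩, hPk, rfl⟩ := Finset.mem_image.1 hD
      rw [Finset.mem_sigma, Finset.mem_Icc] at hPk
      exact (hT _).2 ((hcount P (hprime P hPk.1) k).2 hPk.2.2)
    · intro D hD hD2
      refine Ideal.vonMangoldt_of_not_isPrimePow ?_
      rintro ⟨P, k, hP, hk, rfl⟩
      have hk2 := (hcount P hP k).1 ((hT _).1 hD)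
      refine hD2 (Finset.mem_image.2 ⟨⟨P, k⟩, Finset.mem_sigma.2 ⟨?_, Finset.mem_Icc.2 ⟨hk, hk2⟩⟩,
          rfl⟩)
      exact Multiset.mem_toFinset.2 (Multiset.count_pos.1 (hk.trans_le hk2))
  rw [h1, Finset.sum_image, Finset.sum_sigma]
  · have h2 : ∀ P ∈ (normalizedFactors I).toFinset,
        ∑ k ∈ Finset.Icc 1 ((normalizedFactors I).count P), (P ^ k).vonMangoldt =
        Real.log ((Ideal.absNorm P : ℝ) ^ (normalizedFactors I).count P) := by
      intro P hP
      rw [Finset.sum_congr rfl fun k hk ↦ Ideal.vonMangoldt_pow (hprime P hP)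
        (Nat.one_le_iff_ne_zero.1 (Finset.mem_Icc.1 hk).1)]
      simp
    rw [Finset.sum_congr rfl h2, ← Real.log_prod]
    · congr 1
      have h3 : (normalizedFactors I).prod = I := associated_iff_eq.1 (prod_normalizedFactors hI)
      conv_rhs => rw [← h3, Finset.prod_multiset_count]
      rw [map_prod]
      push_cast
      simp only [map_pow, Nat.cast_pow]
    · intro P hP
      have : Ideal.absNorm P ≠ 0 := Ideal.absNorm_ne_zero_iff_mem_nonZeroDivisors.2
        (mem_nonZeroDivisors_of_ne_zero (hprime P hP).ne_zero)
      positivity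
  · rintro ⟨P, k⟩ hP ⟨Q, l⟩ hQ heq
    simp only [Finset.coe_sigma, Set.mem_sigma_iff, Finset.mem_coe, Finset.mem_Icc] at hP hQ heq
    have hPQ : P = Q := by
      have : P ∣ Q := (hprime P hP.1).dvd_of_dvd_pow (n := l)
        (heq ▸ dvd_pow_self P (Nat.one_le_iff_ne_zero.1 hP.2.1))
      exact associated_iff_eq.1 (((hprime P hP.1).dvd_prime_iff_associated (hprime Q hQ.1)).1 this)
    subst hPQ
    have hpr := hprime P hP.1
    rw [pow_injective_of_not_isUnit hpr.not_isUnit hpr.ne_zero heq]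

variable [CharZero R]

/-- The ideals of norm `n`. -/
noncomputable def idealsOfNorm (R : Type*) [CommRing R] [IsDedekindDomain R] [Module.Free ℤ R]
    [Module.Finite ℤ R] [CharZero R] (n : ℕ) : Finset (Ideal R) :=
  (Ideal.finite_setOfPred_absNorm_eq (S := R) n).toFinset

theorem mem_idealsOfNorm {n : ℕ} {I : Ideal R} : I ∈ idealsOfNorm R n ↔ Ideal.absNorm I = n := by
  simp [idealsOfNorm]

theorem exists_finset_mem_iff_dvd {I : Ideal R} (hI : I ≠ 0) :
    ∃ T : Finset (Ideal R), ∀ D, D ∈ T ↔ D ∣ I := by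
  classical
  refine ⟨((Ideal.absNorm I).divisors.biUnion (idealsOfNorm R)).filter (· ∣ I), fun D ↦ ?_⟩
  rw [Finset.mem_filter, Finset.mem_biUnion]
  refine ⟨fun h ↦ h.2, fun h ↦ ⟨⟨_, ?_, mem_idealsOfNorm.2 rfl⟩, h⟩⟩
  exact Nat.mem_divisors.2 ⟨map_dvd _ h, Ideal.absNorm_ne_zero_iff_mem_nonZeroDivisors.2
    (mem_nonZeroDivisors_of_ne_zero hI)⟩

theorem sum_vonMangoldt_idealsOfNorm_le (n : ℕ) :
    ∑ I ∈ idealsOfNorm R n, I.vonMangoldt ≤ Module.finrank ℤ R * Λ n := by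
  classical
  have hpos : 0 ≤ (Module.finrank ℤ R : ℝ) * Λ n :=
    mul_nonneg (Nat.cast_nonneg _) ArithmeticFunction.vonMangoldt_nonneg
  rw [← Finset.sum_filter_of_ne (p := fun I ↦ IsPrimePow I) fun I _ h ↦ by
    by_contra h2
    exact h (Ideal.vonMangoldt_of_not_isPrimePow h2)]
  rcases Finset.eq_empty_or_nonempty ((idealsOfNorm R n).filter fun I ↦ IsPrimePow I) with h | hne
  · rw [h, Finset.sum_empty]; exact hpos
  obtain ⟨I₀, hI₀⟩ := hne
  have key : ∀ I ∈ (idealsOfNorm R n).filter fun I ↦ IsPrimePow I, ∃ P : Ideal R, ∃ k p f : ℕ,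
      Prime P ∧ k ≠ 0 ∧ I = P ^ k ∧ p.Prime ∧ f ≠ 0 ∧ Ideal.absNorm P = p ^ f ∧
      P ∣ Ideal.span {(p : R)} ∧ n = p ^ (f * k) := by
    intro I hI
    obtain ⟨hI1, P, k, hP, hk, rfl⟩ := Finset.mem_filter.1 hI
    rw [mem_idealsOfNorm] at hI1
    have : P.IsMaximal := (Ideal.isPrime_of_prime hP).isMaximal hP.ne_zero
    obtain ⟨p, f, hf, hpP, hp, h⟩ := Ideal.exists_prime_and_absNorm_eq_pow P
    refine ⟨P, k, p, f, hP, hk.ne', rfl, hp, hf.ne', h, ?_, ?_⟩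
    · rw [Ideal.dvd_span_singleton]
      exact hpP
    · rw [← hI1, map_pow, h, pow_mul]
  obtain ⟨P₀, k₀, p, f₀, -, hk₀, -, hp, hf₀, -, -, hn⟩ := key I₀ hI₀
  choose! P k q f hP hk hIP hq hf hnorm hdvd hn' using key
  have hqp : ∀ I ∈ (idealsOfNorm R n).filter fun I ↦ IsPrimePow I, q I = p := by
    intro I hI
    refine (Nat.prime_dvd_prime_iff_eq (hq I hI) hp).1 ((hq I hI).dvd_of_dvd_pow (n := f₀ * k₀) ?_)
    rw [← hn]
    conv_rhs => rw [hn' I hI]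
    exact dvd_pow_self _ (mul_ne_zero (hf I hI) (hk I hI))
  have hp0 : Ideal.span {(p : R)} ≠ 0 := by
    simpa [Ideal.span_singleton_eq_bot] using hp.ne_zero
  obtain ⟨T, hT⟩ := exists_finset_mem_iff_dvd hp0
  have hΛ : Λ n = Real.log p := by
    rw [hn, ArithmeticFunction.vonMangoldt_apply_pow (mul_ne_zero hf₀ hk₀),
      ArithmeticFunction.vonMangoldt_apply_prime hp]
  have hinj : Set.InjOn P ((idealsOfNorm R n).filter fun I ↦ IsPrimePow I : Finset (Ideal R)) := by
    intro I hI J hJ hIJ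
    have h1 := hnorm I hI
    have h2 := hn' I hI
    rw [hIJ, hnorm J hJ, hqp I hI, hqp J hJ] at h1
    have h1 := Nat.pow_right_injective hp.two_le h1
    rw [hn' J hJ, hqp I hI, hqp J hJ] at h2
    have h2 := Nat.pow_right_injective hp.two_le h2
    rw [← h1] at h2
    have h3 := Nat.eq_of_mul_eq_mul_left (Nat.pos_of_ne_zero (hf J hJ)) h2
    rw [hIP I hI, hIP J hJ, hIJ, h3]
  calc ∑ I ∈ (idealsOfNorm R n).filter fun I ↦ IsPrimePow I, I.vonMangoldt
      = ∑ I ∈ (idealsOfNorm R n).filter fun I ↦ IsPrimePow I, (P I).vonMangoldt := by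
        refine Finset.sum_congr rfl fun I hI ↦ ?_
        conv_lhs => rw [hIP I hI, Ideal.vonMangoldt_pow (hP I hI) (hk I hI)]
        conv_rhs => rw [← pow_one (P I), Ideal.vonMangoldt_pow (hP I hI) one_ne_zero]
    _ = ∑ D ∈ ((idealsOfNorm R n).filter fun I ↦ IsPrimePow I).image P, D.vonMangoldt :=
        (Finset.sum_image hinj).symm
    _ ≤ ∑ D ∈ T, D.vonMangoldt := by
        refine Finset.sum_le_sum_of_subset_of_nonneg ?_ fun D _ _ ↦ D.vonMangoldt_nonneg
        intro D hD
        obtain ⟨I, hI, rfl⟩ := Finset.mem_image.1 hD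
        rw [hT, ← hqp I hI]
        exact hdvd I hI
    _ = Module.finrank ℤ R * Λ n := by
        rw [Ideal.sum_vonMangoldt_eq_log hp0 hT, hΛ, Ideal.absNorm_span_natCast]
        push_cast
        rw [Real.log_pow]

theorem sum_divisorsAntidiagonal_idealsOfNorm {n : ℕ} (hn : n ≠ 0)
    {T : Ideal R → Finset (Ideal R)} (hT : ∀ I ≠ 0, ∀ D, D ∈ T I ↔ D ∣ I)
    (F : Ideal R → Ideal R → ℝ) :
    ∑ d ∈ n.divisorsAntidiagonal, ∑ J ∈ idealsOfNorm R d.1, ∑ D ∈ idealsOfNorm R d.2, F (J * D) D =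
      ∑ I ∈ idealsOfNorm R n, ∑ D ∈ T I, F I D := by
  have hne : ∀ I : Ideal R, Ideal.absNorm I = n → I ≠ 0 := by
    rintro I hI rfl
    exact hn (by simpa using hI.symm)
  simp only [Finset.sum_sigma']
  refine Finset.sum_bij (fun x _ ↦ ⟨x.2.1 * x.2.2, x.2.2⟩) ?_ ?_ ?_ ?_
  · rintro ⟨d, J, D⟩ h
    simp only [Finset.mem_sigma, mem_idealsOfNorm, Nat.mem_divisorsAntidiagonal] at h ⊢
    have h1 : Ideal.absNorm (J * D) = n := by rw [map_mul, h.2.1, h.2.2, h.1.1]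
    exact ⟨h1, (hT _ (hne _ h1) D).2 (dvd_mul_left _ _)⟩
  · rintro ⟨d, J, D⟩ h ⟨d', J', D'⟩ h' heq
    simp only [Finset.mem_sigma, mem_idealsOfNorm, Nat.mem_divisorsAntidiagonal] at h h'
    simp only [Sigma.mk.injEq, heq_eq_eq] at heq
    obtain ⟨h1, rfl⟩ := heq
    have hD : D ≠ 0 := by
      rintro rfl
      exact hn (by rw [← h.1.1, ← h.2.2]; simp)
    obtain rfl := mul_right_cancel₀ hD h1
    obtain rfl : d = d' := Prod.ext (h.2.1.symm.trans h'.2.1) (h.2.2.symm.trans h'.2.2)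
    rfl
  · rintro ⟨I, D⟩ h
    simp only [Finset.mem_sigma, mem_idealsOfNorm] at h
    obtain ⟨J, rfl⟩ := (hT I (hne I h.1) D).1 h.2
    refine ⟨⟨(Ideal.absNorm J, Ideal.absNorm D), J, D⟩, ?_, ?_⟩
    · simp only [Finset.mem_sigma, mem_idealsOfNorm, Nat.mem_divisorsAntidiagonal, and_true]
      exact ⟨by rw [← h.1, map_mul, mul_comm], hn⟩
    · simp only [mul_comm]
  · rintro ⟨d, J, D⟩ _
    rfl

theorem exists_prime_ideal_of_counting {G : Type*} [CommGroup G] [Fintype G]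
    (cl : Ideal R →*₀ WithZero G) {κ : ℝ} (hκ : 0 < κ)
    (hcount : ∀ g : G, (fun n : ℕ ↦
      (Nat.card {I : Ideal R // cl I = g ∧ Ideal.absNorm I ≤ n} : ℝ) - κ * n) =O[atTop]
      fun n : ℕ ↦ (n : ℝ) ^ (1 / 2 : ℝ)) {Q : ℕ} [NeZero Q]
    (hsq : ∀ p : ℕ, p.Prime → (p : ZMod Q) = 1 → ∃ g : G, ∃ I : Ideal R,
      cl I = (g * g : G) ∧ Ideal.absNorm I = p)
    (g : G) (X : ℕ) : ∃ I : Ideal R, cl I = g ∧ (Ideal.absNorm I).Prime ∧ X < Ideal.absNorm I := by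
  classical
  set A : Additive G → ℕ → ℝ := fun g n ↦
    ∑ I ∈ idealsOfNorm R n, if cl I = (g.toMul : G) then 1 else 0 with hA
  set B : Additive G → ℕ → ℝ := fun g n ↦
    ∑ I ∈ idealsOfNorm R n, if cl I = (g.toMul : G) then I.vonMangoldt else 0 with hB
  have hcl1 : cl 1 = ((1 : G) : WithZero G) := map_one cl
  have hB0 : ∀ g n, 0 ≤ B g n := fun g n ↦ Finset.sum_nonneg fun I _ ↦ by
    split_ifs
    exacts [I.vonMangoldt_nonneg, le_rfl]
  suffices ∃ p : ℕ, p.Prime ∧ X < p ∧ 0 < B (Additive.ofMul g) p by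
    obtain ⟨p, hp, hX, hpos⟩ := this
    obtain ⟨I, hI, h⟩ := Finset.exists_ne_zero_of_sum_ne_zero hpos.ne'
    rw [mem_idealsOfNorm] at hI
    have h2 : cl I = g := by
      by_contra h2
      exact h (if_neg h2)
    exact ⟨I, h2, hI ▸ hp, hI ▸ hX⟩
  refine exists_prime_of_graded_counting (A := A) (B := B)
    (C := Module.finrank ℤ R) (κ := κ) (Q := Q) ?_ hB0 ?_ ?_ ?_ hκ ?_ ?_ (Additive.ofMul g) X
  · exact fun g n ↦ Finset.sum_nonneg fun I _ ↦ by split_ifs <;> norm_num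
  · intro g
    have : idealsOfNorm R 1 = {1} := by
      ext I
      rw [mem_idealsOfNorm, Ideal.absNorm_eq_one_iff, Finset.mem_singleton, Ideal.one_eq_top]
    simp only [hA, this, Finset.sum_singleton, hcl1, WithZero.coe_inj]
    refine if_congr ⟨fun h ↦ ?_, fun h ↦ ?_⟩ rfl rfl
    · exact Additive.toMul.injective h.symm
    · rw [h]; rfl
  · intro g n hn
    choose! T hT using fun (I : Ideal R) (hI : I ≠ 0) ↦ exists_finset_mem_iff_dvd hI
    have hconv := sum_divisorsAntidiagonal_idealsOfNorm hn hT
      (fun I D ↦ if cl I = (g.toMul : G) then D.vonMangoldt else 0)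
    have hL : Real.log n * A g n = ∑ I ∈ idealsOfNorm R n, ∑ D ∈ T I,
        if cl I = (g.toMul : G) then D.vonMangoldt else 0 := by
      simp only [hA, Finset.mul_sum]
      refine Finset.sum_congr rfl fun I hI ↦ ?_
      rw [mem_idealsOfNorm] at hI
      have hI0 : I ≠ 0 := by
        rintro rfl
        exact hn (by simpa using hI.symm)
      by_cases h : cl I = (g.toMul : G)
      · simp only [h, if_true]
        rw [Ideal.sum_vonMangoldt_eq_log hI0 (hT I hI0), hI, mul_one]
      · simp [h]
    rw [hL, ← hconv]
    refine Finset.sum_congr rfl fun d _ ↦ ?_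
    simp only [hA, hB, Finset.sum_mul_sum]
    symm
    rw [Finset.sum_comm]
    refine Finset.sum_congr rfl fun J _ ↦ ?_
    rw [Finset.sum_comm]
    refine Finset.sum_congr rfl fun D _ ↦ ?_
    rw [map_mul]
    rcases eq_or_ne (cl J) 0 with hJ | hJ
    · simp [hJ]
    obtain ⟨j, hj⟩ := WithZero.ne_zero_iff_exists.1 hJ
    rw [← hj, Finset.sum_eq_single (Additive.ofMul j)]
    · rw [toMul_ofMul, if_pos rfl, one_mul]
      refine if_congr ?_ rfl rfl
      rw [toMul_sub, toMul_ofMul, WithZero.coe_div, eq_div_iff WithZero.coe_ne_zero, mul_comm]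
    · intro h _ hne
      rw [if_neg, zero_mul]
      rw [WithZero.coe_inj]
      rintro rfl
      exact hne rfl
    · simp
  · intro g n
    refine le_trans (Finset.sum_le_sum fun I _ ↦ ?_) (sum_vonMangoldt_idealsOfNorm_le n)
    split_ifs
    exacts [le_rfl, I.vonMangoldt_nonneg]
  · intro g
    refine (hcount g.toMul).congr_left fun n ↦ ?_
    congr 1
    have h1 : ∀ k : ℕ, A g k = (((idealsOfNorm R k).filter fun I ↦ cl I = (g.toMul : G)).card :
        ℝ) :=
      fun k ↦ by simp only [hA, Finset.sum_boole]
    simp only [h1]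
    rw [← Nat.cast_sum, ← Finset.card_biUnion, Nat.cast_inj, ← Nat.card_eq_finsetCard]
    · refine Nat.card_congr (Equiv.subtypeEquivRight fun I ↦ ?_)
      simp only [Finset.mem_biUnion, Finset.mem_filter, mem_idealsOfNorm, Finset.mem_Icc]
      constructor
      · rintro ⟨h, hn⟩
        refine ⟨_, ⟨Nat.one_le_iff_ne_zero.2 ?_, hn⟩, rfl, h⟩
        rw [Ne, Ideal.absNorm_eq_zero_iff]
        rintro rfl
        exact WithZero.coe_ne_zero (h.symm.trans (map_zero cl))
      · rintro ⟨k, hk, rfl, h⟩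
        exact ⟨h, hk.2⟩
    · intro k _ l _ hkl
      rw [Function.onFun, Finset.disjoint_left]
      intro I hI hI2
      rw [Finset.mem_filter, mem_idealsOfNorm] at hI hI2
      exact hkl (hI.1.symm.trans hI2.1)
  · intro p hp hpQ
    obtain ⟨g, I, hI, hIp⟩ := hsq p hp hpQ
    refine ⟨Additive.ofMul g, ?_⟩
    have hprime : Prime I := by
      refine UniqueFactorizationMonoid.irreducible_iff_prime.1
        (Ideal.irreducible_of_irreducible_absNorm ?_)
      rw [hIp]
      exact hp.prime.irreducible
    have h1 : Real.log p = if cl I = (((Additive.ofMul g + Additive.ofMul g).toMul : G) :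
        WithZero G)
        then I.vonMangoldt else 0 := by
      rw [if_pos (by exact hI), ← pow_one I, Ideal.vonMangoldt_pow hprime one_ne_zero, hIp]
    rw [h1]
    refine Finset.single_le_sum (f := fun I : Ideal R ↦ if cl I =
        (((Additive.ofMul g + Additive.ofMul g).toMul : G) : WithZero G)
        then I.vonMangoldt else 0) (fun I _ ↦ ?_) (mem_idealsOfNorm.2 hIp)
    split_ifs
    exacts [I.vonMangoldt_nonneg, le_rfl]

end

section
universe u

variable {R : Type*} [CommRing R]

/-- `α` is congruent modulo `m` to a rational integer coprime to `m`. -/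
def IsRationalUnitMod (m : ℤ) (α : R) : Prop :=
  ∃ k : ℤ, IsCoprime k m ∧ (m : R) ∣ α - k

namespace IsRationalUnitMod

variable {m : ℤ} {α β γ : R}

theorem one : IsRationalUnitMod m (1 : R) := ⟨1, isCoprime_one_left, by simp⟩

theorem intCast {k : ℤ} (h : IsCoprime k m) : IsRationalUnitMod m (k : R) := ⟨k, h, by simp⟩

theorem mul (hα : IsRationalUnitMod m α) (hβ : IsRationalUnitMod m β) :
    IsRationalUnitMod m (α * β) := by
  obtain ⟨k, hk, hα⟩ := hα
  obtain ⟨l, hl, hβ⟩ := hβ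
  refine ⟨k * l, hk.mul_left hl, ?_⟩
  have : α * β - ((k * l : ℤ) : R) = (α - k) * β + k * (β - l) := by push_cast; ring
  rw [this]
  exact dvd_add (hα.mul_right β) (hβ.mul_left _)

theorem of_mul_left (hα : IsRationalUnitMod m α) (h : IsRationalUnitMod m (α * γ)) :
    IsRationalUnitMod m γ := by
  obtain ⟨k, ⟨u, v, huv⟩, hα⟩ := hα
  obtain ⟨l, hl, h⟩ := h
  have hu : IsCoprime u m := ⟨k, v, by linarith⟩
  refine ⟨u * l, hu.mul_left hl, ?_⟩
  have h1 : ((u * k + v * m : ℤ) : R) = 1 := by rw [huv]; simp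
  push_cast at h1
  have : γ - ((u * l : ℤ) : R) = m * (v * γ) - (α - k) * (u * γ) + u * (α * γ - l) := by
    push_cast
    linear_combination -γ * h1
  rw [this]
  exact dvd_add (dvd_sub (dvd_mul_right _ _) (hα.mul_right _)) (h.mul_left _)

theorem isCoprime_span (hα : IsRationalUnitMod m α) :
    IsCoprime (Ideal.span {α}) (Ideal.span {(m : R)}) := by
  rw [Ideal.isCoprime_span_singleton_iff]
  obtain ⟨k, hk, c, hc⟩ := hα
  have h1 : IsCoprime (k : R) (m : R) := by simpa using hk.map (Int.castRingHom R)
  rw [show α = k + m * c by linear_combination hc]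
  exact h1.add_mul_left_left c

end IsRationalUnitMod

variable [IsDedekindDomain R]

/-- The ideals coprime to `m`. -/
def coprimeIdeals (R : Type*) [CommRing R] (m : ℤ) : Submonoid (Ideal R) where
  carrier := {I | IsCoprime I (Ideal.span {(m : R)})}
  one_mem' := isCoprime_one_left
  mul_mem' h h' := IsCoprime.mul_left h h'

/-- Equivalence of ideals coprime to `m` up to elements which are rational units modulo `m`. -/
def ringClassCon (R : Type*) [CommRing R] (m : ℤ) : Con (coprimeIdeals R m) where
  r I J := ∃ α β : R, IsRationalUnitMod m α ∧ IsRationalUnitMod m β ∧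
    Ideal.span {α} * I.1 = Ideal.span {β} * J.1
  iseqv :=
    { refl := fun _ ↦ ⟨1, 1, .one, .one, rfl⟩
      symm := fun ⟨α, β, hα, hβ, h⟩ ↦ ⟨β, α, hβ, hα, h.symm⟩
      trans := by
        rintro I J L ⟨α, β, hα, hβ, h⟩ ⟨γ, δ, hγ, hδ, h'⟩
        refine ⟨γ * α, β * δ, hγ.mul hα, hβ.mul hδ, ?_⟩
        rw [← Ideal.span_singleton_mul_span_singleton, ← Ideal.span_singleton_mul_span_singleton,
          mul_assoc, h, mul_left_comm, h', mul_assoc] }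
  mul' := by
    rintro I J L M ⟨α, β, hα, hβ, h⟩ ⟨γ, δ, hγ, hδ, h'⟩
    refine ⟨α * γ, β * δ, hα.mul hγ, hβ.mul hδ, ?_⟩
    rw [← Ideal.span_singleton_mul_span_singleton, ← Ideal.span_singleton_mul_span_singleton,
      Submonoid.coe_mul, Submonoid.coe_mul, mul_mul_mul_comm, h, h', mul_mul_mul_comm]

theorem zero_notMem_coprimeIdeals {m : ℤ} (hmu : ¬ IsUnit (m : R)) :
    (0 : Ideal R) ∉ coprimeIdeals R m := by
  intro h
  have h : IsCoprime (0 : Ideal R) (Ideal.span {(m : R)}) := h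
  rw [isCoprime_zero_left, Ideal.isUnit_iff, Ideal.span_singleton_eq_top] at h
  exact hmu h

theorem isCoprime_absNorm_of_isCoprime [Module.Free ℤ R] [Module.Finite ℤ R] {m : ℤ}
    {I : Ideal R} (hI : I ≠ 0) (h : IsCoprime I (Ideal.span {(m : R)})) :
    IsCoprime (Ideal.absNorm I : ℤ) m := by
  rw [Int.isCoprime_iff_gcd_eq_one]
  by_contra hne
  obtain ⟨p, hp, hpd⟩ := Nat.exists_prime_and_dvd hne
  have hpn : p ∣ Ideal.absNorm I := Int.natCast_dvd_natCast.1
    ((Int.natCast_dvd_natCast.2 hpd).trans (Int.gcd_dvd_left _ _))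
  obtain ⟨c, hc⟩ : (p : ℤ) ∣ m := (Int.natCast_dvd_natCast.2 hpd).trans (Int.gcd_dvd_right _ _)
  rw [Ideal.isCoprime_iff_exists] at h
  obtain ⟨i, hi, j, hj, hij⟩ := h
  obtain ⟨d, rfl⟩ := Ideal.mem_span_singleton.1 hj
  have : Fact p.Prime := ⟨hp⟩
  rw [Ideal.absNorm_apply, Submodule.cardQuot_apply] at hpn
  have : Finite (R ⧸ I) := I.finiteQuotientOfFreeOfNeBot hI
  obtain ⟨x, hx⟩ := exists_prime_addOrderOf_dvd_card' (G := R ⧸ I) p hpn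
  have hpx : (p : R ⧸ I) * x = 0 := by
    rw [← nsmul_eq_mul, ← hx, addOrderOf_nsmul_eq_zero]
  have h1 : (1 : R ⧸ I) = p * (c * Ideal.Quotient.mk I d) := by
    have := congrArg (Ideal.Quotient.mk I) hij
    rw [map_add, Ideal.Quotient.eq_zero_iff_mem.2 hi, zero_add, map_one, hc] at this
    rw [← this]
    push_cast
    simp [mul_assoc]
  have hx0 : x = 0 := by
    calc x = 1 * x := (one_mul x).symm
      _ = (p * x) * (c * Ideal.Quotient.mk I d) := by rw [h1]; ring
      _ = 0 := by rw [hpx, zero_mul]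
  rw [hx0, addOrderOf_zero] at hx
  exact hp.one_lt.ne hx

theorem exists_ringClass_inv [Module.Free ℤ R] [Module.Finite ℤ R] {m : ℤ}
    (hmu : ¬ IsUnit (m : R)) (x : (ringClassCon R m).Quotient) : ∃ y, y * x = 1 := by
  induction x using Con.induction_on with
  | H I =>
  obtain ⟨I, hI⟩ := I
  have hI0 : I ≠ 0 := fun h ↦ zero_notMem_coprimeIdeals hmu (h ▸ hI)
  obtain ⟨J, hJ⟩ := Ideal.dvd_span_singleton.2 (Ideal.absNorm_mem I)
  have hn : IsRationalUnitMod m (Ideal.absNorm I : R) := by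
    simpa using IsRationalUnitMod.intCast (R := R) (isCoprime_absNorm_of_isCoprime hI0 hI)
  have hJ' : J ∈ coprimeIdeals R m := hn.isCoprime_span.of_isCoprime_of_dvd_left
      ⟨I, by rw [hJ, mul_comm]⟩
  refine ⟨((⟨J, hJ'⟩ : coprimeIdeals R m) : (ringClassCon R m).Quotient), ?_⟩
  rw [← Con.coe_mul, ← Con.coe_one, Con.eq]
  refine ⟨1, _, .one, hn, ?_⟩
  rw [hJ]
  simp [mul_comm]

theorem exists_ringClass_hom {R : Type u} [CommRing R] [IsDedekindDomain R] [Module.Free ℤ R]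
    [Module.Finite ℤ R] [CharZero R] {m : ℤ}
    (hmu : ¬ IsUnit (m : R)) :
    ∃ (G : Type u) (_ : CommGroup G) (cl : Ideal R →*₀ WithZero G),
      (∀ g : G, ∃ I, cl I = g) ∧ (∀ I, cl I ≠ 0 ↔ IsCoprime I (Ideal.span {(m : R)})) ∧
      ∀ I J, cl I ≠ 0 → cl J ≠ 0 → (cl I * cl J = 1 ↔
        ∃ γ : R, IsRationalUnitMod m γ ∧ I * J = Ideal.span {γ}) := by
  classical
  let G := (ringClassCon R m).Quotient
  let inst : CommGroup G :=
    { (inferInstance : CommMonoid (ringClassCon R m).Quotient) with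
      inv := fun x ↦ (exists_ringClass_inv hmu x).choose
      inv_mul_cancel := fun x ↦ (exists_ringClass_inv hmu x).choose_spec }
  have h0 := zero_notMem_coprimeIdeals hmu
  have hmul : ∀ I J : Ideal R, I * J ∈ coprimeIdeals R m ↔
      I ∈ coprimeIdeals R m ∧ J ∈ coprimeIdeals R m := fun I J ↦ IsCoprime.mul_left_iff
  let cl : Ideal R →*₀ WithZero G :=
    { toFun := fun I ↦ if h : I ∈ coprimeIdeals R m then
        (((⟨I, h⟩ : coprimeIdeals R m) : (ringClassCon R m).Quotient) : WithZero G) else 0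
      map_zero' := dif_neg h0
      map_one' := dif_pos (one_mem _)
      map_mul' := by
        intro I J
        by_cases hI : I ∈ coprimeIdeals R m
        · by_cases hJ : J ∈ coprimeIdeals R m
          · rw [dif_pos hI, dif_pos hJ, dif_pos ((hmul I J).2 ⟨hI, hJ⟩)]
            rfl
          · rw [dif_neg hJ, mul_zero, dif_neg]
            exact fun h ↦ hJ ((hmul I J).1 h).2
        · rw [dif_neg hI, zero_mul, dif_neg]
          exact fun h ↦ hI ((hmul I J).1 h).1 }
  have hcl : ∀ I (h : I ∈ coprimeIdeals R m), cl I =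
    (((⟨I, h⟩ : coprimeIdeals R m) : (ringClassCon R m).Quotient) : WithZero G) :=
    fun I h ↦ dif_pos h
  have hcl0 : ∀ I, cl I ≠ 0 ↔ I ∈ coprimeIdeals R m := by
    intro I
    by_cases h : I ∈ coprimeIdeals R m
    · rw [hcl I h]
      simp [h]
    · simp only [h, iff_false, not_not]
      exact dif_neg h
  refine ⟨G, inst, cl, ?_, hcl0, ?_⟩
  · intro g
    induction g using Con.induction_on with
    | H I => exact ⟨I.1, hcl I.1 I.2⟩
  · intro I J hI hJ
    have hIJ : I * J ∈ coprimeIdeals R m := (hmul I J).2 ⟨(hcl0 I).1 hI, (hcl0 J).1 hJ⟩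
    rw [← map_mul, hcl _ hIJ, ← WithZero.coe_one, WithZero.coe_inj]
    have h1 : (1 : G) = ((1 : coprimeIdeals R m) : (ringClassCon R m).Quotient) := rfl
    rw [h1, Con.eq]
    constructor
    · rintro ⟨α, β, hα, hβ, h⟩
      have hα0 : Ideal.span {α} ≠ 0 := by
        intro h2
        exact h0 (h2 ▸ hα.isCoprime_span)
      rw [Submonoid.coe_one, mul_one] at h
      obtain ⟨γ, rfl⟩ : α ∣ β := Ideal.mem_span_singleton.1
        (Ideal.mul_le_left (J := I * J) (h.ge (Ideal.mem_span_singleton_self β)))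
      refine ⟨γ, hα.of_mul_left hβ, ?_⟩
      rw [← Ideal.span_singleton_mul_span_singleton] at h
      exact mul_left_cancel₀ hα0 h
    · rintro ⟨γ, hγ, h⟩
      refine ⟨1, γ, .one, hγ, ?_⟩
      simpa using h

end

section
open MeasureTheory
open scoped Pointwise

/-- The norm `√(x² + a y²)` on the plane. -/
noncomputable def ellipticNorm (a : ℕ) (v : ℝ × ℝ) : ℝ := ‖(⟨v.1, √a * v.2⟩ : ℂ)‖

variable {a : ℕ}

theorem ellipticNorm_add_le (v w : ℝ × ℝ) :
    ellipticNorm a (v + w) ≤ ellipticNorm a v + ellipticNorm a w := by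
  refine le_of_eq_of_le ?_ (norm_add_le _ _)
  rw [ellipticNorm]
  congr 1
  apply Complex.ext <;> simp
  ring

theorem ellipticNorm_smul (c : ℝ) (v : ℝ × ℝ) : ellipticNorm a (c • v) =
    |c| * ellipticNorm a v := by
  rw [ellipticNorm, ellipticNorm, ← Real.norm_eq_abs, ← Complex.norm_real c, ← norm_mul]
  congr 1
  apply Complex.ext <;> simp
  ring

theorem ellipticNorm_neg (v : ℝ × ℝ) : ellipticNorm a (-v) = ellipticNorm a v := by
  simpa using ellipticNorm_smul (a := a) (-1) v

theorem ellipticNorm_nonneg (v : ℝ × ℝ) : 0 ≤ ellipticNorm a v := norm_nonneg _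

theorem ellipticNorm_sq (v : ℝ × ℝ) : ellipticNorm a v ^ 2 = v.1 ^ 2 + a * v.2 ^ 2 := by
  rw [ellipticNorm, Complex.sq_norm, Complex.normSq_mk, mul_mul_mul_comm,
    Real.mul_self_sqrt (Nat.cast_nonneg a)]
  ring

theorem abs_fst_le_ellipticNorm (v : ℝ × ℝ) : |v.1| ≤ ellipticNorm a v := by
  refine abs_le_of_sq_le_sq' ?_ (ellipticNorm_nonneg v) |> abs_le.2
  rw [ellipticNorm_sq]
  nlinarith [mul_nonneg (Nat.cast_nonneg (α := ℝ) a) (sq_nonneg v.2)]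

theorem abs_snd_le_ellipticNorm (ha : 1 ≤ a) (v : ℝ × ℝ) : |v.2| ≤ ellipticNorm a v := by
  refine abs_le_of_sq_le_sq' ?_ (ellipticNorm_nonneg v) |> abs_le.2
  rw [ellipticNorm_sq]
  have : (1 : ℝ) ≤ a := by exact_mod_cast ha
  nlinarith [mul_nonneg (sub_nonneg.2 this) (sq_nonneg v.2), sq_nonneg v.1]

theorem continuous_ellipticNorm : Continuous (ellipticNorm a) := by
  have : ellipticNorm a = fun v : ℝ × ℝ ↦ ‖(v.1 : ℂ) + (√a * v.2 : ℝ) * Complex.I‖ := by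
    funext v
    rw [ellipticNorm]
    congr 1
    apply Complex.ext <;> simp
  rw [this]
  fun_prop

/-- The embedding of the integral lattice into the plane. -/
def intPoint : ℤ × ℤ →+ ℝ × ℝ := (Int.castAddHom ℝ).prodMap (Int.castAddHom ℝ)

@[simp] theorem intPoint_apply (w : ℤ × ℤ) : intPoint w = ((w.1 : ℝ), (w.2 : ℝ)) := rfl

theorem finite_ellipticNorm_le (ha : 1 ≤ a) (r : ℝ) :
    {w : ℤ × ℤ | ellipticNorm a (intPoint w) ≤ r}.Finite := by
  refine ((Set.finite_Icc (-⌈r⌉) ⌈r⌉).prod (Set.finite_Icc (-⌈r⌉) ⌈r⌉)).subset ?_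
  rintro ⟨x, y⟩ h
  have h1 : |(x : ℝ)| ≤ r := (abs_fst_le_ellipticNorm (a := a) (intPoint (x, y))).trans h
  have h2 : |(y : ℝ)| ≤ r := (abs_snd_le_ellipticNorm ha (intPoint (x, y))).trans h
  have h3 : ∀ z : ℤ, |(z : ℝ)| ≤ r → z ∈ Set.Icc (-⌈r⌉) ⌈r⌉ := by
    intro z hz
    rw [Set.mem_Icc, ← abs_le]
    exact_mod_cast hz.trans (Int.le_ceil r)
  exact ⟨h3 x h1, h3 y h2⟩

/-- The unit cell with lower left corner `w`. -/
def unitCell (w : ℤ × ℤ) : Set (ℝ × ℝ) := Set.Ico (w.1 : ℝ) (w.1 + 1) ×ˢ Set.Ico (w.2 : ℝ) (w.2 + 1)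

theorem volume_unitCell (w : ℤ × ℤ) : volume (unitCell w) = 1 := by
  rw [unitCell, Measure.volume_eq_prod, Measure.prod_prod]
  simp

theorem mem_unitCell {w : ℤ × ℤ} {v : ℝ × ℝ} : v ∈ unitCell w ↔ (⌊v.1⌋, ⌊v.2⌋) = w := by
  rw [unitCell, Set.mem_prod, Set.mem_Ico, Set.mem_Ico, Prod.ext_iff, Int.floor_eq_iff,
    Int.floor_eq_iff]

theorem ellipticNorm_sub_le_of_mem_unitCell {w : ℤ × ℤ} {v : ℝ × ℝ} (h : v ∈ unitCell w) :
    ellipticNorm a (v - intPoint w) ≤ 1 + a := by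
  refine abs_le_of_sq_le_sq' ?_ (by positivity) |>.2
  rw [ellipticNorm_sq]
  obtain ⟨⟨h1, h2⟩, h3, h4⟩ := h
  have h5 : (v - intPoint w).1 ^ 2 ≤ 1 := by
    simp only [Prod.fst_sub, intPoint_apply]
    nlinarith
  have h6 : (v - intPoint w).2 ^ 2 ≤ 1 := by
    simp only [Prod.snd_sub, intPoint_apply]
    nlinarith
  nlinarith [mul_le_mul_of_nonneg_left h6 (Nat.cast_nonneg (α := ℝ) a), Nat.cast_nonneg (α := ℝ) a]

theorem exists_card_ellipticNorm_le (ha : 1 ≤ a) : ∃ κ > 0, ∃ C : ℝ, ∀ r : ℝ, 0 ≤ r →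
    |(Nat.card {w : ℤ × ℤ // ellipticNorm a (intPoint w) ≤ r} : ℝ) - κ * r ^ 2| ≤ C * (r + 1) := by
  set E : ℝ → Set (ℝ × ℝ) := fun r ↦ {v | ellipticNorm a v ≤ r} with hE
  have hscale : ∀ r > 0, E r = r • E 1 := by
    intro r hr
    ext v
    rw [Set.mem_smul_set_iff_inv_smul_mem₀ hr.ne']
    simp only [hE, Set.mem_ofPred_eq]
    rw [ellipticNorm_smul, abs_of_pos (inv_pos.2 hr), inv_mul_le_iff₀ hr, mul_one]
  have hbdd : E 1 ⊆ Metric.closedBall 0 1 := by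
    intro v hv
    rw [Metric.mem_closedBall, dist_zero_right, Prod.norm_def]
    exact max_le ((abs_fst_le_ellipticNorm v).trans hv) ((abs_snd_le_ellipticNorm ha v).trans hv)
  have hfin1 : volume (E 1) ≠ ⊤ := measure_ne_top_of_subset hbdd measure_closedBall_lt_top.ne
  have hvol' : ∀ r > 0, volume (E r) = ENNReal.ofReal (r ^ 2) * volume (E 1) := by
    intro r hr
    rw [hscale r hr, Measure.addHaar_smul, Module.finrank_prod, Module.finrank_self,
      abs_of_pos (by positivity)]
  have hvol : ∀ r > 0, volume.real (E r) = volume.real (E 1) * r ^ 2 := by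
    intro r hr
    rw [measureReal_def, hvol' r hr, ENNReal.toReal_mul, ENNReal.toReal_ofReal (by positivity),
      mul_comm, measureReal_def]
  have hpos : 0 < volume.real (E 1) := by
    refine ENNReal.toReal_pos (ne_of_gt ?_) hfin1
    have hopen : IsOpen {v : ℝ × ℝ | ellipticNorm a v < 1} :=
      isOpen_lt continuous_ellipticNorm continuous_const
    refine (hopen.measure_pos volume ⟨0, ?_⟩).trans_le (measure_mono fun v hv ↦ ?_)
    · have := ellipticNorm_smul (a := a) 0 0
      rw [zero_smul, abs_zero, zero_mul] at this
      rw [Set.mem_ofPred_eq, this]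
      exact one_pos
    · rw [Set.mem_ofPred_eq] at hv
      exact hv.le
  have hfin : ∀ r > 0, volume (E r) ≠ ⊤ := by
    intro r hr
    rw [hvol' r hr]
    exact ENNReal.mul_ne_top ENNReal.ofReal_ne_top hfin1
  set c : ℝ := 1 + a with hc
  have hc1 : 1 ≤ c := by rw [hc]; linarith [Nat.cast_nonneg (α := ℝ) a]
  have hcard : ∀ r, volume (⋃ w ∈ {w : ℤ × ℤ | ellipticNorm a (intPoint w) ≤ r}, unitCell w) =
      Nat.card {w : ℤ × ℤ // ellipticNorm a (intPoint w) ≤ r} := by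
    intro r
    have hf := finite_ellipticNorm_le ha r
    have : {w : ℤ × ℤ | ellipticNorm a (intPoint w) ≤ r} = hf.toFinset := hf.coe_toFinset.symm
    rw [this]
    simp only [Finset.mem_coe]
    rw [measure_biUnion_finset]
    · simp only [volume_unitCell, Finset.sum_const, nsmul_eq_mul, mul_one]
      rw [← Nat.card_eq_finsetCard]
      congr 1
      exact Nat.card_congr (Equiv.subtypeEquivRight fun w ↦ by simp)
    · intro w _ w' _ hne
      rw [Function.onFun, Set.disjoint_left]
      intro v hv hv'
      rw [mem_unitCell] at hv hv'
      exact hne (hv.symm.trans hv')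
    · exact fun w _ ↦ measurableSet_Ico.prod measurableSet_Ico
  have hcard' : ∀ r, (Nat.card {w : ℤ × ℤ // ellipticNorm a (intPoint w) ≤ r} : ℝ) =
      volume.real (⋃ w ∈ {w : ℤ × ℤ | ellipticNorm a (intPoint w) ≤ r}, unitCell w) := by
    intro r
    rw [measureReal_def, hcard, ENNReal.toReal_natCast]
  have hupper : ∀ r ≥ 0, (Nat.card {w : ℤ × ℤ // ellipticNorm a (intPoint w) ≤ r} : ℝ) ≤
      volume.real (E (r + c)) := by
    intro r hr
    rw [hcard']
    refine measureReal_mono ?_ (hfin _ (by linarith))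
    intro v hv
    simp only [Set.mem_iUnion] at hv
    obtain ⟨w, hw, hv⟩ := hv
    have := ellipticNorm_add_le (a := a) (intPoint w) (v - intPoint w)
    rw [add_sub_cancel] at this
    exact this.trans (add_le_add hw (ellipticNorm_sub_le_of_mem_unitCell hv))
  have hlower : ∀ r, volume.real (E (r - c)) ≤
      (Nat.card {w : ℤ × ℤ // ellipticNorm a (intPoint w) ≤ r} : ℝ) := by
    intro r
    rw [hcard']
    refine measureReal_mono ?_ (by rw [hcard]; exact ENNReal.natCast_ne_top _)
    intro v hv
    have hv : ellipticNorm a v ≤ r - c := hv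
    simp only [Set.mem_iUnion]
    have hcell : v ∈ unitCell (⌊v.1⌋, ⌊v.2⌋) := mem_unitCell.2 rfl
    refine ⟨(⌊v.1⌋, ⌊v.2⌋), ?_, hcell⟩
    have := ellipticNorm_add_le (a := a) v (-(v - intPoint (⌊v.1⌋, ⌊v.2⌋)))
    rw [ellipticNorm_neg, neg_sub, add_sub_cancel] at this
    have h2 := ellipticNorm_sub_le_of_mem_unitCell (a := a) hcell
    rw [Set.mem_ofPred_eq]
    linarith
  refine ⟨volume.real (E 1), hpos, volume.real (E 1) * (2 * c + c ^ 2), fun r hr ↦ ?_⟩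
  have h1 := hupper r hr
  rw [hvol _ (by linarith)] at h1
  have h3 := mul_nonneg hpos.le hr
  have h4 := mul_nonneg h3 (sq_nonneg c)
  rw [abs_le]
  constructor
  · rcases lt_or_ge c r with h | h
    · have h2 := hlower r
      rw [hvol _ (by linarith)] at h2
      nlinarith [mul_nonneg hpos.le (sq_nonneg c)]
    · have h2 : (0 : ℝ) ≤ Nat.card {w : ℤ × ℤ // ellipticNorm a (intPoint w) ≤ r} :=
        Nat.cast_nonneg _
      nlinarith [mul_nonneg hpos.le (sq_nonneg c), mul_nonneg h3 (sub_nonneg.2 h), mul_nonneg h3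
          (zero_le_one.trans hc1)]
  · nlinarith [mul_nonneg hpos.le (sq_nonneg c), mul_nonneg hpos.le (zero_le_one.trans hc1)]

theorem exists_card_coset_ellipticNorm_le (ha : 1 ≤ a) : ∃ κ > 0, ∀ L : AddSubgroup (ℤ × ℤ),
    L.FiniteIndex → ∃ C : ℝ, ∀ c : (ℤ × ℤ) ⧸ L, ∀ r : ℝ, 0 ≤ r →
    |(Nat.card {w : ℤ × ℤ // (w : (ℤ × ℤ) ⧸ L) = c ∧ ellipticNorm a (intPoint w) ≤ r} : ℝ) -
      κ / L.index * r ^ 2| ≤ C * (r + 1) := by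
  classical
  obtain ⟨κ, hκ, C, hC⟩ := exists_card_ellipticNorm_le ha
  refine ⟨κ, hκ, fun L hL ↦ ?_⟩
  set Nc : (ℤ × ℤ) ⧸ L → ℝ → ℕ := fun c r ↦
    Nat.card {w : ℤ × ℤ // (w : (ℤ × ℤ) ⧸ L) = c ∧ ellipticNorm a (intPoint w) ≤ r} with hNc
  have hfin : ∀ c r, Finite {w : ℤ × ℤ // (w : (ℤ × ℤ) ⧸ L) = c ∧ ellipticNorm a (intPoint w) ≤
      r} :=
    fun c r ↦ ((finite_ellipticNorm_le ha r).subset fun w hw ↦ hw.2).to_subtype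
  have : Fintype ((ℤ × ℤ) ⧸ L) := Fintype.ofFinite _
  have hsum : ∀ r, ∑ c, Nc c r = Nat.card {w : ℤ × ℤ // ellipticNorm a (intPoint w) ≤ r} := by
    intro r
    simp only [hNc]
    rw [← Nat.card_sigma]
    exact Nat.card_congr
      { toFun := fun x ↦ ⟨x.2.1, x.2.2.2⟩
        invFun := fun w ↦ ⟨w.1, w.1, rfl, w.2⟩
        left_inv := by rintro ⟨_, w, rfl, h⟩; rfl
        right_inv := fun w ↦ rfl }
  obtain ⟨D, hD⟩ : ∃ D : ℝ, ∀ c : (ℤ × ℤ) ⧸ L, ellipticNorm a (intPoint c.out) ≤ D := by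
    obtain ⟨D, hD⟩ := (Set.finite_range fun c : (ℤ × ℤ) ⧸ L ↦
      ellipticNorm a (intPoint c.out)).bddAbove
    exact ⟨D, fun c ↦ hD ⟨c, rfl⟩⟩
  have hD0 : 0 ≤ D := (ellipticNorm_nonneg _).trans (hD 0)
  have htrans : ∀ c c' r, Nc c r ≤ Nc c' (r + D) := by
    intro c c' r
    have := hfin c' (r + D)
    refine Nat.card_le_card_of_injective (fun w ↦ ⟨w.1 + (c' - c).out, ?_, ?_⟩) ?_
    · rw [QuotientAddGroup.mk_add, QuotientAddGroup.out_eq', w.2.1, add_sub_cancel]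
    · rw [map_add]
      exact (ellipticNorm_add_le _ _).trans (add_le_add w.2.2 (hD _))
    · intro w w' h
      exact Subtype.ext (add_right_cancel (congrArg Subtype.val h))
  have hq : (Fintype.card ((ℤ × ℤ) ⧸ L) : ℝ) = L.index := by
    rw [← Nat.card_eq_fintype_card]; rfl
  have hq0 : (0 : ℝ) < L.index := by
    rw [← hq]; exact_mod_cast Fintype.card_pos
  have hupper : ∀ c r, (L.index : ℝ) * Nc c r ≤
      Nat.card {w : ℤ × ℤ // ellipticNorm a (intPoint w) ≤ r + D} := by
    intro c r
    rw [← hsum, ← hq, ← Finset.card_univ, ← nsmul_eq_mul, Nat.cast_sum]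
    exact Finset.card_nsmul_le_sum _ _ _ fun c' _ ↦ by exact_mod_cast htrans c c' r
  have hlower : ∀ c r, (Nat.card {w : ℤ × ℤ // ellipticNorm a (intPoint w) ≤ r - D} : ℝ) ≤
      (L.index : ℝ) * Nc c r := by
    intro c r
    rw [← hsum, ← hq, ← Finset.card_univ, ← nsmul_eq_mul, Nat.cast_sum]
    refine Finset.sum_le_card_nsmul _ _ _ fun c' _ ↦ ?_
    have := htrans c' c (r - D)
    rw [sub_add_cancel] at this
    exact_mod_cast this
  have hC0 : 0 ≤ C := by
    have := (abs_nonneg _).trans (hC 0 le_rfl)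
    linarith
  refine ⟨(C * (1 + D) + κ * (2 * D + D ^ 2)) / L.index, fun c r hr ↦ ?_⟩
  have h1 := hupper c r
  have h2 := hlower c r
  have h3 := (abs_le.1 (hC (r + D) (by linarith))).2
  have key : |(L.index : ℝ) * Nc c r - κ * r ^ 2| ≤ (C * (1 + D) + κ * (2 * D + D ^ 2)) *
      (r + 1) := by
    have e1 := mul_nonneg hκ.le hr
    have e2 := mul_nonneg hκ.le hD0
    have e3 := mul_nonneg e2 hr
    have e4 := mul_nonneg e3 hD0
    have e5 := mul_nonneg hC0 hr
    have e6 := mul_nonneg hC0 hD0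
    have e7 := mul_nonneg e6 hr
    have e8 := mul_nonneg e2 hD0
    rw [abs_le]
    constructor
    · rcases le_or_gt D r with h | h
      · have h4 := (abs_le.1 (hC (r - D) (by linarith))).1
        nlinarith
      · have h5 : (0 : ℝ) ≤ L.index * Nc c r := by positivity
        nlinarith [mul_nonneg e1 (sub_nonneg.2 h.le)]
    · nlinarith
  have : (Nc c r : ℝ) - κ / L.index * r ^ 2 = (L.index * Nc c r - κ * r ^ 2) / L.index := by
    field_simp
  rw [this, abs_div, abs_of_pos hq0, div_mul_eq_mul_div]
  exact div_le_div_of_nonneg_right key hq0.le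

end

section
open Filter Asymptotics

variable {R : Type*} [CommRing R]

/-- The map `(x, y) ↦ x + y θ`. -/
def quadHom (θ : R) : ℤ × ℤ →+ R where
  toFun w := w.1 + w.2 * θ
  map_zero' := by simp
  map_add' v w := by simp; ring

theorem quadHom_apply (θ : R) (w : ℤ × ℤ) : quadHom θ w = w.1 + w.2 * θ := rfl

theorem sub_mul_mem_span_mul_iff {m e t : R} {J : Ideal R} (heJ : e ∈ J) (he : e = 1 - m * t)
    (α k : R) : α - e * k ∈ Ideal.span {m} * J ↔ α ∈ J ∧ m ∣ α - k := by
  rw [Ideal.mem_span_singleton_mul]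
  constructor
  · rintro ⟨j, hj, hα⟩
    refine ⟨?_, j - t * k, by linear_combination k * he - hα⟩
    rw [show α = m * j + e * k by rw [hα]; ring]
    exact J.add_mem (J.mul_mem_left _ hj) (J.mul_mem_right _ heJ)
  · rintro ⟨hα, b, hb⟩
    refine ⟨t * α + b * e, J.add_mem (J.mul_mem_left _ hα) (J.mul_mem_left _ heJ), ?_⟩
    linear_combination α * he - e * hb

variable [IsDedekindDomain R] [Module.Free ℤ R] [Module.Finite ℤ R] [CharZero R]

/-- `R` contains an element `θ` such that the norm of `x + y θ` is `x² + a y²`, and `m` is a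
nonunit which multiplies `R` into `ℤ[θ]`. -/
structure IsQuadraticData (a m : ℕ) (θ : R) : Prop where
  one_le : 1 ≤ a
  not_isUnit : ¬ IsUnit ((m : ℤ) : R)
  absNorm_eq : ∀ w : ℤ × ℤ, (Ideal.absNorm (Ideal.span {quadHom θ w}) : ℤ) = w.1 ^ 2 + a * w.2 ^ 2
  exists_eq : ∀ α : R, ∃ w : ℤ × ℤ, quadHom θ w = (m : ℤ) * α

namespace IsQuadraticData
variable {a m : ℕ} {θ : R}

theorem quadHom_injective (h : IsQuadraticData a m θ) : Function.Injective (quadHom θ) := by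
  rw [injective_iff_map_eq_zero]
  intro w hw
  have h1 := h.absNorm_eq w
  have ha : (1 : ℤ) ≤ a := by exact_mod_cast h.one_le
  rw [hw] at h1
  simp only [Ideal.span_singleton_eq_bot.2 rfl, Ideal.absNorm_bot, Nat.cast_zero] at h1
  have h2 : w.1 = 0 := by nlinarith [sq_nonneg w.2, sq_nonneg w.1]
  have h3 : w.2 = 0 := by nlinarith [sq_nonneg w.2, sq_nonneg w.1]
  exact Prod.ext h2 h3

theorem ellipticNorm_sq_eq (h : IsQuadraticData a m θ) (w : ℤ × ℤ) : ellipticNorm a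
    (intPoint w) ^ 2 =
    Ideal.absNorm (Ideal.span {quadHom θ w}) := by
  rw [ellipticNorm_sq]
  simp only [intPoint_apply]
  exact_mod_cast (h.absNorm_eq w).symm

theorem ellipticNorm_le_iff (h : IsQuadraticData a m θ) (w : ℤ × ℤ) (X : ℕ) : ellipticNorm a
    (intPoint w) ≤ √X ↔
    Ideal.absNorm (Ideal.span {quadHom θ w}) ≤ X := by
  rw [Real.le_sqrt (ellipticNorm_nonneg _), h.ellipticNorm_sq_eq, Nat.cast_le]
  exact Nat.cast_nonneg _

theorem intCast_dvd_iff (h : IsQuadraticData a m θ) {k : ℤ} : ((m : ℤ) : R) ∣ (k : R) ↔ (m : ℤ) ∣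
    k := by
  refine ⟨?_, fun ⟨c, hc⟩ ↦ ⟨c, by rw [hc]; push_cast; rfl⟩⟩
  rintro ⟨α, hα⟩
  have h1 := h.absNorm_eq (k, 0)
  have h2 := h.absNorm_eq (m, 0)
  simp only [quadHom_apply, Int.cast_zero, zero_mul, add_zero] at h1 h2
  rw [hα, ← Ideal.span_singleton_mul_span_singleton, map_mul, Nat.cast_mul, h2] at h1
  simp only [ne_eq, OfNat.ofNat_ne_zero, not_false_eq_true, zero_pow, mul_zero, add_zero] at h1
  exact (Int.pow_dvd_pow_iff two_ne_zero).1 ⟨_, h1.symm⟩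

theorem exists_quadHom_eq (h : IsQuadraticData a m θ) {α : R} (hα : IsRationalUnitMod m α) : ∃ w,
    quadHom θ w = α := by
  obtain ⟨k, -, c, hc⟩ := hα
  obtain ⟨w, hw⟩ := h.exists_eq c
  refine ⟨w + (k, 0), ?_⟩
  rw [map_add, hw, ← hc]
  simp [quadHom_apply]

/-- The lattice of pairs `w` with `quadHom θ w ∈ m J`. -/
def _root_.quadLattice (θ : R) (m : ℕ) (J : Ideal R) : AddSubgroup (ℤ × ℤ) :=
  (Ideal.span {((m : ℤ) : R)} * J).toAddSubgroup.comap (quadHom θ)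

theorem quadLattice_index (h : IsQuadraticData a m θ) (J : Ideal R) : (quadLattice θ m J).index *
    (quadHom θ).range.index =
    Ideal.absNorm (Ideal.span {((m : ℤ) : R)}) * Ideal.absNorm J := by
  rw [quadLattice, AddSubgroup.index_comap, AddSubgroup.relIndex_mul_index, ← map_mul]
  · rfl
  · intro α hα
    obtain ⟨β, hβ⟩ := Ideal.mem_span_singleton.1 (Ideal.mul_le_right (I := J)
        (by rwa [mul_comm] at hα))
    obtain ⟨w, hw⟩ := h.exists_eq β
    exact ⟨w, hw.trans hβ.symm⟩

theorem quadLattice_finiteIndex [NeZero m] (h : IsQuadraticData a m θ) {J : Ideal R} (hJ : J ≠ 0) :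
    (quadLattice θ m J).FiniteIndex := by
  constructor
  intro h0
  have := h.quadLattice_index J
  rw [h0, zero_mul, eq_comm, mul_eq_zero, Ideal.absNorm_eq_zero_iff, Ideal.absNorm_eq_zero_iff,
    Ideal.span_singleton_eq_bot] at this
  rcases this with h1 | h1
  · exact NeZero.ne m (by exact_mod_cast h1)
  · exact hJ h1

theorem card_mem_isRationalUnitMod [NeZero m] (h : IsQuadraticData a m θ)
    {J : Ideal R} (hJ : IsCoprime J (Ideal.span {((m : ℤ) : R)})) :
    ∃ c : (ZMod m)ˣ → (ℤ × ℤ) ⧸ quadLattice θ m J, ∀ X : ℕ,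
      Nat.card {α : R // (IsRationalUnitMod m α ∧ α ∈ J) ∧ Ideal.absNorm (Ideal.span {α}) ≤ X} =
      ∑ u, Nat.card {w : ℤ × ℤ // (w : (ℤ × ℤ) ⧸ quadLattice θ m J) = c u ∧
        ellipticNorm a (intPoint w) ≤ √X} := by
  have hJ0 : J ≠ 0 := fun h0 ↦ zero_notMem_coprimeIdeals h.not_isUnit (h0 ▸ hJ)
  obtain ⟨s, t, hst⟩ := isCoprime_absNorm_of_isCoprime hJ0 hJ
  set e : ℤ := s * Ideal.absNorm J with he
  have heJ : (e : R) ∈ J := by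
    rw [he]
    push_cast
    exact J.mul_mem_left _ (Ideal.absNorm_mem J)
  have he1 : (e : R) = 1 - (m : ℤ) * t := by
    have : e = 1 - m * t := by linarith
    rw [this]
    push_cast
    ring
  set k : (ZMod m)ˣ → ℤ := fun u ↦ ((u : ZMod m).val : ℤ) with hk
  set c : (ZMod m)ˣ → (ℤ × ℤ) ⧸ quadLattice θ m J := fun u ↦ ((e * k u, 0) : ℤ × ℤ) with hc
  have hmem : ∀ (w : ℤ × ℤ) u, (w : (ℤ × ℤ) ⧸ quadLattice θ m J) = c u ↔
      quadHom θ w - e * k u ∈ Ideal.span {((m : ℤ) : R)} * J := by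
    intro w u
    rw [eq_comm, hc, QuotientAddGroup.eq, quadLattice, AddSubgroup.mem_comap, map_add, map_neg]
    simp only [quadHom_apply, Int.cast_mul, Int.cast_zero, zero_mul, add_zero,
        Submodule.mem_toAddSubgroup]
    rw [neg_add_eq_sub]
  have hkc : ∀ u, IsCoprime (k u) m := by
    intro u
    rw [Int.isCoprime_iff_gcd_eq_one]
    exact_mod_cast ZMod.val_coe_unit_coprime u
  have hkz : ∀ u, (k u : ZMod m) = u := fun u ↦ by simp [hk]
  have huniq : ∀ l : ℤ, IsCoprime l m → ∃ u, (m : ℤ) ∣ l - k u := by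
    intro l hl
    refine ⟨ZMod.unitOfIsCoprime l hl, ?_⟩
    rw [← ZMod.intCast_eq_intCast_iff_dvd_sub, hkz]
    rfl
  have hinj : ∀ u v, (m : ℤ) ∣ k u - k v → u = v := by
    intro u v huv
    rw [← ZMod.intCast_eq_intCast_iff_dvd_sub, hkz, hkz] at huv
    exact Units.ext huv.symm
  have hmul : ∀ w u, quadHom θ w - e * k u ∈ Ideal.span {((m : ℤ) : R)} * J ↔
      quadHom θ w ∈ J ∧ ((m : ℤ) : R) ∣ quadHom θ w - k u :=
    fun w u ↦ sub_mul_mem_span_mul_iff heJ he1 _ _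
  refine ⟨c, fun X ↦ ?_⟩
  have hfin : ∀ u, Finite {w : ℤ × ℤ // (w : (ℤ × ℤ) ⧸ quadLattice θ m J) = c u ∧
      ellipticNorm a (intPoint w) ≤ √X} :=
    fun u ↦ ((finite_ellipticNorm_le h.one_le _).subset fun w hw ↦ hw.2).to_subtype
  rw [← Nat.card_sigma]
  symm
  refine Nat.card_congr
      (Equiv.ofBijective (fun x ↦ ⟨quadHom θ x.2.1, ⟨⟨k x.1, hkc x.1, ?_⟩, ?_⟩, ?_⟩)
    ⟨?_, ?_⟩)
  · exact ((hmul _ _).1 ((hmem _ _).1 x.2.2.1)).2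
  · exact ((hmul _ _).1 ((hmem _ _).1 x.2.2.1)).1
  · exact (h.ellipticNorm_le_iff _ _).1 x.2.2.2
  · rintro ⟨u, w, hw, hw'⟩ ⟨v, z, hz, hz'⟩ heq
    obtain rfl := h.quadHom_injective (congrArg Subtype.val heq)
    have h1 := ((hmul _ _).1 ((hmem _ _).1 hw)).2
    have h2 := ((hmul _ _).1 ((hmem _ _).1 hz)).2
    obtain rfl : u = v := by
      refine hinj u v (h.intCast_dvd_iff.1 ?_)
      have := dvd_sub h2 h1
      convert this using 1
      push_cast
      ring
    rfl
  · rintro ⟨α, ⟨hα, hαJ⟩, hX⟩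
    obtain ⟨w, rfl⟩ := h.exists_quadHom_eq hα
    obtain ⟨l, hl, hlα⟩ := hα
    obtain ⟨u, hu⟩ := huniq l hl
    refine ⟨⟨u, w, (hmem _ _).2 ((hmul _ _).2 ⟨hαJ, ?_⟩), (h.ellipticNorm_le_iff _ _).2 hX⟩, rfl⟩
    have := dvd_add hlα (h.intCast_dvd_iff.2 hu)
    convert this using 1
    push_cast
    ring

theorem finite_isRationalUnitMod_units (h : IsQuadraticData a m θ) :
    Finite {u : Rˣ // IsRationalUnitMod m (u : R)} := by
  have hfin := (finite_ellipticNorm_le h.one_le 1).to_subtype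
  choose! w hw using fun (α : R) (hα : IsRationalUnitMod m α) ↦ h.exists_quadHom_eq hα
  refine Finite.of_injective (β := {w : ℤ × ℤ | ellipticNorm a (intPoint w) ≤ 1})
    (fun u ↦ ⟨w u.1, ?_⟩) ?_
  · rw [Set.mem_ofPred_eq]
    have := h.ellipticNorm_le_iff (w u.1) 1
    rw [Nat.cast_one, Real.sqrt_one, hw _ u.2] at this
    rw [this, Ideal.span_singleton_eq_top.2 u.1.isUnit, Ideal.absNorm_top]
  · intro u v huv
    have h1 := congrArg (fun x ↦ quadHom θ x.1) huv
    simp only [hw _ u.2, hw _ v.2] at h1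
    exact Subtype.ext (Units.ext h1)

theorem card_mul_card_eq (h : IsQuadraticData a m θ) {G : Type*} [CommGroup G]
    {cl : Ideal R →*₀ WithZero G}
    (hcl0 : ∀ I, cl I ≠ 0 ↔ IsCoprime I (Ideal.span {((m : ℤ) : R)}))
    (hcl : ∀ I J, cl I ≠ 0 → cl J ≠ 0 → (cl I * cl J = 1 ↔
      ∃ γ : R, IsRationalUnitMod m γ ∧ I * J = Ideal.span {γ}))
    {g : G} {J : Ideal R} (hJ : cl J = (g⁻¹ : G)) (n : ℕ) :
    Nat.card {u : Rˣ // IsRationalUnitMod m (u : R)} *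
      Nat.card {I : Ideal R // cl I = g ∧ Ideal.absNorm I ≤ n} =
    Nat.card {α : R // (IsRationalUnitMod m α ∧ α ∈ J) ∧
      Ideal.absNorm (Ideal.span {α}) ≤ n * Ideal.absNorm J} := by
  have hJ0 : cl J ≠ 0 := by rw [hJ]; exact WithZero.coe_ne_zero
  have hJne : J ≠ 0 := by rintro rfl; exact hJ0 (map_zero cl)
  have hJpos : 0 < Ideal.absNorm J := Nat.pos_of_ne_zero (by rwa [Ne, Ideal.absNorm_eq_zero_iff])
  have hgen : ∀ I, cl I = g → ∃ γ : R, IsRationalUnitMod m γ ∧ I * J = Ideal.span {γ} := by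
    intro I hI
    refine (hcl I J (by rw [hI]; exact WithZero.coe_ne_zero) hJ0).1 ?_
    rw [hI, hJ, ← WithZero.coe_mul, mul_inv_cancel, WithZero.coe_one]
  choose! γ hγ hγJ using hgen
  rw [← Nat.card_prod]
  refine Nat.card_congr
      (Equiv.ofBijective (fun x ↦ ⟨x.1.1 * γ x.2.1, ⟨x.1.2.mul (hγ _ x.2.2.1), ?_⟩, ?_⟩)
    ⟨?_, ?_⟩)
  · refine J.mul_mem_left _ (Ideal.mul_le_right (I := x.2.1) ?_)
    rw [hγJ _ x.2.2.1]
    exact Ideal.mem_span_singleton_self _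
  · rw [Ideal.span_singleton_mul_left_unit x.1.1.isUnit, ← hγJ _ x.2.2.1, map_mul]
    exact Nat.mul_le_mul_right _ x.2.2.2
  · rintro ⟨u, I, hI, hI'⟩ ⟨v, I', hI2, hI2'⟩ heq
    have heq : (u.1 : R) * γ I = v.1 * γ I' := congrArg Subtype.val heq
    have h1 := congrArg (fun α ↦ Ideal.span {α}) heq
    simp only [Ideal.span_singleton_mul_left_unit u.1.isUnit,
      Ideal.span_singleton_mul_left_unit v.1.isUnit, ← hγJ _ hI, ← hγJ _ hI2] at h1
    obtain rfl := mul_right_cancel₀ hJne h1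
    have hγ0 : γ I ≠ 0 := by
      intro h0
      have := (hγ I hI).isCoprime_span
      rw [h0, Ideal.span_singleton_eq_bot.2 rfl] at this
      exact zero_notMem_coprimeIdeals h.not_isUnit this
    have := mul_right_cancel₀ hγ0 heq
    have : u = v := Subtype.ext (Units.ext this)
    rw [this]
  · rintro ⟨α, ⟨hα, hαJ⟩, hn⟩
    obtain ⟨I, hI⟩ := Ideal.dvd_span_singleton.2 hαJ
    rw [mul_comm] at hI
    have hI0 : cl I ≠ 0 := by
      have : cl (I * J) ≠ 0 := by
        rw [← hI, hcl0]
        exact hα.isCoprime_span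
      rw [map_mul] at this
      exact left_ne_zero_of_mul this
    have hIg : cl I = g := by
      have := (hcl I J hI0 hJ0).2 ⟨α, hα, hI.symm⟩
      rw [hJ, WithZero.coe_inv] at this
      exact (mul_inv_eq_one₀ WithZero.coe_ne_zero).1 this
    have hass : Associated (γ I) α := by
      rw [← Ideal.span_singleton_eq_span_singleton, ← hγJ I hIg, hI]
    obtain ⟨u, hu⟩ := hass
    have hug : IsRationalUnitMod m (u : R) := (hγ I hIg).of_mul_left (by rwa [hu])
    refine ⟨⟨⟨u, hug⟩, I, hIg, ?_⟩, ?_⟩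
    · rw [hI, map_mul] at hn
      exact Nat.le_of_mul_le_mul_right hn hJpos
    · exact Subtype.ext ((mul_comm _ _).trans hu)

theorem exists_card_class (h : IsQuadraticData a m θ) [NeZero m] {G : Type*} [CommGroup G]
    {cl : Ideal R →*₀ WithZero G} (hsurj : ∀ g : G, ∃ I, cl I = g)
    (hcl0 : ∀ I, cl I ≠ 0 ↔ IsCoprime I (Ideal.span {((m : ℤ) : R)}))
    (hcl : ∀ I J, cl I ≠ 0 → cl J ≠ 0 → (cl I * cl J = 1 ↔
      ∃ γ : R, IsRationalUnitMod m γ ∧ I * J = Ideal.span {γ})) :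
    ∃ κ > 0, ∀ g : G, (fun n : ℕ ↦
      (Nat.card {I : Ideal R // cl I = g ∧ Ideal.absNorm I ≤ n} : ℝ) - κ * n) =O[atTop]
      fun n : ℕ ↦ (n : ℝ) ^ (1 / 2 : ℝ) := by
  obtain ⟨κ, hκ, hC⟩ := exists_card_coset_ellipticNorm_le h.one_le
  have := h.finite_isRationalUnitMod_units
  have : Nonempty {u : Rˣ // IsRationalUnitMod m (u : R)} := ⟨1, .one⟩
  set W := Nat.card {u : Rˣ // IsRationalUnitMod m (u : R)} with hW
  have hWpos : (0 : ℝ) < W := by exact_mod_cast Nat.card_pos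
  set F := Fintype.card (ZMod m)ˣ with hF
  have hFpos : (0 : ℝ) < F := by exact_mod_cast Fintype.card_pos
  set q := (quadHom θ).range.index with hq
  set nm := Ideal.absNorm (Ideal.span {((m : ℤ) : R)}) with hnm
  have hnm0 : nm ≠ 0 := by
    rw [hnm, Ne, Ideal.absNorm_eq_zero_iff, Ideal.span_singleton_eq_bot]
    exact_mod_cast NeZero.ne m
  have hqpos : (0 : ℝ) < q := by
    have := h.quadLattice_index 1
    refine Nat.cast_pos.2 (Nat.pos_of_ne_zero fun h0 ↦ hnm0 ?_)
    rw [← hq, h0, mul_zero, map_one, mul_one] at this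
    exact this.symm
  have hnmpos : (0 : ℝ) < nm := by exact_mod_cast Nat.pos_of_ne_zero hnm0
  refine ⟨F * κ * q / (nm * W), by positivity, fun g ↦ ?_⟩
  obtain ⟨J, hJ⟩ := hsurj g⁻¹
  have hJ0 : cl J ≠ 0 := by rw [hJ]; exact WithZero.coe_ne_zero
  have hJne : J ≠ 0 := by rintro rfl; exact hJ0 (map_zero cl)
  have hJpos : (0 : ℝ) < Ideal.absNorm J := 
    Nat.cast_pos.2 (Nat.pos_of_ne_zero (by rwa [Ne, Ideal.absNorm_eq_zero_iff]))
  have hfi := h.quadLattice_finiteIndex hJne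
  obtain ⟨C, hC⟩ := hC _ hfi
  obtain ⟨c, hc⟩ := h.card_mem_isRationalUnitMod ((hcl0 J).1 hJ0)
  have hidx : ((quadLattice θ m J).index : ℝ) * q = nm * Ideal.absNorm J := by
    rw [← Nat.cast_mul, ← Nat.cast_mul, h.quadLattice_index J]
  have hC0 : 0 ≤ C := by
    have := (abs_nonneg _).trans (hC 0 0 le_rfl)
    linarith
  set S : ℝ := √(Ideal.absNorm J : ℝ)
  refine IsBigO.of_bound (F * C * (S + 1) / W) (eventually_atTop.2 ⟨1, fun n hn ↦ ?_⟩)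
  have hn1 : (1 : ℝ) ≤ √n := Real.one_le_sqrt.2 (by exact_mod_cast hn)
  have e1 := h.card_mul_card_eq hcl0 hcl hJ n
  rw [hc] at e1
  have e2 : (W : ℝ) * Nat.card {I : Ideal R // cl I = g ∧ Ideal.absNorm I ≤ n} -
      F * (κ / (quadLattice θ m J).index * (n * Ideal.absNorm J)) =
      ∑ u, ((Nat.card {w : ℤ × ℤ // (w : (ℤ × ℤ) ⧸ quadLattice θ m J) = c u ∧
        ellipticNorm a (intPoint w) ≤ √((n * Ideal.absNorm J : ℕ) : ℝ)} : ℝ) -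
        κ / (quadLattice θ m J).index * √((n * Ideal.absNorm J : ℕ) : ℝ) ^ 2) := by
    rw [Finset.sum_sub_distrib, ← Nat.cast_sum, ← e1, Finset.sum_const, Finset.card_univ,
      nsmul_eq_mul, Real.sq_sqrt (Nat.cast_nonneg _)]
    push_cast
    rfl
  have e3 : |(W : ℝ) * Nat.card {I : Ideal R // cl I = g ∧ Ideal.absNorm I ≤ n} -
      F * (κ / (quadLattice θ m J).index * (n * Ideal.absNorm J))| ≤ F * (C * (S + 1) * √n) := by
    rw [e2]
    refine (Finset.abs_sum_le_sum_abs _ _).trans ((Finset.sum_le_card_nsmul _ _ (C * (S + 1) * √n)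
      fun u _ ↦ ?_).trans_eq ?_)
    · refine (hC (c u) _ (Real.sqrt_nonneg _)).trans ?_
      rw [mul_assoc]
      refine mul_le_mul_of_nonneg_left ?_ hC0
      push_cast
      rw [Real.sqrt_mul (Nat.cast_nonneg _)]
      nlinarith
    · rw [Finset.card_univ, nsmul_eq_mul]
  have hix : (0 : ℝ) < (quadLattice θ m J).index := by
    have := hfi.index_ne_zero
    positivity
  have e4 : (Nat.card {I : Ideal R // cl I = g ∧ Ideal.absNorm I ≤ n} : ℝ) -
      F * κ * q / (nm * W) * n = (W * Nat.card {I : Ideal R // cl I = g ∧ Ideal.absNorm I ≤ n} -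
      F * (κ / (quadLattice θ m J).index * (n * Ideal.absNorm J))) / W := by
    have : (nm : ℝ) = (quadLattice θ m J).index * q / Ideal.absNorm J := by
      rw [hidx]; field_simp
    rw [this]
    field_simp
  rw [e4, norm_div, Real.norm_eq_abs, Real.norm_eq_abs, abs_of_pos hWpos, Real.norm_eq_abs,
    ← Real.sqrt_eq_rpow, abs_of_nonneg (Real.sqrt_nonneg _), div_mul_eq_mul_div _ (W : ℝ)]
  refine div_le_div_of_nonneg_right (e3.trans_eq ?_) hWpos.le
  ring
end IsQuadraticData

end

section
open Filter Asymptotics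

variable {R : Type*} [CommRing R] [IsDedekindDomain R] [Module.Free ℤ R] [Module.Finite ℤ R]
    [CharZero R]

theorem finite_of_card_class {G : Type*} [CommGroup G] (cl : Ideal R →*₀ WithZero G) {κ : ℝ}
    (hκ : 0 < κ) (hcount : ∀ g : G, (fun n : ℕ ↦
      (Nat.card {I : Ideal R // cl I = g ∧ Ideal.absNorm I ≤ n} : ℝ) - κ * n) =O[atTop]
      fun n : ℕ ↦ (n : ℝ) ^ (1 / 2 : ℝ)) {C : ℝ}
    (htot : ∀ᶠ n : ℕ in atTop, (Nat.card {I : Ideal R // Ideal.absNorm I ≤ n} : ℝ) ≤ C * n) :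
    Finite G := by
  by_contra hinf
  rw [not_finite_iff_infinite] at hinf
  obtain ⟨K, hK⟩ := exists_nat_gt (2 * C / κ)
  obtain ⟨s, hs⟩ := Infinite.exists_subset_card_eq G K
  have hhalf : ∀ g : G, ∀ᶠ n : ℕ in atTop, κ / 2 * n ≤
      (Nat.card {I : Ideal R // cl I = g ∧ Ideal.absNorm I ≤ n} : ℝ) := by
    intro g
    have h1 : (fun n : ℕ ↦ (n : ℝ) ^ (1 / 2 : ℝ)) =o[atTop] fun n : ℕ ↦ (n : ℝ) := by
      refine isLittleO_of_tendsto (fun n hn ↦ by rw [hn, Real.zero_rpow (by norm_num)]) ?_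
      refine ((tendsto_rpow_neg_atTop (show (0 : ℝ) < 1 / 2 by norm_num)).comp
        tendsto_natCast_atTop_atTop).congr' ?_
      filter_upwards [eventually_gt_atTop 0] with n hn
      have hn : (0 : ℝ) < n := Nat.cast_pos.2 hn
      rw [Function.comp_apply, show (-(1 / 2) : ℝ) = 1 / 2 - 1 by norm_num,
          Real.rpow_sub_one hn.ne']
    filter_upwards [((hcount g).trans_isLittleO h1).bound (half_pos hκ)] with n hn
    rw [Real.norm_eq_abs, Real.norm_eq_abs, Nat.abs_cast] at hn
    linarith [(abs_le.1 hn).1]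
  have hall := (eventually_all_finset s).2 fun g _ ↦ hhalf g
  obtain ⟨n, hn1, hn2, hn3⟩ := (hall.and (htot.and (eventually_ge_atTop 1))).exists
  have hfin : Finite {I : Ideal R // Ideal.absNorm I ≤ n} :=
    (Ideal.finite_setOfPred_absNorm_le (S := R) n).to_subtype
  have hfin' : ∀ g : G, Finite {I : Ideal R // cl I = g ∧ Ideal.absNorm I ≤ n} := fun g ↦
    Finite.of_injective (β := {I : Ideal R // Ideal.absNorm I ≤ n}) (fun I ↦ ⟨I.1, I.2.2⟩)
      fun I J h ↦ Subtype.ext (by simpa using h)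
  have hle : ∑ g ∈ s, Nat.card {I : Ideal R // cl I = g ∧ Ideal.absNorm I ≤ n} ≤
      Nat.card {I : Ideal R // Ideal.absNorm I ≤ n} := by
    rw [← Finset.sum_coe_sort, ← Nat.card_sigma]
    refine Nat.card_le_card_of_injective (fun x ↦ ⟨x.2.1, x.2.2.2⟩) ?_
    rintro ⟨⟨g, hg⟩, I, hI, hI'⟩ ⟨⟨g', hg'⟩, J, hJ, hJ'⟩ h
    obtain rfl : I = J := congrArg Subtype.val h
    obtain rfl : g = g' := WithZero.coe_inj.1 (hI.symm.trans hJ)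
    rfl
  have h3 : (K : ℝ) * (κ / 2 * n) ≤ C * n := by
    rw [← hs, ← nsmul_eq_mul]
    refine (Finset.card_nsmul_le_sum s _ _ hn1).trans (le_trans ?_ hn2)
    exact_mod_cast hle
  have hn0 : (0 : ℝ) < n := by exact_mod_cast hn3
  rw [← mul_assoc] at h3
  have h4 := le_of_mul_le_mul_right h3 hn0
  rw [div_lt_iff₀ hκ] at hK
  linarith

end

theorem exists_sq_eq_neg_of_modEq_one {a p : ℕ} (ha : a ≠ 0) (hp : p.Prime)
    (h : p ≡ 1 [MOD 4 * a]) : ∃ t : ℤ, (p : ℤ) ∣ t ^ 2 + a := by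
  have : Fact p.Prime := ⟨hp⟩
  have hodd : Odd p := by
    rw [Nat.odd_iff]
    exact h.of_dvd (show 2 ∣ 4 * a by omega)
  have h1 : legendreSym p (-a) = 1 := by
    rw [jacobiSym.legendreSym.to_jacobiSym, jacobiSym.mod_right _ hodd]
    have h2 : p % (4 * (-(a : ℤ)).natAbs) = 1 := by
      rw [Int.natAbs_neg, Int.natAbs_natCast, h, Nat.mod_eq_of_lt (by omega)]
    rw [h2, jacobiSym.one_right]
  have hne : ((-a : ℤ) : ZMod p) ≠ 0 := fun h0 ↦ by
    rw [(legendreSym.eq_zero_iff p _).2 h0] at h1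
    exact zero_ne_one h1
  obtain ⟨t, ht⟩ := (legendreSym.eq_one_iff p hne).1 h1
  refine ⟨t.val, ?_⟩
  rw [← ZMod.intCast_zmod_eq_zero_iff_dvd]
  push_cast at ht ⊢
  rw [ZMod.natCast_zmod_val]
  linear_combination -ht

theorem exists_sq_add_mul_sq_eq {a p : ℕ} (ha : 2 ≤ a) (hp : p.Prime) (hpa : p ≡ 1 [MOD a])
    {t : ℤ} (ht : (p : ℤ) ∣ t ^ 2 + a) :
    ∃ x y z : ℤ, x ^ 2 + a * y ^ 2 = p * z ^ 2 ∧ z ≠ 0 := by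
  have hp2 := hp.two_le
  have hcop : Nat.Coprime a p := by
    rw [Nat.coprime_comm, Nat.Coprime, hpa.gcd_eq, Nat.gcd_one_left]
  have : NeZero a := ⟨by omega⟩
  have : NeZero p := ⟨by omega⟩
  let S : Finset (ℕ × ℕ × ℕ) := Finset.range (Nat.sqrt (a * p) + 1) ×ˢ
    Finset.range (Nat.sqrt p + 1) ×ˢ Finset.range (Nat.sqrt a + 1)
  have hcard : (Finset.univ : Finset (ZMod a × ZMod p)).card < S.card := by
    simp only [S, Finset.card_product, Finset.card_range, Finset.card_univ, Fintype.card_prod,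
      ZMod.card]
    have e1 := Nat.lt_succ_sqrt (a * p)
    have e2 := Nat.lt_succ_sqrt p
    have e3 := Nat.lt_succ_sqrt a
    simp only [Nat.succ_eq_add_one] at e1 e2 e3
    have e4 := Nat.mul_lt_mul'' e1 (Nat.mul_lt_mul'' e2 e3)
    by_contra! hle
    have := Nat.mul_le_mul hle hle
    nlinarith
  obtain ⟨⟨x₁, y₁, z₁⟩, h₁, ⟨x₂, y₂, z₂⟩, h₂, hne, heq⟩ :=
    Finset.exists_ne_map_eq_of_card_lt_of_maps_to hcard
      (f := fun w ↦ (((w.1 : ℤ) - w.2.2 : ℤ), ((w.1 : ℤ) - t * w.2.1 : ℤ)))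
      (fun _ _ ↦ by simp)
  simp only [S, Finset.mem_product, Finset.mem_range, Nat.lt_succ_iff] at h₁ h₂
  rw [Prod.mk.injEq, ZMod.intCast_eq_intCast_iff_dvd_sub, ZMod.intCast_eq_intCast_iff_dvd_sub]
      at heq
  obtain ⟨x, hx⟩ : ∃ x : ℤ, x = x₂ - x₁ := ⟨_, rfl⟩
  obtain ⟨y, hy⟩ : ∃ x : ℤ, x = y₂ - y₁ := ⟨_, rfl⟩
  obtain ⟨z, hz⟩ : ∃ x : ℤ, x = z₂ - z₁ := ⟨_, rfl⟩
  have hda : (a : ℤ) ∣ x - z := by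
    convert heq.1 using 1
    rw [hx, hz]; ring
  have hdp : (p : ℤ) ∣ x - t * y := by
    convert heq.2 using 1
    rw [hx, hy]; ring
  have hbound : ∀ {u v k : ℕ}, u ≤ k.sqrt → v ≤ k.sqrt → ((u : ℤ) - v) ^ 2 ≤ k := by
    intro u v k hu hv
    have h3 : (k.sqrt : ℤ) * k.sqrt ≤ k := by exact_mod_cast Nat.sqrt_le k
    zify at hu hv
    nlinarith [abs_le.2 (show -(k.sqrt : ℤ) ≤ (u : ℤ) - v ∧ (u : ℤ) - v ≤ k.sqrt by omega), sq_abs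
        ((u : ℤ) - v), abs_nonneg ((u : ℤ) - v)]
  have hx2 : x ^ 2 ≤ a * p := by
    rw [hx]; exact_mod_cast hbound h₂.1 h₁.1
  have hy2 : y ^ 2 ≤ p := by
    rw [hy]; exact_mod_cast hbound h₂.2.1 h₁.2.1
  have hz2 : z ^ 2 ≤ a := by
    rw [hz]; exact_mod_cast hbound h₂.2.2 h₁.2.2
  have hp' : Prime (p : ℤ) := Nat.prime_iff_prime_int.1 hp
  have hnsq : ∀ y : ℤ, y ^ 2 ≠ p := fun y h ↦ by
    have : IsSquare (p : ℤ) := ⟨y, by rw [← h]; ring⟩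
    exact hp'.irreducible.not_isSquare this
  have hxa : x ^ 2 ≠ a * p := fun h ↦ by
    obtain ⟨w, rfl⟩ : (p : ℤ) ∣ x := hp'.dvd_of_dvd_pow (n := 2) ⟨a, by rw [h]; ring⟩
    have h3 : (p : ℤ) ∣ a := ⟨w ^ 2, mul_right_cancel₀ (b := (p : ℤ)) (by positivity)
      (by linear_combination -h)⟩
    have h4 := Nat.Coprime.eq_one_of_dvd hcop.symm (by exact_mod_cast h3)
    omega
  have hE : (a * p : ℤ) ∣ x ^ 2 + a * y ^ 2 - p * z ^ 2 := by
    refine IsCoprime.mul_dvd (Nat.isCoprime_iff_coprime.2 hcop) ?_ ?_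
    · have h1 : (a : ℤ) ∣ 1 - p := by
        exact (Nat.modEq_iff_dvd.1 hpa)
      have : x ^ 2 + a * y ^ 2 - p * z ^ 2 = (x - z) * (x + z) + a * y ^ 2 + (1 - p) * z ^ 2 := by
        ring
      rw [this]
      exact dvd_add (dvd_add (hda.mul_right _) (dvd_mul_right _ _)) (h1.mul_right _)
    · have : x ^ 2 + a * y ^ 2 - p * z ^ 2
          = (x - t * y) * (x + t * y) + (t ^ 2 + a) * y ^ 2 - p * z ^ 2 := by ring
      rw [this]
      exact dvd_sub (dvd_add (hdp.mul_right _) (ht.mul_right _)) (dvd_mul_right _ _)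
  have ha' : (2 : ℤ) ≤ a := by exact_mod_cast ha
  have hp2' : (2 : ℤ) ≤ p := by exact_mod_cast hp2
  have hne0 : ¬ (x = 0 ∧ y = 0 ∧ z = 0) := fun ⟨h1, h2, h3⟩ ↦ hne (by
    simp only [Prod.mk.injEq]; omega)
  obtain ⟨k, hk⟩ := hE
  have hk2 : k < 2 := by
    by_contra! hk2
    have h1 := lt_of_le_of_ne hx2 hxa
    have : (a : ℤ) * y ^ 2 ≤ a * p := by gcongr
    nlinarith [sq_nonneg z, mul_nonneg (show (0 : ℤ) ≤ a * p by positivity) (sub_nonneg.2 hk2),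
        sq_nonneg z, mul_nonneg (show (0 : ℤ) ≤ p by positivity) (sq_nonneg z)]
  have hk1 : -1 < k := by
    by_contra! hk1
    have h1 : (p : ℤ) * z ^ 2 ≤ p * a := by gcongr
    have h2 : (a : ℤ) * p * k ≤ a * p * (-1) := by gcongr
    have h3 : 0 ≤ (a : ℤ) * y ^ 2 := by positivity
    have h4 : x = 0 := by
      have : x ^ 2 ≤ 0 := by linarith
      exact pow_eq_zero_iff (two_ne_zero) |>.1 (le_antisymm this (sq_nonneg x))
    have h6 : z ^ 2 = a := by
      have : (p : ℤ) * z ^ 2 = p * a := le_antisymm h1 (by linarith [sq_nonneg x])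
      exact mul_left_cancel₀ (by positivity) this
    rw [h4, zero_sub, dvd_neg] at hda
    obtain ⟨w, rfl⟩ := hda
    have h7 : (a : ℤ) * w ^ 2 = 1 := mul_left_cancel₀ (a := (a : ℤ)) (by positivity)
      (by linear_combination h6)
    have := Int.eq_one_of_mul_eq_one_right (by positivity) h7
    omega
  obtain rfl | rfl : k = 0 ∨ k = 1 := by omega
  · refine ⟨x, y, z, by linarith, ?_⟩
    rintro rfl
    apply hne0
    have : x ^ 2 + a * y ^ 2 = 0 := by linarith
    have h0 : 0 ≤ (a : ℤ) * y ^ 2 := by positivity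
    have h1 : x ^ 2 = 0 := le_antisymm (by linarith) (sq_nonneg x)
    have h2 : (a : ℤ) * y ^ 2 = 0 := by linarith
    have h3 : (a : ℤ) ≠ 0 := by positivity
    exact ⟨pow_eq_zero_iff two_ne_zero |>.1 h1,
      pow_eq_zero_iff two_ne_zero |>.1 ((mul_eq_zero_iff_left h3).1 h2), rfl⟩
  · exact ⟨x * z + a * y, y * z - x, z ^ 2 + a, by linear_combination (z ^ 2 + a) * hk,
      by positivity⟩

theorem Int.isCoprime_of_forall_prime {x y : ℤ}
    (h : ∀ q : ℕ, q.Prime → (q : ℤ) ∣ x → ¬ (q : ℤ) ∣ y) : IsCoprime x y := by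
  rw [Int.isCoprime_iff_gcd_eq_one]
  by_contra hne
  obtain ⟨q, hq, hd⟩ := Nat.exists_prime_and_dvd hne
  exact h q hq ((Int.natCast_dvd_natCast.2 hd).trans (Int.gcd_dvd_left ..))
    ((Int.natCast_dvd_natCast.2 hd).trans (Int.gcd_dvd_right ..))

/-- A solution `(x, y, z)` of minimal `|z|` among those that satisfy a given condition. -/
theorem exists_minimal_natAbs {P : ℤ → ℤ → ℤ → Prop} (h : ∃ x y z, P x y z) :
    ∃ x y z, P x y z ∧ ∀ x' y' z', P x' y' z' → z.natAbs ≤ z'.natAbs := by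
  classical
  have h' : ∃ n : ℕ, ∃ x y z, P x y z ∧ z.natAbs = n := by
    obtain ⟨x, y, z, h⟩ := h
    exact ⟨_, x, y, z, h, rfl⟩
  obtain ⟨x, y, z, h1, h2⟩ := Nat.find_spec h'
  exact ⟨x, y, z, h1, fun x' y' z' h3 ↦ h2.trans_le (Nat.find_le ⟨x', y', z', h3, rfl⟩)⟩

theorem exists_sq_add_mul_sq_eq_primitive {a p : ℕ} (ha : 2 ≤ a) (hp : p.Prime)
    (h : p ≡ 1 [MOD 4 * a]) :
    ∃ x y z : ℤ, x ^ 2 + a * y ^ 2 = p * z ^ 2 ∧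
      ∀ q : ℕ, q.Prime → (q : ℤ) ∣ x → (q : ℤ) ∣ y → ¬ (q : ℤ) ∣ z := by
  obtain ⟨t, ht⟩ := exists_sq_eq_neg_of_modEq_one (by omega) hp h
  obtain ⟨x, y, z, ⟨hxyz, hz⟩, hmin⟩ := exists_minimal_natAbs
    (exists_sq_add_mul_sq_eq ha hp (h.of_dvd (dvd_mul_left _ _)) ht)
  refine ⟨x, y, z, hxyz, ?_⟩
  rintro q hq ⟨x', rfl⟩ ⟨y', rfl⟩ ⟨z', rfl⟩
  have hq0 : (q : ℤ) ≠ 0 := by exact_mod_cast hq.ne_zero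
  have hz' : z' ≠ 0 := right_ne_zero_of_mul hz
  have h1 := hmin x' y' z' ⟨mul_left_cancel₀ (pow_ne_zero 2 hq0) (by linear_combination hxyz), hz'⟩
  rw [Int.natAbs_mul, Int.natAbs_natCast] at h1
  have h2 := Int.natAbs_pos.2 hz'
  nlinarith [hq.two_le]

theorem exists_sign_not_dvd {a k q : ℕ} {p x y z : ℤ} (hq : q.Prime) (hk : q ^ k ∣ 4 * a)
    (hk' : ¬ q ^ (k + 1) ∣ 4 * a) (hxyz : x ^ 2 + a * y ^ 2 = p * z ^ 2)
    (hprim : (q : ℤ) ∣ x → (q : ℤ) ∣ y → ¬ (q : ℤ) ∣ z) :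
    ∃ s : ℤ, s ^ 2 = 1 ∧ ¬ (q : ℤ) ^ (k + 1) ∣ 2 * (x - s * z) := by
  by_contra! hall
  have h1 := hall 1 (by norm_num)
  have h2 := hall (-1) (by norm_num)
  have hx : (q : ℤ) ^ (k + 1) ∣ 4 * x := by
    rw [show 4 * x = 2 * (x - 1 * z) + 2 * (x - -1 * z) by ring]
    exact dvd_add h1 h2
  have hz : (q : ℤ) ^ (k + 1) ∣ 4 * z := by
    rw [show 4 * z = 2 * (x - -1 * z) - 2 * (x - 1 * z) by ring]
    exact dvd_sub h2 h1
  have hq' : Prime (q : ℤ) := Nat.prime_iff_prime_int.1 hq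
  obtain ⟨e, he⟩ := hk
  have hqe : ¬ (q : ℤ) ∣ e := fun h ↦ hk' (by
    rw [he, pow_succ]
    exact mul_dvd_mul_left _ (by exact_mod_cast h))
  have he' : (4 : ℤ) * a = q ^ k * e := by exact_mod_cast he
  have hy : (q : ℤ) ^ (k + 2) ∣ (2 * y) ^ 2 := by
    have h3 : ((q : ℤ) ^ (k + 1)) ^ 2 ∣ 16 * a * y ^ 2 := by
      have : 16 * a * y ^ 2 = p * (4 * z) ^ 2 - (4 * x) ^ 2 := by linear_combination 16 * hxyz
      rw [this]
      exact dvd_sub ((pow_dvd_pow_of_dvd hz 2).mul_left _) (pow_dvd_pow_of_dvd hx 2)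
    have h4 : (q : ℤ) ^ k * q ^ (k + 2) ∣ q ^ k * (e * (2 * y) ^ 2) := by
      convert h3 using 1
      · ring
      · linear_combination -4 * y ^ 2 * he'
    have h5 := (mul_dvd_mul_iff_left (pow_ne_zero _ hq'.ne_zero)).1 h4
    exact (((Prime.coprime_iff_not_dvd hq').2 hqe).pow_left).dvd_of_dvd_mul_left h5
  rcases eq_or_ne q 2 with rfl | hq2
  · have hk2 : 2 ≤ k := by
      by_contra! hk2
      exact hk' ((pow_dvd_pow 2 (show k + 1 ≤ 2 by omega)).trans (dvd_mul_right 4 a))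
    have key : ∀ {w : ℤ}, ((2 : ℕ) : ℤ) ^ (k + 1) ∣ 4 * w → ((2 : ℕ) : ℤ) ∣ w := by
      intro w hw
      have := (pow_dvd_pow ((2 : ℕ) : ℤ) (show 3 ≤ k + 1 by omega)).trans hw
      norm_num at this ⊢
      omega
    refine hprim (key hx) ?_ (key hz)
    have h6 := (pow_dvd_pow ((2 : ℕ) : ℤ) (show 4 ≤ k + 2 by omega)).trans hy
    have h7 : ((2 : ℕ) : ℤ) ∣ y ^ 2 := by
      norm_num [mul_pow] at h6 ⊢
      omega
    exact hq'.dvd_of_dvd_pow h7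
  · have h2q : ¬ (q : ℤ) ∣ 2 := fun h ↦ hq2 ((Nat.prime_dvd_prime_iff_eq hq Nat.prime_two).1
      (by exact_mod_cast h))
    have h4q : ¬ (q : ℤ) ∣ 4 := fun h ↦ h2q (hq'.dvd_of_dvd_pow (n := 2) (by norm_num; exact h))
    have key : ∀ {w : ℤ}, (q : ℤ) ^ (k + 1) ∣ 4 * w → (q : ℤ) ∣ w := fun hw ↦
      (hq'.dvd_or_dvd ((dvd_pow_self _ (by omega)).trans hw)).resolve_left h4q
    exact hprim (key hx) ((hq'.dvd_or_dvd (hq'.dvd_of_dvd_pow ((dvd_pow_self _ (by omega)).trans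
      hy))).resolve_left h2q) (key hz)

theorem exists_dvd_sub_of_primeFactors {Q : ℕ} (s : ℕ → ℤ) :
    ∃ e : ℤ, ∀ q ∈ Q.primeFactors, (q : ℤ) ^ Q.factorization q ∣ e - s q := by
  obtain ⟨e, he⟩ := Ideal.exists_forall_sub_mem_ideal
    (I := fun q : Q.primeFactors ↦ Ideal.span {((q : ℕ) : ℤ) ^ Q.factorization q})
    (fun q r hqr ↦ by
      rw [Function.onFun, Ideal.isCoprime_span_singleton_iff]
      refine IsCoprime.pow (Nat.isCoprime_iff_coprime.2 ?_)
      exact (Nat.coprime_primes (Nat.prime_of_mem_primeFactors q.2)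
        (Nat.prime_of_mem_primeFactors r.2)).2 fun h ↦ hqr (Subtype.ext h)) (fun q ↦ s q)
  exact ⟨e, fun q hq ↦ Ideal.mem_span_singleton.1 (he ⟨q, hq⟩)⟩

theorem exists_sq_add_mul_sq_eq_coprime {a m p : ℕ} (ha : 2 ≤ a) (hm : m ≠ 0) (h2m : 2 ∣ m)
    (hp : p.Prime) (h : p ≡ 1 [MOD 4 * a * m]) :
    ∃ x y z : ℤ, x ^ 2 + a * y ^ 2 = p * z ^ 2 ∧ z ≠ 0 ∧ IsCoprime x m ∧ (m : ℤ) ∣ y := by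
  obtain ⟨x, y, z, hxyz, hprim⟩ := exists_sq_add_mul_sq_eq_primitive ha hp
    (h.of_dvd (dvd_mul_right _ _))
  obtain ⟨Q, hQ⟩ : ∃ Q, Q = 4 * a * m := ⟨_, rfl⟩
  have ha0 : 4 * a ≠ 0 := by omega
  have hQ0 : Q ≠ 0 := hQ ▸ mul_ne_zero ha0 hm
  have hs : ∀ q : ℕ, ∃ s : ℤ, q.Prime → s ^ 2 = 1 ∧
      ¬ (q : ℤ) ^ ((4 * a).factorization q + 1) ∣ 2 * (x - s * z) := by
    intro q
    by_cases hq : q.Prime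
    · obtain ⟨s, hs⟩ := exists_sign_not_dvd hq (Nat.ordProj_dvd (4 * a) q)
        (Nat.pow_succ_factorization_not_dvd ha0 hq) hxyz (hprim q hq)
      exact ⟨s, fun _ ↦ hs⟩
    · exact ⟨0, fun h ↦ (hq h).elim⟩
  choose s hs using hs
  obtain ⟨ε, hε⟩ := exists_dvd_sub_of_primeFactors (Q := Q) s
  have hQε : (Q : ℤ) ∣ ε ^ 2 - 1 := by
    rw [← Nat.prod_factorization_pow_eq_self hQ0, Finsupp.prod, Nat.support_factorization]
    push_cast
    refine Finset.prod_dvd_of_coprime ?_ ?_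
    · intro q hq r hr hqr
      refine IsCoprime.pow (Nat.isCoprime_iff_coprime.2 ?_)
      exact (Nat.coprime_primes (Nat.prime_of_mem_primeFactors hq)
        (Nat.prime_of_mem_primeFactors hr)).2 hqr
    · intro q hq
      have h1 := (hs q (Nat.prime_of_mem_primeFactors hq)).1
      have : ε ^ 2 - 1 = (ε - s q) * (ε + s q) := by linear_combination h1
      rw [this]
      exact (hε q hq).mul_right _
  have hQp : (Q : ℤ) ∣ 1 - p := by
    rw [hQ]; exact_mod_cast Nat.modEq_iff_dvd.1 h
  obtain ⟨c, hc⟩ : (Q : ℤ) ∣ 1 - p * ε ^ 2 := by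
    have : (1 : ℤ) - p * ε ^ 2 = (1 - p) - p * (ε ^ 2 - 1) := by ring
    rw [this]
    exact dvd_sub hQp (hQε.mul_left _)
  obtain ⟨B, hB⟩ : ∃ B, B = x - p * ε * z := ⟨_, rfl⟩
  obtain ⟨g, hg⟩ : ∃ g : ℤ, g = Int.gcd (2 * B) (4 * a) := ⟨_, rfl⟩
  have hg0 : g ≠ 0 := by
    rw [hg]
    exact_mod_cast Int.gcd_ne_zero_right (by positivity)
  obtain ⟨b, hb⟩ : g ∣ 2 * B := hg ▸ Int.gcd_dvd_left ..
  obtain ⟨e, he⟩ : g ∣ 4 * a := hg ▸ Int.gcd_dvd_right ..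
  have hgcd : ∀ d : ℤ, d ∣ 2 * B → d ∣ 4 * a → d ∣ g := fun d h1 h2 ↦ hg ▸ Int.dvd_coe_gcd h1 h2
  have hQ' : (Q : ℤ) = g * e * m := by rw [hQ, ← he]; push_cast; ring
  have hbm : IsCoprime b m := by
    refine Int.isCoprime_of_forall_prime fun q hq hqb hqm ↦ ?_
    have hqm' : q ∣ m := by exact_mod_cast hqm
    have hqQ : q ∈ Q.primeFactors := Nat.mem_primeFactors.2 ⟨hq, hQ ▸ hqm'.mul_left _, hQ0⟩
    have hfac : (4 * a).factorization q + 1 ≤ Q.factorization q := by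
      rw [hQ, Nat.factorization_mul ha0 hm, Finsupp.add_apply]
      have := hq.factorization_pos_of_dvd hm hqm'
      omega
    have hpow : ∀ i ≤ (4 * a).factorization q + 1, (q : ℤ) ^ i ∣ 2 * B := by
      intro i
      induction i with
      | zero => simp
      | succ i ih =>
        intro hi
        rw [hb, pow_succ]
        refine mul_dvd_mul (hgcd _ (ih (by omega)) ?_) hqb
        exact_mod_cast (pow_dvd_pow q (show i ≤ (4 * a).factorization q by omega)).trans
          (Nat.ordProj_dvd (4 * a) q)
    refine (hs q hq).2 ?_
    have hd := (pow_dvd_pow (q : ℤ) hfac).trans (hε q hqQ)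
    have hd' := (pow_dvd_pow (q : ℤ) hfac).trans
      ((show ((q ^ Q.factorization q : ℕ) : ℤ) ∣ Q by exact_mod_cast Nat.ordProj_dvd Q q).trans
        hQp |> fun h ↦ (by exact_mod_cast h : (q : ℤ) ^ Q.factorization q ∣ 1 - p))
    have : 2 * (x - s q * z) = 2 * B + 2 * p * z * (ε - s q) - (1 - p) * (2 * (s q * z)) := by
      rw [hB]; ring
    rw [this]
    exact dvd_sub (dvd_add (hpow _ le_rfl) (hd.mul_left _)) (hd'.mul_right _)
  have hx2 : IsCoprime (e * m * c * x - b) m := by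
    have := (hbm.neg_left).add_mul_left_left (e * c * x)
    rwa [show -b + m * (e * c * x) = e * m * c * x - b by ring] at this
  have heq : (e * m * c * x - b) ^ 2 + a * (e * m * c * y) ^ 2 = p *
      (e * m * c * z - b * ε) ^ 2 := by
    refine mul_left_cancel₀ (pow_ne_zero 2 hg0) ?_
    have e1 : g * (e * m * c * x - b) = (1 - p * ε ^ 2) * x - 2 * B := by
      rw [hc, hQ', hb]; ring
    have e2 : g * (e * m * c * y) = (1 - p * ε ^ 2) * y := by
      rw [hc, hQ']; ring
    have e3 : g * (e * m * c * z - b * ε) = (1 - p * ε ^ 2) * z - 2 * B * ε := by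
      rw [hc, hQ', hb]; ring
    calc _ = (g * (e * m * c * x - b)) ^ 2 + a * (g * (e * m * c * y)) ^ 2 := by ring
      _ = p * (g * (e * m * c * z - b * ε)) ^ 2 := by
        rw [e1, e2, e3, hB]
        linear_combination (1 - p * ε ^ 2) ^ 2 * hxyz
      _ = _ := by ring
  refine ⟨_, _, _, heq, ?_, hx2, ⟨e * c * y, by ring⟩⟩
  intro hz
  rw [hz] at heq
  have hx0 : e * m * c * x - b = 0 := by
    have h3 : (0 : ℤ) ≤ a * (e * m * c * y) ^ 2 := by positivity
    exact pow_eq_zero_iff two_ne_zero |>.1 (le_antisymm (by linarith) (sq_nonneg _))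
  rw [hx0, isCoprime_zero_left, Int.isUnit_iff] at hx2
  omega

theorem exists_sq_add_mul_sq_eq_coprime_coprime {a m p : ℕ} (ha : 2 ≤ a) (hm : m ≠ 0)
    (h2m : 2 ∣ m) (hp : p.Prime) (h : p ≡ 1 [MOD 4 * a * m]) :
    ∃ x y z : ℤ, x ^ 2 + a * y ^ 2 = p * z ^ 2 ∧ z ≠ 0 ∧ IsCoprime x m ∧ (m : ℤ) ∣ y ∧
      IsCoprime x y := by
  obtain ⟨x, y, z, ⟨hxyz, hz, hxm, hmy⟩, hmin⟩ := exists_minimal_natAbs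
    (exists_sq_add_mul_sq_eq_coprime ha hm h2m hp h)
  refine ⟨x, y, z, hxyz, hz, hxm, hmy, Int.isCoprime_of_forall_prime ?_⟩
  rintro q hq ⟨x', rfl⟩ ⟨y', rfl⟩
  have hq' : Prime (q : ℤ) := Nat.prime_iff_prime_int.1 hq
  obtain ⟨z', rfl⟩ : (q : ℤ) ∣ z := by
    by_contra hqz
    have h1 : (q : ℤ) ^ 2 ∣ p * z ^ 2 := ⟨x' ^ 2 + a * y' ^ 2, by rw [← hxyz]; ring⟩
    have h2 : (q : ℤ) ^ 2 ∣ p :=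
        (((Prime.coprime_iff_not_dvd hq').2 hqz).pow).dvd_of_dvd_mul_right h1
    have h3 : q * q ∣ p := by rw [← sq]; exact_mod_cast h2
    exact hq.one_lt.ne' (Nat.isUnit_iff.1 (hp.prime.irreducible.squarefree q h3))
  have hz' : z' ≠ 0 := right_ne_zero_of_mul hz
  have h1 := hmin x' y' z' ⟨mul_left_cancel₀ (pow_ne_zero 2 hq'.ne_zero)
    (by linear_combination hxyz), hz', hxm.of_mul_left_right,
    hxm.of_mul_left_left.symm.dvd_of_dvd_mul_left hmy⟩
  rw [Int.natAbs_mul, Int.natAbs_natCast] at h1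
  have h2 := Int.natAbs_pos.2 hz'
  nlinarith [hq.two_le]

section
variable {R : Type*} [CommRing R]

theorem isCoprime_add_sub_of_sq_eq_neg {a m : ℕ} {θ : R} (hθ : θ ^ 2 = -a) (h2m : 2 ∣ m)
    (ham : a ∣ m) {x y : ℤ} (hxm : IsCoprime x m) (hmy : (m : ℤ) ∣ y) (hxy : IsCoprime x y) :
    IsCoprime ((x : R) + y * θ) (x - y * θ) := by
  have hxa : IsCoprime x (a * y) :=
    (hxm.of_isCoprime_of_dvd_right (Int.natCast_dvd_natCast.2 ham)).mul_right hxy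
  obtain ⟨u, v, huv⟩ := hxa
  have hx2 : IsCoprime x 2 := hxm.of_isCoprime_of_dvd_right (by exact_mod_cast h2m)
  obtain ⟨s, t, hst⟩ := hx2
  obtain ⟨w, rfl⟩ : (2 : ℤ) ∣ y := (show (2 : ℤ) ∣ m by exact_mod_cast h2m).trans hmy
  have huv' := congrArg (Int.cast : ℤ → R) huv
  have hst' := congrArg (Int.cast : ℤ → R) hst
  push_cast at huv' hst'
  push_cast
  refine ⟨s + (t - s * w * θ) * (u - v * θ), (t - s * w * θ) * (u + v * θ), ?_⟩
  linear_combination hst' + 2 * (t - s * w * θ) * huv' - 2 * (t - s * w * θ) * v * (2 * w) * hθ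

variable [IsDedekindDomain R] [Module.Free ℤ R] [Module.Finite ℤ R] [CharZero R]

theorem Nat.Prime.mul_sq_ne_sq {p u v : ℕ} (hp : p.Prime) (hu : u ≠ 0) : p * u ^ 2 ≠ v ^ 2 := by
  intro h
  obtain ⟨t, rfl⟩ : u ∣ v := (Nat.pow_dvd_pow_iff two_ne_zero).1 ⟨p, by rw [← h]; ring⟩
  have : p = t ^ 2 := Nat.eq_of_mul_eq_mul_right (pow_pos (Nat.pos_of_ne_zero hu) 2)
    (by rw [h]; ring)
  exact hp.prime.irreducible.not_isSquare ⟨t, by rw [this]; ring⟩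

theorem IsQuadraticData.exists_absNorm_eq_of_modEq_one {a m p : ℕ} {θ : R}
    (h : IsQuadraticData a m θ) (hθ : θ ^ 2 = -a) (ha : 2 ≤ a) (hm : m ≠ 0) (h2m : 2 ∣ m)
    (ham : a ∣ m) {G : Type*} [CommGroup G] (cl : Ideal R →*₀ WithZero G)
    (hcl0 : ∀ I, cl I ≠ 0 ↔ IsCoprime I (Ideal.span {((m : ℤ) : R)}))
    (hcl : ∀ I J, cl I ≠ 0 → cl J ≠ 0 →
      (cl I * cl J = 1 ↔ ∃ γ, IsRationalUnitMod m γ ∧ I * J = Ideal.span {γ}))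
    (hp : p.Prime) (hpm : p ≡ 1 [MOD 4 * a * m]) :
    ∃ g : G, ∃ I : Ideal R, cl I = (g * g : G) ∧ Ideal.absNorm I = p := by
  obtain ⟨x, y, z, hxyz, hz, hxm, hmy, hxy⟩ :=
    exists_sq_add_mul_sq_eq_coprime_coprime ha hm h2m hp hpm
  have hcop := isCoprime_add_sub_of_sq_eq_neg hθ h2m ham hxm hmy hxy
  set α : R := x + y * θ with hα
  set β : R := x - y * θ with hβ
  have hαβ : α * β = p * z ^ 2 := by
    have := congrArg (Int.cast : ℤ → R) hxyz
    push_cast at this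
    rw [hα, hβ]
    linear_combination this - y ^ 2 * hθ
  have hp0 : (p : R) ≠ 0 := by exact_mod_cast hp.ne_zero
  have hz0 : (z : R) ≠ 0 := by exact_mod_cast hz
  have hPP : (Ideal.span {α, (p : R)}) * Ideal.span {β, (p : R)} = Ideal.span {(p : R)} := by
    rw [Ideal.span_pair_mul_span_pair, hαβ]
    apply le_antisymm
    · rw [Ideal.span_le]
      rintro w (rfl | rfl | rfl | rfl) <;> rw [SetLike.mem_coe, Ideal.mem_span_singleton]
      · exact dvd_mul_right _ _
      · exact dvd_mul_left _ _
      · exact dvd_mul_right _ _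
      · exact dvd_mul_right _ _
    · rw [Ideal.span_singleton_le_iff_mem]
      obtain ⟨u, v, huv⟩ := hcop
      have : (p : R) = u * (α * p) + v * (p * β) := by linear_combination (-p : R) * huv
      have h1 := Ideal.add_mem (Ideal.span {(p : R) * z ^ 2, α * p, p * β, (p * p : R)})
        (Ideal.mul_mem_left _ u (Ideal.subset_span (show α * p ∈ _ by simp)))
        (Ideal.mul_mem_left _ v (Ideal.subset_span (show p * β ∈ _ by simp)))
      rwa [← this] at h1
  obtain ⟨A, hA⟩ : Ideal.span {α, (p : R)} ∣ Ideal.span {α} :=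
    Ideal.dvd_iff_le.2 (Ideal.span_mono (by simp))
  obtain ⟨B, hB⟩ : Ideal.span {β, (p : R)} ∣ Ideal.span {β} :=
    Ideal.dvd_iff_le.2 (Ideal.span_mono (by simp))
  have hAB : A * B = Ideal.span {(z : R)} ^ 2 := by
    have h0 : Ideal.span {(p : R)} ≠ 0 := by simpa using hp0
    refine mul_left_cancel₀ h0 ?_
    rw [Ideal.span_singleton_pow, Ideal.span_singleton_mul_span_singleton, ← hαβ,
      ← Ideal.span_singleton_mul_span_singleton, hA, hB, ← hPP]
    ring
  have hcopAB : IsCoprime A B := by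
    have h1 := (Ideal.isCoprime_span_singleton_iff α β).2 hcop
    rw [hA, hB] at h1
    exact h1.of_mul_left_right.of_mul_right_right
  obtain ⟨J, hJ⟩ := exists_eq_pow_of_mul_eq_pow_of_coprime hcopAB hAB
  have hN : (Ideal.absNorm (Ideal.span {α, (p : R)})) * (Ideal.absNorm J) ^ 2 =
      p * z.natAbs ^ 2 := by
    have h1 := h.absNorm_eq (x, y)
    rw [quadHom_apply, ← hα, hA, hJ] at h1
    simp only [map_mul, map_pow] at h1
    zify
    rw [sq_abs, ← hxyz]
    exact_mod_cast h1
  have hNp : Ideal.absNorm (Ideal.span {α, (p : R)}) ∣ p ^ 2 := by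
    have h1 := h.absNorm_eq (p, 0)
    simp only [quadHom_apply, Int.cast_zero, zero_mul, add_zero, Int.cast_natCast, ← hPP,
      map_mul] at h1
    exact ⟨_, by zify; rw [← Nat.cast_mul, h1]; ring⟩
  have hz' : z.natAbs ≠ 0 := Int.natAbs_ne_zero.2 hz
  have hP : Ideal.absNorm (Ideal.span {α, (p : R)}) = p := by
    obtain ⟨i, hi, hi'⟩ := (Nat.dvd_prime_pow hp).1 hNp
    rw [hi'] at hN
    interval_cases i
    · exact (hp.mul_sq_ne_sq hz' (by rw [← hN, pow_zero, one_mul])).elim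
    · rw [hi', pow_one]
    · have h3 : p * Ideal.absNorm J ^ 2 = z.natAbs ^ 2 :=
        Nat.eq_of_mul_eq_mul_left hp.pos (by rw [← hN]; ring)
      refine (hp.mul_sq_ne_sq ?_ h3).elim
      rintro h0
      rw [h0] at h3
      exact hz' (by simpa using h3.symm)
  have hαm : IsRationalUnitMod m α := by
    refine ⟨x, hxm, ?_⟩
    obtain ⟨w, hw⟩ := hmy
    exact ⟨w * θ, by rw [hα, hw]; push_cast; ring⟩
  have hα0 : cl (Ideal.span {α}) ≠ 0 := (hcl0 _).2 hαm.isCoprime_span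
  have hα1 : cl (Ideal.span {α}) = 1 := by
    have := (hcl (Ideal.span {α}) 1 hα0 (by rw [map_one]; exact one_ne_zero)).2 ⟨α, hαm, mul_one _⟩
    rwa [map_one, mul_one] at this
  rw [hA, hJ, map_mul, map_pow] at hα1
  have hJ0 : cl J ≠ 0 := fun h0 ↦ by simp [h0] at hα1
  obtain ⟨j, hj⟩ := WithZero.ne_zero_iff_exists.1 hJ0
  refine ⟨j⁻¹, _, ?_, hP⟩
  rw [eq_comm, ← hj] at hα1
  rw [WithZero.coe_mul, WithZero.coe_inv, ← mul_inv, ← sq]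
  exact eq_inv_of_mul_eq_one_left hα1.symm

end

section
open scoped NumberField

section
variable {a : ℕ}

theorem QuadraticAlgebra.exists_two_mul_re_eq {z : QuadraticAlgebra ℚ (-a : ℚ) 0}
    (hz : IsIntegral ℤ z) :
    ∃ k : ℤ, 2 * z.re = k := by
  have h1 : IsIntegral ℤ (star z) :=
      hz.map (starRingEnd (QuadraticAlgebra ℚ (-a : ℚ) 0)).toIntAlgHom
  have h2 := hz.add h1
  rw [← QuadraticAlgebra.algebraMap_trace_eq_add_star, isIntegral_algebraMap_iff
    QuadraticAlgebra.algebraMap_injective,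
    IsIntegrallyClosed.isIntegral_iff] at h2
  obtain ⟨k, hk⟩ := h2
  rw [QuadraticAlgebra.trace_def, zero_mul, add_zero] at hk
  exact ⟨k, hk.symm⟩

theorem QuadraticAlgebra.algebra_norm_eq (z : QuadraticAlgebra ℚ (-a : ℚ) 0) :
    Algebra.norm ℚ z = z.re ^ 2 + a * z.im ^ 2 := by
  refine (QuadraticAlgebra.det_toLinearMap_eq_norm z).trans ?_
  rw [QuadraticAlgebra.norm_def]
  ring

theorem QuadraticAlgebra.intCast_add_intCast_mul_omega (k l : ℤ) :
    k + l * (QuadraticAlgebra.omega : QuadraticAlgebra ℚ (-a : ℚ) 0) = ⟨k, l⟩ := by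
  ext <;> simp

theorem QuadraticAlgebra.intCast_mul (k : ℤ) (z : QuadraticAlgebra ℚ (-a : ℚ) 0) :
    k * z = ⟨k * z.re, k * z.im⟩ := by
  ext <;> simp

instance [Fact (∀ r : ℚ, r ^ 2 ≠ -(a : ℚ) + 0 * r)] :
    NumberField (QuadraticAlgebra ℚ (-a : ℚ) 0) where
  to_charZero := inferInstance
  to_finiteDimensional := inferInstance
end

theorem exists_isQuadraticData {a m : ℕ} (ha : 1 ≤ a) (hm0 : m ≠ 0) (hm : 2 * a ∣ m) :
    ∃ (K : Type) (_ : Field K) (_ : NumberField K) (θ : 𝓞 K),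
      IsQuadraticData a m θ ∧ θ ^ 2 = -a := by
  have hfact : Fact (∀ r : ℚ, r ^ 2 ≠ -(a : ℚ) + 0 * r) := ⟨fun r h ↦ by
    have : (1 : ℚ) ≤ a := by exact_mod_cast ha
    nlinarith [sq_nonneg r]⟩
  let K := QuadraticAlgebra ℚ (-a : ℚ) 0
  have hω : (QuadraticAlgebra.omega : K) ^ 2 = -a := by
    rw [sq, QuadraticAlgebra.omega_mul_omega_eq_mk]
    ext <;> simp
  have hωint : IsIntegral ℤ (QuadraticAlgebra.omega : K) := by
    refine IsIntegral.of_pow two_pos ?_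
    rw [hω]
    exact (isIntegral_algebraMap (x := (a : ℤ))).neg
  let θ : 𝓞 K := ⟨QuadraticAlgebra.omega, hωint⟩
  have hquad : ∀ w : ℤ × ℤ, algebraMap (𝓞 K) K (quadHom θ w) = ⟨w.1, w.2⟩ := by
    intro w
    rw [quadHom_apply, map_add, map_mul, map_intCast, map_intCast]
    exact QuadraticAlgebra.intCast_add_intCast_mul_omega _ _
  have hnorm : ∀ w : ℤ × ℤ, (Ideal.absNorm (Ideal.span {quadHom θ w}) : ℤ) =
      w.1 ^ 2 + a * w.2 ^ 2 := by
    intro w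
    rw [Ideal.absNorm_span_singleton]
    have h1 : (Algebra.norm ℤ (quadHom θ w) : ℚ) = Algebra.norm ℚ
        (algebraMap (𝓞 K) K (quadHom θ w)) :=
      Algebra.coe_norm_int (quadHom θ w)
    rw [hquad] at h1
    replace h1 := h1.trans (QuadraticAlgebra.algebra_norm_eq _)
    have h2 : Algebra.norm ℤ (quadHom θ w) = w.1 ^ 2 + a * w.2 ^ 2 := by
      dsimp only at h1
      exact_mod_cast h1
    rw [h2, Int.natAbs_of_nonneg (by positivity)]
  refine ⟨K, inferInstance, inferInstance, θ, ⟨ha, ?_, hnorm, ?_⟩, ?_⟩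
  · intro hu
    have h1 := hnorm (m, 0)
    simp only [quadHom_apply, Int.cast_zero, zero_mul, add_zero] at h1
    rw [Ideal.span_singleton_eq_top.2 hu, Ideal.absNorm_top] at h1
    have h3 : m = 1 := by
      have : m ^ 2 = 1 := by
        rw [zero_pow two_ne_zero, mul_zero, add_zero] at h1
        exact_mod_cast h1.symm
      exact (Nat.pow_eq_one.1 this).resolve_right two_ne_zero
    have := (dvd_mul_right 2 a).trans hm
    omega
  · intro α
    obtain ⟨c, rfl⟩ := hm
    obtain ⟨k, hk⟩ := QuadraticAlgebra.exists_two_mul_re_eq α.2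
    obtain ⟨l, hl⟩ := QuadraticAlgebra.exists_two_mul_re_eq (θ * α).2
    refine ⟨(c * a * k, -c * l), FaithfulSMul.algebraMap_injective (𝓞 K) K ?_⟩
    rw [hquad, map_mul, map_intCast]
    have hl' : 2 * ((QuadraticAlgebra.omega : K) * (algebraMap (𝓞 K) K α)).re = (l : ℚ) := hl
    rw [QuadraticAlgebra.re_mul] at hl'
    change 2 * (algebraMap (𝓞 K) K α).re = (k : ℚ) at hk
    simp only [QuadraticAlgebra.omega_re, QuadraticAlgebra.omega_im] at hl'
    refine Eq.trans ?_ (QuadraticAlgebra.intCast_mul _ _).symm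
    ext
    · push_cast
      rw [← hk]
      ring
    · push_cast
      rw [← hl']
      ring
  · apply FaithfulSMul.algebraMap_injective (𝓞 K) K
    rw [map_pow, map_neg, map_natCast]
    exact hω

end

section
open Filter
open scoped NumberField

section
variable {R : Type*} [CommRing R] [IsDedekindDomain R] [Module.Free ℤ R] [Module.Finite ℤ R]
  [CharZero R]

namespace IsQuadraticData
variable {a m : ℕ} {θ : R}

theorem dvd_of_mem_span (h : IsQuadraticData a m θ) (hθ : θ ^ 2 = -a) {A B C : ℤ}
    (hABC : A * C = B ^ 2 + a) (hAm : IsCoprime A m) {w : ℤ × ℤ}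
    (hw : quadHom θ w ∈ Ideal.span {(A : R), B - θ}) : A ∣ w.1 + B * w.2 := by
  obtain ⟨u, v, huv⟩ := Ideal.mem_span_pair.1 hw
  obtain ⟨b, hb⟩ := h.exists_eq (u * (B + θ) + v * C)
  have h1 : quadHom θ (m * (B * w.1 - a * w.2), m * (w.1 + B * w.2)) =
      quadHom θ (A * b.1, A * b.2) := by
    have h2 : quadHom θ (A * b.1, A * b.2) = A * quadHom θ b := by
      simp only [quadHom_apply]; push_cast; ring
    have hABC' := congrArg (Int.cast : ℤ → R) hABC
    rw [h2, hb]
    simp only [quadHom_apply] at huv ⊢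
    push_cast at hABC' ⊢
    linear_combination (-(m : R) * (B + θ)) * huv - m * v * hABC' - m * (v + w.2) * hθ
  have h3 := congrArg Prod.snd (h.quadHom_injective h1)
  exact hAm.dvd_of_dvd_mul_left ⟨_, h3⟩

theorem absNorm_span_eq (h : IsQuadraticData a m θ) (hθ : θ ^ 2 = -a) {A : ℕ} {B C : ℤ}
    (hA : A ≠ 0) (hABC : A * C = B ^ 2 + a) (hAm : IsCoprime (A : ℤ) m)
    (hAB : IsCoprime (A : ℤ) (2 * B)) : Ideal.absNorm (Ideal.span {(A : R), B - θ}) = A := by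
  have key : ∀ B : ℤ, A * C = B ^ 2 + a → A ∣ Ideal.absNorm (Ideal.span {(A : R), B - θ}) := by
    intro B hB
    have h1 := Ideal.absNorm_mem (Ideal.span {(A : R), B - θ})
    have h2 := h.dvd_of_mem_span (w := (Ideal.absNorm (Ideal.span {(A : R), B - θ}), 0)) hθ hB hAm
      (by simpa [quadHom_apply] using h1)
    simpa [Int.natCast_dvd_natCast] using h2
  have hmul : Ideal.span {(A : R), B - θ} * Ideal.span {(A : R), (-B : ℤ) - θ} =
      Ideal.span {(A : R)} := by
    have hABC' := congrArg (Int.cast : ℤ → R) hABC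
    obtain ⟨u, v, huv⟩ := hAB
    have huv' := congrArg (Int.cast : ℤ → R) huv
    push_cast at hABC' huv'
    rw [Ideal.span_pair_mul_span_pair]
    have e : ((B : R) - θ) * ((-B : ℤ) - θ) = A * -C := by
      push_cast
      linear_combination hABC' + hθ
    rw [e]
    apply le_antisymm
    · rw [Ideal.span_le]
      rintro w (rfl | rfl | rfl | rfl) <;> rw [SetLike.mem_coe, Ideal.mem_span_singleton]
      · exact dvd_mul_right _ _
      · exact dvd_mul_right _ _
      · exact dvd_mul_left _ _
      · exact dvd_mul_right _ _
    · rw [Ideal.span_singleton_le_iff_mem]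
      have hs : ∀ w ∈ ({(A * A : R), A * (((-B : ℤ) : R) - θ), ((B : R) - θ) * A, A * -(C : R)} :
          Set R),
          w ∈ Ideal.span {(A * A : R), A * (((-B : ℤ) : R) - θ), ((B : R) - θ) * A, A * -(C : R)} :=
        fun w hw ↦ Ideal.subset_span hw
      have h1 := Ideal.sub_mem _ (Ideal.add_mem _
        (Ideal.mul_mem_left _ (u : R) (hs _ (.inl rfl)))
        (Ideal.mul_mem_left _ (v : R) (hs _ (.inr (.inr (.inl rfl))))))
        (Ideal.mul_mem_left _ (v : R) (hs _ (.inr (.inl rfl))))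
      convert h1 using 1
      push_cast
      linear_combination -(A : R) * huv'
  have hN := h.absNorm_eq (A, 0)
  simp only [quadHom_apply, Int.cast_zero, zero_mul, add_zero, Int.cast_natCast, ← hmul,
    map_mul] at hN
  obtain ⟨s, hs⟩ := key B hABC
  obtain ⟨t, ht⟩ := key (-B) (by rw [hABC]; ring)
  rw [hs, ht] at hN
  have h1 : A ^ 2 * (s * t) = A ^ 2 * 1 := by
    have : A * s * (A * t) = A ^ 2 := by
      zify; push_cast at hN; rw [hN]; ring
    rw [mul_one]
    exact (by ring : A ^ 2 * (s * t) = A * s * (A * t)).trans this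
  have h2 := Nat.eq_of_mul_eq_mul_left (pow_pos (Nat.pos_of_ne_zero hA) 2) h1
  rw [hs, Nat.eq_one_of_mul_eq_one_right h2, mul_one]
end IsQuadraticData
end

theorem NumberField.exists_eventually_card_absNorm_le (K : Type*) [Field K] [NumberField K] :
    ∃ C : ℝ, ∀ᶠ n : ℕ in atTop,
      (Nat.card {I : Ideal (𝓞 K) // Ideal.absNorm I ≤ n} : ℝ) ≤ C * n := by
  have h := (NumberField.Ideal.tendsto_norm_le_div_atTop K).comp tendsto_natCast_atTop_atTop
  obtain ⟨c, hc⟩ : ∃ c, Tendsto _ _ (nhds c) := ⟨_, h⟩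
  refine ⟨c + 1, ?_⟩
  filter_upwards [hc.eventually_le_const (lt_add_one _), eventually_gt_atTop 0] with n hn hn0
  have hn0' : (0 : ℝ) < n := by exact_mod_cast hn0
  simp only [Function.comp_apply, Nat.cast_le] at hn
  exact (div_le_iff₀ hn0').1 hn

theorem exists_prime_eq_of_isQuadraticData {R : Type} [CommRing R] [IsDedekindDomain R]
    [Module.Free ℤ R] [Module.Finite ℤ R] [CharZero R] {a m : ℕ} {θ : R} (hm : m = 2 * a)
    (h : IsQuadraticData a m θ) (hθ : θ ^ 2 = -a) {D : ℝ}
    (htot : ∀ᶠ n : ℕ in atTop, (Nat.card {I : Ideal R // Ideal.absNorm I ≤ n} : ℝ) ≤ D * n)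
    {A : ℕ} {B C : ℤ} (ha : 2 ≤ a) (hABC : A * C = B ^ 2 + a)
    (hA : IsCoprime (A : ℤ) (2 * a)) (X : ℕ) :
    ∃ p : ℕ, p.Prime ∧ X < p ∧ ∃ x y : ℤ, A * x ^ 2 + 2 * B * x * y + C * y ^ 2 = p := by
  have hm0 : m ≠ 0 := by omega
  have : NeZero m := ⟨hm0⟩
  have : NeZero (4 * a * m) := ⟨mul_ne_zero (by omega) hm0⟩
  have hAm : IsCoprime (A : ℤ) m := by rw [hm]; exact_mod_cast hA
  have hA0 : A ≠ 0 := by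
    rintro rfl
    rw [Nat.cast_zero, isCoprime_zero_left, Int.isUnit_iff] at hAm
    omega
  have hAB : IsCoprime (A : ℤ) (2 * B) := by
    refine hA.of_mul_right_left.mul_right ?_
    obtain ⟨u, v, huv⟩ := hA.of_mul_right_right
    exact ⟨u + v * C, -v * B, by linear_combination huv + v * hABC⟩
  obtain ⟨G, _, cl, hsurj, hcl0, hcl⟩ := exists_ringClass_hom h.not_isUnit
  obtain ⟨κ, hκ, hcount⟩ := h.exists_card_class hsurj hcl0 hcl
  have : Finite G := finite_of_card_class cl hκ hcount htot
  have : Fintype G := Fintype.ofFinite G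
  have hJ0 : cl (Ideal.span {(A : R), B - θ}) ≠ 0 := by
    rw [hcl0]
    have h1 : IsCoprime (Ideal.span {((A : ℤ) : R)}) (Ideal.span {((m : ℤ) : R)}) :=
      (IsRationalUnitMod.intCast hAm).isCoprime_span
    rw [Int.cast_natCast] at h1
    obtain ⟨i, hi, j, hj, hij⟩ := Ideal.isCoprime_iff_exists.1 h1
    exact Ideal.isCoprime_iff_exists.2 ⟨i, Ideal.span_mono (by simp) hi, j, hj, hij⟩
  obtain ⟨j, hj⟩ := WithZero.ne_zero_iff_exists.1 hJ0
  obtain ⟨P, hP, hPp, hPX⟩ := exists_prime_ideal_of_counting cl hκ hcount (Q := 4 * a * m)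
    (fun p hp hpQ ↦ h.exists_absNorm_eq_of_modEq_one hθ ha hm0 (hm ▸ dvd_mul_right _ _)
      (hm ▸ dvd_mul_left _ _) cl hcl0 hcl hp ((ZMod.natCast_eq_natCast_iff _ _ _).1
        (by rw [hpQ, Nat.cast_one]))) j⁻¹ X
  obtain ⟨γ, hγ, hPJ⟩ := (hcl P _ (by rw [hP]; exact WithZero.coe_ne_zero) hJ0).1 (by
    rw [hP, ← hj, ← WithZero.coe_mul, inv_mul_cancel, WithZero.coe_one])
  obtain ⟨w, rfl⟩ := h.exists_quadHom_eq hγ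
  have hwJ : quadHom θ w ∈ Ideal.span {(A : R), (B : R) - θ} := by
    refine Ideal.mul_le_right (I := P) ?_
    rw [hPJ]
    exact Ideal.mem_span_singleton_self _
  obtain ⟨x, hx⟩ := h.dvd_of_mem_span hθ hABC hAm (by rwa [Int.cast_natCast])
  have hN := h.absNorm_eq w
  rw [← hPJ, map_mul, h.absNorm_span_eq hθ hA0 hABC hAm hAB] at hN
  generalize Ideal.absNorm P = p at hN hPp hPX
  refine ⟨p, hPp, hPX, x, -w.2, ?_⟩
  have hA0' : (A : ℤ) ≠ 0 := by exact_mod_cast hA0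
  refine mul_left_cancel₀ hA0' ?_
  push_cast at hN
  rw [mul_comm (A : ℤ) (p : ℤ), hN]
  have hw1 : w.1 = A * x - B * w.2 := by linear_combination hx
  rw [hw1]
  linear_combination w.2 ^ 2 * hABC

/-- The form `A x² + 2 B x y + C y²` of determinant `a` represents infinitely many primes. -/
theorem exists_prime_eq_of_isCoprime {a A : ℕ} {B C : ℤ} (ha : 2 ≤ a) (hABC : A * C = B ^ 2 + a)
    (hA : IsCoprime (A : ℤ) (2 * a)) (X : ℕ) :
    ∃ p : ℕ, p.Prime ∧ X < p ∧ ∃ x y : ℤ, A * x ^ 2 + 2 * B * x * y + C * y ^ 2 = p := by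
  obtain ⟨K, _, _, θ, h, hθ⟩ := exists_isQuadraticData (m := 2 * a) (by omega : 1 ≤ a)
    (by omega) dvd_rfl
  obtain ⟨D, htot⟩ := NumberField.exists_eventually_card_absNorm_le K
  exact exists_prime_eq_of_isQuadraticData rfl h hθ htot ha hABC hA X

end

theorem exists_isCoprime_eval_isCoprime {α β γ : ℤ}
    (hprim : ∀ q : ℕ, q.Prime → (q : ℤ) ∣ α → (q : ℤ) ∣ β → ¬ (q : ℤ) ∣ γ) {M : ℕ} (hM : 2 ≤ M) :
    ∃ x y : ℤ, IsCoprime x y ∧ IsCoprime (α * x ^ 2 + β * x * y + γ * y ^ 2) M := by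
  have hloc : ∀ q : ℕ, ∃ s t : ℤ, q.Prime → ¬ (q : ℤ) ∣ α * s ^ 2 + β * s * t + γ * t ^ 2 := by
    intro q
    by_contra! hcon
    have h1 := (hcon 1 0).2
    have h2 := (hcon 0 1).2
    have h3 := (hcon 1 1).2
    ring_nf at h1 h2 h3
    refine hprim q (hcon 0 0).1 h1 ?_ h2
    have := dvd_sub (dvd_sub h3 h1) h2
    ring_nf at this
    exact this
  choose s t hst using hloc
  obtain ⟨x, hx⟩ := exists_dvd_sub_of_primeFactors (Q := M) s
  obtain ⟨y, hy⟩ := exists_dvd_sub_of_primeFactors (Q := M) t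
  have hcop : IsCoprime (α * x ^ 2 + β * x * y + γ * y ^ 2) (M : ℤ) := by
    refine Int.isCoprime_of_forall_prime fun q hq hqf hqM ↦ ?_
    have hqM' : q ∈ M.primeFactors :=
      Nat.mem_primeFactors.2 ⟨hq, Int.natCast_dvd_natCast.1 hqM, by omega⟩
    have hpow : (q : ℤ) ∣ (q : ℤ) ^ M.factorization q :=
      dvd_pow_self _ (Finsupp.mem_support_iff.1 hqM')
    obtain ⟨u, hu⟩ := hpow.trans (hx q hqM')
    obtain ⟨v, hv⟩ := hpow.trans (hy q hqM')
    refine hst q hq ?_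
    obtain ⟨w, hw⟩ := hqf
    refine ⟨w - u * (α * (x + s q) + β * y) - v * (γ * (y + t q) + β * s q), ?_⟩
    linear_combination hw - (α * (x + s q) + β * y) * hu - (γ * (y + t q) + β * s q) * hv
  have hxy : Int.gcd x y ≠ 0 := by
    intro h0
    obtain ⟨rfl, rfl⟩ := Int.gcd_eq_zero_iff.1 h0
    have h1 : IsUnit (M : ℤ) := isCoprime_zero_left.1 (by simpa using hcop)
    rw [Int.isUnit_iff] at h1
    omega
  obtain ⟨x', y', hcop', hx', hy'⟩ := Int.exists_gcd_one (Nat.pos_of_ne_zero hxy)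
  refine ⟨x', y', Int.isCoprime_iff_gcd_eq_one.2 hcop', hcop.of_isCoprime_of_dvd_left ?_⟩
  refine ⟨(Int.gcd x y : ℤ) ^ 2, ?_⟩
  generalize Int.gcd x y = g at hx' hy'
  rw [hx', hy']
  ring

/-- **Weber's theorem**: a primitive positive definite binary quadratic form represents
infinitely many primes. -/
theorem exists_prime_eq_of_primitive_of_posDef {α β γ : ℤ}
    (hprim : ∀ q : ℕ, q.Prime → (q : ℤ) ∣ α → (q : ℤ) ∣ β → ¬ (q : ℤ) ∣ γ)
    (hα : 0 < α) (hdisc : β ^ 2 < 4 * α * γ) (X : ℕ) :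
    ∃ p : ℕ, p.Prime ∧ X < p ∧ ∃ x y : ℤ, α * x ^ 2 + β * x * y + γ * y ^ 2 = p := by
  obtain ⟨D, hD⟩ : ∃ D : ℕ, (D : ℤ) = 4 * α * γ - β ^ 2 :=
    ⟨(4 * α * γ - β ^ 2).toNat, Int.toNat_of_nonneg (by linarith)⟩
  have hD2 : 2 ≤ D := by
    have h0 : (0 : ℤ) < D := by linarith
    by_contra! h2
    have h1 : D = 1 := by omega
    rw [h1, Nat.cast_one] at hD
    have h4 : β ^ 2 = 4 * (α * γ) - 1 := by linarith
    rcases Int.even_or_odd' β with ⟨k, rfl | rfl⟩ <;> ring_nf at h4 <;> omega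
  obtain ⟨x, y, ⟨v, u, huv⟩, hcop⟩ := exists_isCoprime_eval_isCoprime hprim
    (by omega : 2 ≤ 2 * D)
  have hpos : 0 < α * x ^ 2 + β * x * y + γ * y ^ 2 := by
    by_contra! hle
    have h1 : (2 * α * x + β * y) ^ 2 + D * y ^ 2 ≤ 0 := by rw [hD]; nlinarith
    have hD0 : (2 : ℤ) ≤ D := by exact_mod_cast hD2
    have hy : y = 0 := by nlinarith [sq_nonneg (2 * α * x + β * y), sq_nonneg y]
    subst hy
    have hx : x = 0 := by
      have h3 : (2 * α * x) ^ 2 = 0 := by nlinarith [sq_nonneg (2 * α * x)]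
      have h4 := pow_eq_zero_iff (two_ne_zero) |>.1 h3
      simpa [hα.ne'] using h4
    subst hx
    simp at huv
  obtain ⟨A, hA⟩ : ∃ A : ℕ, (A : ℤ) = α * x ^ 2 + β * x * y + γ * y ^ 2 :=
    ⟨_, Int.toNat_of_nonneg hpos.le⟩
  obtain ⟨p, hp, hX, s, t, hst⟩ := exists_prime_eq_of_isCoprime (a := D) (A := A)
    (B := 2 * α * x * -u + β * (x * v - y * u) + 2 * γ * y * v)
    (C := 4 * (α * u ^ 2 - β * u * v + γ * v ^ 2)) hD2
    (by rw [hD, hA]; linear_combination (4 * α * γ - β ^ 2) * (v * x + u * y + 1) * huv)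
    (by rw [hA]; exact_mod_cast hcop) X
  refine ⟨p, hp, hX, x * s - 2 * u * t, y * s + 2 * v * t, ?_⟩
  rw [← hst, hA]
  ring

theorem jacobi_fourier_nonvanishing (N : ℕ) (hN : 0 < N)
    (a : Matrix (Fin 2) (Fin 2) ℚ → ℂ)
    -- invariance under Γ⁰(N):  a(AᵀTA) = a(T)
    (hinv : ∀ A : Matrix (Fin 2) (Fin 2) ℤ, A.det = 1 → (N : ℤ) ∣ A 0 1 →
      ∀ T : Matrix (Fin 2) (Fin 2) ℚ, HalfIntegral T → PosDef2 T →
        a ((A.map (Int.cast : ℤ → ℚ))ᵀ * T * A.map (Int.cast : ℤ → ℚ)) = a T)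
    (ε : ℂ) (hε : ε = 1 ∨ ε = -1)
    -- Fricke symmetry of the coefficients
    (hfricke : ∀ n r m : ℤ, (N : ℤ) ∣ m →
      a !![(n : ℚ), (r : ℚ) / 2; (r : ℚ) / 2, (m : ℚ)] =
        ε * a !![(m : ℚ) / N, -(r : ℚ) / 2; -(r : ℚ) / 2, (n : ℚ) * N])
    -- a primitive matrix S = [[n, r/2], [r/2, Nm]] with a(S) ≠ 0
    (n r m : ℤ) (hprim : Int.gcd n (Int.gcd r ((N : ℤ) * m)) = 1)
    (hSpos : PosDef2 !![(n : ℚ), (r : ℚ) / 2; (r : ℚ) / 2, ((N : ℤ) * m : ℤ)])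
    (hS : a !![(n : ℚ), (r : ℚ) / 2; (r : ℚ) / 2, ((N : ℤ) * m : ℤ)] ≠ 0) :
    ∃ p : ℕ, p.Prime ∧ Odd p ∧ ¬ p ∣ N ∧
      ∃ T : Matrix (Fin 2) (Fin 2) ℚ, HalfIntegral T ∧ PosDef2 T ∧
        T 1 1 = (N : ℚ) * p ∧ a T ≠ 0 := by
  obtain ⟨hn, hdet⟩ := hSpos
  simp only [Matrix.det_fin_two_of, Matrix.of_apply, Matrix.cons_val', Matrix.cons_val_zero,
    Matrix.cons_val_fin_one] at hn hdet
  have hNQ : (N : ℚ) ≠ 0 := by positivity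
  have hn' : 0 < n := by exact_mod_cast hn
  have hdisc : r ^ 2 < 4 * n * (N * m) := by
    have : (r : ℚ) ^ 2 < 4 * n * (N * m) := by push_cast at hdet; linarith
    exact_mod_cast this
  have hm : 0 < m := by
    have h1 : 0 < 4 * n * N := by positivity
    exact pos_of_mul_pos_right (by nlinarith [sq_nonneg r] : 0 < 4 * n * N * m) h1.le
  obtain ⟨p, hp, hpX, d, c, hdc⟩ := exists_prime_eq_of_primitive_of_posDef
    (α := n) (β := -r) (γ := N * m) (fun q hq h1 h2 h3 ↦ by
      have h4 : (q : ℤ) ∣ Int.gcd n (Int.gcd r ((N : ℤ) * m)) :=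
        Int.dvd_coe_gcd h1 (Int.dvd_coe_gcd (by simpa using h2) h3)
      rw [hprim] at h4
      exact hq.one_lt.ne' (by exact_mod_cast Int.eq_one_of_dvd_one (by positivity) h4))
    hn' (by simpa using hdisc) (N + 2)
  have hpN : ¬ p ∣ N := fun h ↦ by
    have := Nat.le_of_dvd hN h
    omega
  have hcop : IsCoprime d (N * c) := by
    refine Int.isCoprime_of_forall_prime fun q hq hqd hqc ↦ ?_
    have hqp : (q : ℤ) ∣ p := by
      rw [← hdc]
      obtain ⟨u, rfl⟩ := hqd
      obtain ⟨v, hv⟩ := hqc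
      exact ⟨n * q * u ^ 2 - r * u * c + m * v * c, by linear_combination m * c * hv⟩
    have hqp' : q = p := (Nat.prime_dvd_prime_iff_eq hq hp).1 (by exact_mod_cast hqp)
    subst hqp'
    rcases (Nat.prime_iff_prime_int.1 hq).dvd_or_dvd hqc with h | h
    · exact hpN (by exact_mod_cast h)
    · obtain ⟨u, rfl⟩ := hqd
      obtain ⟨v, rfl⟩ := h
      have h1 : (q : ℤ) * (q * (n * u ^ 2 - r * u * v + N * m * v ^ 2)) = q * 1 := by
        linear_combination hdc
      have h2 := mul_left_cancel₀ (by exact_mod_cast hq.ne_zero) h1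
      exact hq.one_lt.ne' (by exact_mod_cast Int.eq_one_of_dvd_one (by positivity) ⟨_, h2.symm⟩)
  obtain ⟨u, v, huv⟩ := hcop
  set T₀ : Matrix (Fin 2) (Fin 2) ℚ := !![(m : ℚ), -(r : ℚ) / 2; -(r : ℚ) / 2, (n : ℚ) * N]
    with hT₀
  have hdet₀ : 0 < (m : ℚ) * (n * N) - -(r : ℚ) / 2 * (-(r : ℚ) / 2) := by
    push_cast at hdet
    linarith
  have hhalf₀ : HalfIntegral T₀ :=
    ⟨rfl, ⟨m, rfl⟩, ⟨n * N, by simp [hT₀]⟩, ⟨-r, by simp [hT₀]; ring⟩⟩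
  have hpos₀ : PosDef2 T₀ :=
    ⟨by simpa [hT₀] using hm, by rw [hT₀, Matrix.det_fin_two_of]; exact hdet₀⟩
  have ha₀ : a T₀ ≠ 0 := by
    intro h0
    refine hS ?_
    rw [hfricke n r (N * m) (dvd_mul_right _ _)]
    have h1 : (((N : ℤ) * m : ℤ) : ℚ) / N = m := by push_cast; field_simp
    rw [h1, h0, mul_zero]
  have hA : (!![u, N * c; -v, d] : Matrix (Fin 2) (Fin 2) ℤ).det = 1 := by
    rw [Matrix.det_fin_two_of]
    linear_combination huv
  have hT := hinv _ hA (by simp) T₀ hhalf₀ hpos₀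
  have hTeq : ((!![u, N * c; -v, d] : Matrix (Fin 2) (Fin 2) ℤ).map (Int.cast : ℤ → ℚ))ᵀ * T₀ *
      (!![u, N * c; -v, d] : Matrix (Fin 2) (Fin 2) ℤ).map (Int.cast : ℤ → ℚ) =
      !![((m * u ^ 2 + r * u * v + n * N * v ^ 2 : ℤ) : ℚ),
        ((2 * m * u * N * c - r * (u * d - N * c * v) - 2 * n * N * v * d : ℤ) : ℚ) / 2;
        ((2 * m * u * N * c - r * (u * d - N * c * v) - 2 * n * N * v * d : ℤ) : ℚ) / 2,
        ((N * p : ℤ) : ℚ)] := by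
    have hdc' := congrArg (Int.cast : ℤ → ℚ) hdc
    push_cast at hdc'
    ext i j
    fin_cases i <;> fin_cases j <;>
      simp [hT₀, Matrix.mul_apply, Fin.sum_univ_two]
    · ring
    · ring
    · ring
    · linear_combination N * hdc'
  refine ⟨p, hp, hp.odd_of_ne_two (by omega), hpN, _, ?_, ?_, ?_, ne_of_eq_of_ne hT ha₀⟩ <;>
    rw [hTeq]
  · exact ⟨rfl, ⟨_, rfl⟩, ⟨_, rfl⟩, ⟨_, mul_div_cancel₀ _ two_ne_zero⟩⟩
  · refine ⟨?_, ?_⟩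
    · simp only [Matrix.of_apply, Matrix.cons_val', Matrix.cons_val_zero, Matrix.cons_val_fin_one,
        Int.cast_pos]
      have hne : v ≠ 0 ∨ u ≠ 0 := by
        by_contra! h
        simp [h.1, h.2] at huv
      have hdiscpos : 0 < 4 * n * (N * m) - r ^ 2 := by linarith
      have h1 : 0 < (2 * m * u + r * v) ^ 2 + (4 * n * (N * m) - r ^ 2) * v ^ 2 := by
        by_cases hv : v = 0
        · subst hv
          have hu : u ≠ 0 := by simpa using hne
          have h2 : 0 < (2 * m * u) ^ 2 := by positivity
          simpa using h2
        · positivity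
      exact pos_of_mul_pos_right
        (by nlinarith : 0 < 4 * m * (m * u ^ 2 + r * u * v + n * N * v ^ 2)) (by positivity)
    · rw [← hTeq, Matrix.det_mul, Matrix.det_mul, Matrix.det_transpose]
      have hA' : ((!![u, N * c; -v, d] : Matrix (Fin 2) (Fin 2) ℤ).map
          (Int.cast : ℤ → ℚ)).det = 1 := by
        rw [← Int.cast_det, hA, Int.cast_one]
      rw [hA', one_mul, mul_one]
      exact hpos₀.2
  · simp
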